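/- Let r₀ > 0 and let z₀ = (z₀,₁, z₀,₂) be a curve such that z₀(α) − (α,0) is 2π-periodic, z₀ extends holomorphically to the closed strip S_{r₀} = {α + iζ ∈ ℂ : |ζ| ≤ r₀}, z₀ is real for real α, the norm ‖z₀‖_{r₀}² = Σ_± ∫_𝕋 |z₀(α ± ir₀) − (α ± ir₀, 0)|² dα + Σ_± ∫_𝕋 |∂_α⁴ z₀(α ± ir₀)|² dα is finite, and z₀ satisfies the arc-chord condition on S_{r₀} (F(z₀)(α+iζ, β) bounded for α+iζ ∈ S_{r₀}, β ∈ 𝕋). Then there exist T > 0 and 0 < r < r₀ and a unique solution z(α,t) of the periodic Muskat contour equation on the time interval [−T, T] (holding also for complex α in the strip S_r), continuous in time with values in the space of curves with finite ‖·‖_r norm, with z(·,0) = z₀, and with z(·,t) satisfying the arc-chord condition on S_r for each t ∈ [−T,T]. No Rayleigh–Taylor assumption is made, and the solution exists both forwards and backwards in time. -/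

import Mathlib

open Real MeasureTheory Set

noncomputable section

/-- Distance from `β` to `2πℤ`. -/
def distTZ (β : ℝ) : ℝ := |β - 2 * π * ((round (β / (2 * π)) : ℤ) : ℝ)|

/-- Closed horizontal strip of half-width `r`. -/
def stripC (r : ℝ) : Set ℂ := {w : ℂ | |w.im| ≤ r}

/-- The complex-extended denominator
`cosh(z₂(γ) - z₂(γ-β)) - cos(z₁(γ) - z₁(γ-β))`. -/
def cQden (Z : ℂ → ℂ × ℂ) (γ : ℂ) (β : ℝ) : ℂ :=
  Complex.cosh ((Z γ).2 - (Z (γ - (β : ℂ))).2)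
    - Complex.cos ((Z γ).1 - (Z (γ - (β : ℂ))).1)

/-- `Z(γ) - (γ,0)` is `2π`-periodic. -/
def cPerCurve (Z : ℂ → ℂ × ℂ) : Prop :=
  ∀ γ : ℂ, Z (γ + ((2 * π : ℝ) : ℂ)) = Z γ + (((2 * π : ℝ) : ℂ), 0)

/-- Complex-extended arc-chord condition on a set `S`. -/
def cArcChordOn (Z : ℂ → ℂ × ℂ) (S : Set ℂ) : Prop :=
  ∃ C > 0, ∀ γ ∈ S, ∀ β : ℝ, distTZ β ^ 2 ≤ C * ‖2 * cQden Z γ β‖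

/-- Right-hand side of the complex-extended periodic Muskat contour equation. -/
def cMuskatRHS (Z : ℂ → ℂ × ℂ) (γ : ℂ) : ℂ × ℂ :=
  ∫ β in (-π)..π,
    (Complex.sin ((Z γ).1 - (Z (γ - (β : ℂ))).1) / cQden Z γ β)
      • (deriv Z γ - deriv Z (γ - (β : ℂ)))

/-- `Z` is a Cauchy–Kowalewski-type solution of the Muskat problem on `[-T,T]`
with values analytic and periodic on the closed strip of half-width `r`,
continuous in time, satisfying the arc-chord condition and the initial
condition `Z(·,0) = Z₀`. -/
def IsCKSol (r T : ℝ) (Z₀ : ℂ → ℂ × ℂ) (Z : ℝ → ℂ → ℂ × ℂ) : Prop :=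
  (∀ t ∈ Icc (-T) T, ∀ w ∈ stripC r, DifferentiableAt ℂ (Z t) w) ∧
  (∀ t ∈ Icc (-T) T, cPerCurve (Z t)) ∧
  (∀ γ ∈ stripC r, ContinuousOn (fun t => Z t γ) (Icc (-T) T)) ∧
  (∀ γ ∈ stripC r, Z 0 γ = Z₀ γ) ∧
  (∀ t ∈ Icc (-T) T, ∀ γ ∈ stripC r,
    HasDerivWithinAt (fun s => Z s γ) (cMuskatRHS (Z t) γ) (Icc (-T) T) t) ∧
  (∀ t ∈ Icc (-T) T, cArcChordOn (Z t) (stripC r))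

/-!
For `σ = ±i` put `L_σ a = a₁ + σ a₂`. The Muskat kernel is the mean over `σ` of
`cot (L_σ (Z(γ) - Z(s)) / 2)`, with `s = γ - β`, and the numerator `∂Z(γ) - ∂Z(s)` cancels its
pole at `s = γ`. For a curve that is holomorphic on a strip, the line of integration can therefore
be moved to a horizontal line at a fixed distance from `γ`, where the nonlinearity is no longer
singular: it becomes a holomorphic function of `γ`, bounded by and Lipschitz in `Z` and `∂Z(γ)`,
uniformly over all curves close to a given one. It thus loses one derivative, for which Cauchy's
estimate pays with width of the strip, and the Picard iteration on the strips
`|Im γ| < 4h - K|t|`, in norms weighted by the square root of the distance to the boundary,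
contracts for large `K`. Nothing distinguishes `t > 0` from `t < 0`.

Solutions are only assumed continuous in time at each point, so for uniqueness one first has to
show that every solution stays close to its initial curve. By the arc-chord condition the
increments `(L_σ Z(γ) - L_σ Z(γ - β)) / 2π` omit the integers, and a Landau inequality bounds the
logarithmic growth of such functions by a universal constant. Together with Baire's theorem in `β`
this turns continuity in time at each point into a Lipschitz bound in `γ` uniform in time, hence
into uniform continuity in time. A solution is then, for short times, a fixed point of the Picard
map; uniqueness spreads to the whole strip by the identity theorem and to the whole time interval
by connectedness.
-/

namespace Muskat

open Metric Filter Topology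

/-! ### A Landau inequality for holomorphic functions omitting the integers -/

section Landau

variable {f u : ℂ → ℂ} {c : ℂ} {R : ℝ}

lemma exists_exp_eq_of_forall_ne_zero (hR : 0 < R) (hf : DifferentiableOn ℂ f (ball c R))
    (hne : ∀ z ∈ ball c R, f z ≠ 0) :
    ∃ g : ℂ → ℂ, DifferentiableOn ℂ g (ball c R) ∧ ∀ z ∈ ball c R, Complex.exp (g z) = f z := by
  have hlogDeriv : DifferentiableOn ℂ (fun z => deriv f z / f z) (ball c R) :=
    (hf.deriv isOpen_ball).div hf hne
  obtain ⟨g, hgc, hg⟩ := hlogDeriv.isExactOn_ball.with_val_at c (Complex.log (f c))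
  have hc : c ∈ ball c R := mem_ball_self hR
  have hderiv : ∀ z ∈ ball c R, HasDerivAt (fun z => f z * Complex.exp (-g z)) 0 z := by
    intro z hz
    have hfz := (hf.differentiableAt (isOpen_ball.mem_nhds hz)).hasDerivAt
    refine (hfz.mul (hg z hz).neg.cexp).congr_deriv ?_
    have hcancel : f z * (deriv f z / f z) = deriv f z := mul_div_cancel₀ _ (hne z hz)
    linear_combination -Complex.exp (-g z) * hcancel
  refine ⟨g, fun z hz => (hg z hz).differentiableAt.differentiableWithinAt, fun z hz => ?_⟩
  have hconst : f z * Complex.exp (-g z) = f c * Complex.exp (-g c) :=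
    isOpen_ball.is_const_of_deriv_eq_zero (convex_ball c R).isPreconnected
      (fun w hw => (hderiv w hw).differentiableAt.differentiableWithinAt)
      (fun w hw => (hderiv w hw).deriv) hz hc
  rw [hgc, Complex.exp_neg, Complex.exp_neg, Complex.exp_log (hne c hc),
    mul_inv_cancel₀ (hne c hc)] at hconst
  exact (mul_inv_eq_one₀ (Complex.exp_ne_zero _)).mp hconst |>.symm

lemma exists_cos_eq_of_forall_sq_ne_one (hR : 0 < R) (hu : DifferentiableOn ℂ u (ball c R))
    (hne : ∀ z ∈ ball c R, u z ^ 2 ≠ 1) :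
    ∃ g : ℂ → ℂ, DifferentiableOn ℂ g (ball c R) ∧ ∀ z ∈ ball c R, Complex.cos (g z) = u z := by
  obtain ⟨l, hl, hlu⟩ := exists_exp_eq_of_forall_ne_zero (f := fun z => u z ^ 2 - 1) hR
    (by fun_prop) (fun z hz => sub_ne_zero.mpr (hne z hz))
  set w : ℂ → ℂ := fun z => Complex.exp (l z / 2) with hw
  have hconj : ∀ z ∈ ball c R, (u z + w z) * (u z - w z) = 1 := by
    intro z hz
    have hsq : w z ^ 2 = u z ^ 2 - 1 := by
      rw [← hlu z hz, hw, ← Complex.exp_nat_mul]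
      congr 1
      push_cast
      ring
    linear_combination -hsq
  obtain ⟨m, hm, hmu⟩ := exists_exp_eq_of_forall_ne_zero (f := fun z => u z + w z) hR
    (hu.add (by simp only [hw]; fun_prop)) (fun z hz => left_ne_zero_of_mul_eq_one (hconj z hz))
  refine ⟨fun z => m z / Complex.I, by fun_prop, fun z hz => ?_⟩
  have hinv : Complex.exp (-m z) = u z - w z := by
    rw [Complex.exp_neg, hmu z hz]
    exact inv_eq_of_mul_eq_one_right (hconj z hz)
  rw [Complex.cos, neg_mul, div_mul_cancel₀ _ Complex.I_ne_zero, hmu z hz, hinv]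
  ring

lemma add_one_le_cosh_add_two {b : ℝ} (hb : 0 ≤ b) : Real.cosh b + 1 ≤ Real.cosh (b + 2) := by
  have htwo : 2 ≤ Real.cosh 2 := by
    have hexp : (2 : ℝ) ^ 2 ≤ Real.exp 2 := by
      rw [show (2 : ℝ) = 1 + 1 by norm_num, Real.exp_add, ← sq]
      gcongr
      linarith [Real.add_one_le_exp 1]
    rw [Real.cosh_eq]
    linarith [Real.exp_pos (-2)]
  have hsinh : 0 ≤ Real.sinh b * Real.sinh 2 :=
    mul_nonneg (Real.sinh_nonneg_iff.mpr hb) (Real.sinh_nonneg_iff.mpr zero_le_two)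
  rw [Real.cosh_add]
  nlinarith [Real.one_le_cosh b]

lemma exists_cosh_eq_intCast (b : ℝ) : ∃ y : ℝ, |y - b| ≤ 2 ∧ ∃ n : ℤ, Real.cosh y = n := by
  wlog hb : 0 ≤ b generalizing b
  · obtain ⟨y, hy, n, hn⟩ := this (-b) (by linarith)
    exact ⟨-y, by rwa [abs_sub_comm, sub_neg_eq_add, add_comm, ← sub_neg_eq_add], n,
      by rw [Real.cosh_neg, hn]⟩
  obtain ⟨y, hy, hyn⟩ := intermediate_value_Icc (by linarith : b ≤ b + 2)
    Real.continuous_cosh.continuousOn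
    (show ((⌈Real.cosh b⌉ : ℤ) : ℝ) ∈ Icc (Real.cosh b) (Real.cosh (b + 2)) from
      ⟨Int.le_ceil _, (Int.ceil_lt_add_one _).le.trans (add_one_le_cosh_add_two hb)⟩)
  exact ⟨y, abs_le.mpr ⟨by linarith [hy.1], by linarith [hy.2]⟩, _, hyn⟩

lemma exists_abs_sub_int_mul_two_pi_le (x : ℝ) : ∃ n : ℤ, |x - n * (2 * π)| ≤ π := by
  refine ⟨round (x / (2 * π)), ?_⟩
  have hscale : x - round (x / (2 * π)) * (2 * π) =
      (x / (2 * π) - round (x / (2 * π))) * (2 * π) := by field_simp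
  rw [hscale, abs_mul, abs_of_pos Real.two_pi_pos]
  nlinarith [abs_sub_round (x / (2 * π)), Real.pi_pos]

lemma exists_mem_ball_cos_eq_intCast (w : ℂ) : ∃ ζ ∈ ball w 6, ∃ n : ℤ, Complex.cos ζ = n := by
  obtain ⟨y, hy, n, hn⟩ := exists_cosh_eq_intCast w.im
  obtain ⟨k, hk⟩ := exists_abs_sub_int_mul_two_pi_le w.re
  refine ⟨y * Complex.I + k * (2 * π), ?_, n, ?_⟩
  · have hre : (y * Complex.I + k * (2 * π) - w).re = -(w.re - k * (2 * π)) := by simp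
    have him : (y * Complex.I + k * (2 * π) - w).im = y - w.im := by simp
    rw [mem_ball_iff_norm]
    refine (Complex.norm_le_abs_re_add_abs_im _).trans_lt ?_
    rw [hre, him, abs_neg]
    linarith [Real.pi_lt_d2]
  · rw [Complex.cos_add_int_mul_two_pi, Complex.cos_mul_I, ← Complex.ofReal_cosh, hn,
      Complex.ofReal_intCast]

lemma norm_deriv_mul_norm_sub_le_of_norm_deriv_le (hf : DifferentiableOn ℂ f (ball c R))
    (hd : ∀ z ∈ ball c R, ‖deriv f z‖ ≤ 2 * ‖deriv f c‖) {z : ℂ} (hz : z ∈ ball c (R / 12)) :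
    3 / 4 * ‖deriv f c‖ * ‖z - c‖ ≤ ‖f z - f c‖ := by
  have hR : 0 < R := by linarith [pos_of_mem_ball hz]
  have hsub : ball c (R / 12) ⊆ ball c R := ball_subset_ball (by linarith)
  have hmaps : MapsTo (deriv f) (ball c R) (closedBall (deriv f c) (3 * ‖deriv f c‖)) := by
    intro x hx
    rw [mem_closedBall_iff_norm]
    linarith [norm_sub_le (deriv f x) (deriv f c), hd x hx]
  have hosc : ∀ x ∈ ball c (R / 12), ‖deriv f x - deriv f c‖ ≤ ‖deriv f c‖ / 4 := by
    intro x hx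
    rw [← dist_eq_norm]
    calc dist (deriv f x) (deriv f c) ≤ 3 * ‖deriv f c‖ / R * dist x c :=
          Complex.dist_le_div_mul_dist_of_mapsTo_ball (hf.deriv isOpen_ball) hmaps (hsub hx)
      _ ≤ 3 * ‖deriv f c‖ / R * (R / 12) := by gcongr; exact (mem_ball.mp hx).le
      _ = ‖deriv f c‖ / 4 := by field_simp; ring
  have hlin : ∀ x ∈ ball c (R / 12), HasDerivWithinAt (fun y => f y - deriv f c * y)
      (deriv f x - deriv f c) (ball c (R / 12)) x := fun x hx =>
    (((hf.differentiableAt (isOpen_ball.mem_nhds (hsub hx))).hasDerivAt.sub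
      ((hasDerivAt_id x).const_mul (deriv f c))).congr_deriv (by rw [mul_one])).hasDerivWithinAt
  have herr := (convex_ball c (R / 12)).norm_image_sub_le_of_norm_hasDerivWithin_le hlin hosc
    (mem_ball_self (by positivity)) hz
  have htri : ‖deriv f c * (z - c)‖ ≤
      ‖f z - f c‖ + ‖f z - deriv f c * z - (f c - deriv f c * c)‖ := by
    rw [show deriv f c * (z - c) =
      f z - f c - (f z - deriv f c * z - (f c - deriv f c * c)) by ring]
    exact norm_sub_le _ _
  rw [norm_mul] at htri
  linarith

lemma ball_subset_image_ball_of_norm_deriv_le (hR : 0 < R) (hf : DifferentiableOn ℂ f (ball c R))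
    (hd : ∀ z ∈ ball c R, ‖deriv f z‖ ≤ 2 * ‖deriv f c‖) :
    ball (f c) (R * ‖deriv f c‖ / 48) ⊆ f '' ball c R := by
  rcases eq_or_ne (deriv f c) 0 with h0 | h0
  · simp [h0]
  have hpos : 0 < ‖deriv f c‖ := norm_pos_iff.mpr h0
  have hlow := fun z => norm_deriv_mul_norm_sub_le_of_norm_deriv_le (z := z) hf hd
  have hsmall : closedBall c (R / 16) ⊆ ball c (R / 12) := closedBall_subset_ball (by linarith)
  have hsub : closedBall c (R / 16) ⊆ ball c R := hsmall.trans (ball_subset_ball (by linarith))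
  have hsphere : ∀ z ∈ sphere c (R / 16), 3 / 4 * ‖deriv f c‖ * (R / 16) ≤ ‖f z - f c‖ :=
    fun z hz => mem_sphere_iff_norm.mp hz ▸ hlow z (hsmall (sphere_subset_closedBall hz))
  have hnonconst : ∃ᶠ z in 𝓝 c, f z ≠ f c := by
    have hpunct : ∀ᶠ z in 𝓝[≠] c, f z ≠ f c := by
      filter_upwards [nhdsWithin_le_nhds (ball_mem_nhds c (by positivity : 0 < R / 12)),
        self_mem_nhdsWithin] with z hz hzc heq
      have hle := hlow z hz
      rw [heq, sub_self, norm_zero] at hle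
      have hzpos : 0 < ‖z - c‖ := norm_pos_iff.mpr (sub_ne_zero.mpr hzc)
      exact absurd hle (not_le.mpr (by positivity))
    exact hpunct.frequently.filter_mono nhdsWithin_le_nhds
  have hdc : DiffContOnCl ℂ f (ball c (R / 16)) := DifferentiableOn.diffContOnCl (by
    rw [closure_ball _ (by positivity)]
    exact hf.mono hsub)
  refine (ball_subset_ball ?_).trans ((hdc.ball_subset_image_closedBall (by positivity) hsphere
    hnonconst).trans (image_mono hsub))
  nlinarith

/- The point maximising `(R / 2 - dist z c) * ‖f' z‖` carries a disc on which `‖f'‖` at most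
doubles; this is where the disc in the image comes from. -/
theorem exists_ball_subset_image_ball (hR : 0 < R) (hf : DifferentiableOn ℂ f (ball c R)) :
    ∃ w, ball w (R * ‖deriv f c‖ / 192) ⊆ f '' ball c R := by
  have hderiv := (hf.deriv isOpen_ball).continuousOn
  have hsub : closedBall c (R / 2) ⊆ ball c R := closedBall_subset_ball (by linarith)
  obtain ⟨z₀, hz₀, hmax⟩ := (isCompact_closedBall c (R / 2)).exists_isMaxOn
    ⟨c, mem_closedBall_self (by linarith)⟩
    (f := fun z => (R / 2 - dist z c) * ‖deriv f z‖) ((by fun_prop : Continuous fun z =>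
      R / 2 - dist z c).continuousOn.mul (hderiv.mono hsub).norm)
  have hcenter : R / 2 * ‖deriv f c‖ ≤ (R / 2 - dist z₀ c) * ‖deriv f z₀‖ := by
    simpa using hmax (mem_closedBall_self (by linarith : 0 ≤ R / 2))
  rcases (mem_closedBall.mp hz₀).eq_or_lt with hbd | hint
  · have h0 : ‖deriv f c‖ = 0 := by
      rw [hbd, sub_self, zero_mul] at hcenter
      nlinarith [norm_nonneg (deriv f c)]
    exact ⟨0, by simp [h0]⟩
  set e := (R / 2 - dist z₀ c) / 2 with he
  have he0 : 0 < e := by rw [he]; linarith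
  have hball : ball z₀ e ⊆ ball c R := ball_subset_ball' (by linarith)
  have hdouble : ∀ z ∈ ball z₀ e, ‖deriv f z‖ ≤ 2 * ‖deriv f z₀‖ := by
    intro z hz
    have hdist : e ≤ R / 2 - dist z c := by linarith [dist_triangle z z₀ c, mem_ball.mp hz]
    have hle : (R / 2 - dist z c) * ‖deriv f z‖ ≤ (R / 2 - dist z₀ c) * ‖deriv f z₀‖ :=
      hmax (mem_closedBall.mpr (by linarith))
    refine le_of_mul_le_mul_left ?_ he0
    calc e * ‖deriv f z‖ ≤ (R / 2 - dist z c) * ‖deriv f z‖ := by gcongr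
      _ ≤ (R / 2 - dist z₀ c) * ‖deriv f z₀‖ := hle
      _ = e * (2 * ‖deriv f z₀‖) := by rw [he]; ring
  refine ⟨f z₀, (ball_subset_ball ?_).trans ((ball_subset_image_ball_of_norm_deriv_le he0
    (hf.mono hball) hdouble).trans (image_mono hball))⟩
  rw [he]
  linarith

lemma norm_le_one_add_norm_of_sq_add_sq_eq_one {a b : ℂ} (h : a ^ 2 + b ^ 2 = 1) :
    ‖a‖ ≤ 1 + ‖b‖ := by
  refine (sq_le_sq₀ (norm_nonneg _) (by positivity)).mp ?_
  rw [← norm_pow, eq_sub_of_add_eq h]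
  refine (norm_sub_le _ _).trans ?_
  rw [norm_one, norm_pow]
  nlinarith [norm_nonneg b]

/- Write `u = cos g`. Every disc of radius `6` contains a point where `cos` is an integer, so the
image of `g` contains no such disc and Bloch's theorem bounds `g'`. -/
theorem norm_deriv_le_of_forall_ne_intCast (hR : 0 < R) (hu : DifferentiableOn ℂ u (ball c R))
    (hne : ∀ z ∈ ball c R, ∀ n : ℤ, u z ≠ n) :
    ‖deriv u c‖ ≤ 1152 / R * (1 + ‖u c‖) := by
  have hc : c ∈ ball c R := mem_ball_self hR
  obtain ⟨g, hg, hgu⟩ := exists_cos_eq_of_forall_sq_ne_one hR hu (fun z hz h => by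
    rcases sq_eq_one_iff.mp h with h | h
    · exact hne z hz 1 (by simpa using h)
    · exact hne z hz (-1) (by simpa using h))
  have hbloch : ‖deriv g c‖ ≤ 1152 / R := by
    obtain ⟨w, hw⟩ := exists_ball_subset_image_ball hR hg
    obtain ⟨ζ, hζ, n, hn⟩ := exists_mem_ball_cos_eq_intCast w
    by_contra! hlt
    obtain ⟨z, hz, rfl⟩ := hw (ball_subset_ball (by
      rw [div_lt_iff₀ hR] at hlt
      linarith) hζ)
    exact hne z hz n (by rw [← hgu z hz, hn])
  have hchain : deriv u c = -Complex.sin (g c) * deriv g c := by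
    have hcos : u =ᶠ[𝓝 c] fun z => Complex.cos (g z) := by
      filter_upwards [isOpen_ball.mem_nhds hc] with z hz using (hgu z hz).symm
    rw [hcos.deriv_eq, (hg.differentiableAt (isOpen_ball.mem_nhds hc)).hasDerivAt.ccos.deriv]
  rw [hchain, norm_mul, norm_neg, mul_comm, ← hgu c hc]
  gcongr
  exact norm_le_one_add_norm_of_sq_add_sq_eq_one (Complex.sin_sq_add_cos_sq _)

end Landau

/-! ### Parameter integrals of holomorphic functions -/

section HolomorphicParameter

variable {E : Type*} [NormedAddCommGroup E] [NormedSpace ℂ E]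

lemma norm_deriv_le_of_forall_mem_ball_norm_le {f : ℂ → E} {c : ℂ} {R C : ℝ} (hR : 0 < R)
    (hf : DifferentiableOn ℂ f (ball c R)) (hC : ∀ z ∈ ball c R, ‖f z‖ ≤ C) :
    ‖deriv f c‖ ≤ 2 * C / R := by
  refine Complex.norm_deriv_le_div_of_mapsTo_ball hf (fun z hz => ?_) hR
  rw [mem_closedBall_iff_norm]
  linarith [norm_sub_le (f z) (f c), hC z hz, hC c (mem_ball_self hR)]

variable {f : ℝ → ℂ → E} {γ : ℂ} {ρ C : ℝ}

lemma continuousOn_cderiv {s : Set ℝ} (hρ : 0 < ρ)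
    (hf : ∀ x ∈ s, ContinuousOn (f x) (sphere γ ρ))
    (hb : ∀ x ∈ s, ∀ w ∈ sphere γ ρ, ‖f x w‖ ≤ C)
    (hc : ∀ w ∈ sphere γ ρ, ContinuousOn (fun x => f x w) s) :
    ContinuousOn (fun x => Complex.cderiv ρ (f x) γ) s := by
  have hmem : ∀ θ, circleMap γ ρ θ ∈ sphere γ ρ := circleMap_mem_sphere γ hρ.le
  intro x₀ hx₀
  simp only [Complex.cderiv, circleIntegral]
  refine ContinuousWithinAt.const_smul
    (intervalIntegral.continuousWithinAt_of_dominated_interval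
      (bound := fun _ => ρ * ((ρ ^ 2)⁻¹ * C)) ?_ ?_ (by simp) ?_) _
  · filter_upwards [self_mem_nhdsWithin] with x hx
    have hfc : Continuous fun θ => f x (circleMap γ ρ θ) :=
      (hf x hx).comp_continuous (continuous_circleMap γ ρ) hmem
    have hker : Continuous fun θ => ((circleMap γ ρ θ - γ) ^ 2)⁻¹ :=
      Continuous.inv₀ (by fun_prop) (fun θ => by simp [circleMap, hρ.ne'])
    simp only [deriv_circleMap]
    exact ((by fun_prop : Continuous fun θ => circleMap 0 ρ θ * Complex.I).smul
      (hker.smul hfc)).aestronglyMeasurable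
  · filter_upwards [self_mem_nhdsWithin] with x hx
    refine Eventually.of_forall (fun θ _ => ?_)
    have hspeed : ‖circleMap 0 ρ θ * Complex.I‖ = ρ := by simp [abs_of_pos hρ]
    have hker : ‖((circleMap γ ρ θ - γ) ^ 2)⁻¹‖ = (ρ ^ 2)⁻¹ := by
      rw [circleMap_sub_center, norm_inv, norm_pow, norm_circleMap_zero, sq_abs]
    rw [norm_smul, norm_smul, deriv_circleMap, hspeed, hker]
    gcongr
    exact hb x hx _ (hmem θ)
  · exact Eventually.of_forall (fun θ _ =>
      ((hc _ (hmem θ) x₀ hx₀).const_smul _).const_smul _)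

variable [CompleteSpace E]

lemma continuousOn_deriv_of_norm_le {s : Set ℝ} (hρ : 0 < ρ)
    (hf : ∀ x ∈ s, DifferentiableOn ℂ (f x) (ball γ ρ))
    (hb : ∀ x ∈ s, ∀ w ∈ ball γ ρ, ‖f x w‖ ≤ C)
    (hc : ∀ w ∈ ball γ ρ, ContinuousOn (fun x => f x w) s) :
    ContinuousOn (fun x => deriv (f x) γ) s := by
  have hsub : closedBall γ (ρ / 2) ⊆ ball γ ρ := closedBall_subset_ball (by linarith)
  have hsphere : sphere γ (ρ / 2) ⊆ ball γ ρ := sphere_subset_closedBall.trans hsub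
  exact (continuousOn_cderiv (half_pos hρ) (fun x hx => (hf x hx).continuousOn.mono hsphere)
    (fun x hx w hw => hb x hx w (hsphere hw)) (fun w hw => hc w (hsphere hw))).congr
    (fun x hx => (Complex.cderiv_eq_deriv isOpen_ball (hf x hx) (half_pos hρ) hsub).symm)

lemma hasDerivAt_intervalIntegral_of_holomorphic {a b : ℝ} (hρ : 0 < ρ)
    (hf : ∀ x ∈ uIcc a b, DifferentiableOn ℂ (f x) (ball γ ρ))
    (hb : ∀ x ∈ uIcc a b, ∀ w ∈ ball γ ρ, ‖f x w‖ ≤ C)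
    (hc : ∀ w ∈ ball γ ρ, ContinuousOn (fun x => f x w) (uIcc a b)) :
    HasDerivAt (fun w => ∫ x in a..b, f x w) (∫ x in a..b, deriv (f x) γ) γ := by
  have hsub : uIoc a b ⊆ uIcc a b := uIoc_subset_uIcc
  have hhalf : ball γ (ρ / 2) ⊆ ball γ ρ := ball_subset_ball (by linarith)
  have hderiv := continuousOn_deriv_of_norm_le hρ hf hb hc
  refine (intervalIntegral.hasDerivAt_integral_of_dominated_loc_of_deriv_le
    (F := fun w x => f x w) (F' := fun w x => deriv (f x) w) (s := ball γ (ρ / 2))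
    (bound := fun _ => 2 * C / (ρ / 2)) (ball_mem_nhds _ (half_pos hρ)) ?_
    (hc γ (mem_ball_self hρ)).intervalIntegrable
    ((hderiv.mono hsub).aestronglyMeasurable measurableSet_uIoc) ?_ (by simp) ?_).2
  · filter_upwards [ball_mem_nhds γ hρ] with w hw
    exact ((hc w hw).mono hsub).aestronglyMeasurable measurableSet_uIoc
  · refine Eventually.of_forall (fun x hx w hw => ?_)
    have hw' : ball w (ρ / 2) ⊆ ball γ ρ := ball_subset_ball' (by linarith [mem_ball.mp hw])
    exact norm_deriv_le_of_forall_mem_ball_norm_le (half_pos hρ) ((hf x (hsub hx)).mono hw')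
      (fun z hz => hb x (hsub hx) z (hw' hz))
  · exact Eventually.of_forall (fun x hx w hw =>
      ((hf x (hsub hx)).differentiableAt (isOpen_ball.mem_nhds (hhalf hw))).hasDerivAt)

end HolomorphicParameter

section RealIntegrals

variable {E : Type*} [NormedAddCommGroup E] [NormedSpace ℝ E] {G : ℝ → E} {A c K t : ℝ}

lemma norm_integral_zero_le_sub_of_hasDerivAt {Φ φ : ℝ → ℝ}
    (hΦ : ∀ τ ∈ Icc 0 |t|, HasDerivAt Φ (φ τ) τ) (hφ : ContinuousOn φ (Icc 0 |t|))
    (hG : ∀ τ, |τ| ≤ |t| → ‖G τ‖ ≤ φ |τ|) : ‖∫ τ in (0 : ℝ)..t, G τ‖ ≤ Φ |t| - Φ 0 := by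
  wlog ht : 0 ≤ t generalizing G t
  · have href := this (G := fun τ => G (-τ)) (t := -t) (by rwa [abs_neg]) (by rwa [abs_neg])
      (fun τ hτ => by simpa using hG (-τ) (by simpa using hτ)) (by linarith)
    rwa [intervalIntegral.integral_comp_neg, neg_neg, neg_zero, intervalIntegral.integral_symm,
      norm_neg, abs_neg] at href
  rw [abs_of_nonneg ht] at *
  rw [← uIcc_of_le ht] at hΦ hφ
  rw [← intervalIntegral.integral_eq_sub_of_hasDerivAt hΦ hφ.intervalIntegrable]
  refine intervalIntegral.norm_integral_le_of_norm_le ht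
    (Eventually.of_forall fun τ hτ => ?_) hφ.intervalIntegrable
  simpa [abs_of_pos hτ.1] using hG τ (by rw [abs_of_pos hτ.1]; exact hτ.2)

lemma hasDerivAt_sqrt_sub_mul {τ : ℝ} (h : 0 < c - K * τ) :
    HasDerivAt (fun τ => √(c - K * τ)) (-K / (2 * √(c - K * τ))) τ := by
  simpa using (((hasDerivAt_id τ).const_mul K).const_sub c).sqrt h.ne'

lemma norm_integral_zero_le_of_norm_le_div_sqrt_pow_three (hK : 0 < K) (hA : 0 ≤ A)
    (hct : 0 < c - K * |t|) (hG : ∀ τ, |τ| ≤ |t| → ‖G τ‖ ≤ A / √(c - K * |τ|) ^ 3) :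
    ‖∫ τ in (0 : ℝ)..t, G τ‖ ≤ 2 * A / K / √(c - K * |t|) := by
  have hsqrt : ∀ τ ∈ Icc 0 |t|, 0 < √(c - K * τ) := fun τ hτ =>
    Real.sqrt_pos.mpr (by nlinarith [hτ.2])
  have hprim : ∀ τ ∈ Icc 0 |t|, HasDerivAt (fun τ => 2 * A / K * (√(c - K * τ))⁻¹)
      (A / √(c - K * τ) ^ 3) τ := fun τ hτ => by
    have hpos := hsqrt τ hτ
    refine (((hasDerivAt_sqrt_sub_mul (Real.sqrt_pos.mp hpos)).fun_inv hpos.ne').const_mul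
      (2 * A / K)).congr_deriv ?_
    field_simp
  have hcont : ContinuousOn (fun τ => A / √(c - K * τ) ^ 3) (Icc 0 |t|) :=
    continuousOn_const.div (by fun_prop) (fun τ hτ => (pow_pos (hsqrt τ hτ) 3).ne')
  refine (norm_integral_zero_le_sub_of_hasDerivAt hprim hcont hG).trans ?_
  rw [div_eq_mul_inv (2 * A / K)]
  exact sub_le_self _ (by positivity)

lemma norm_integral_zero_le_of_norm_le_div_sqrt (hK : 0 < K) (hA : 0 ≤ A)
    (hct : 0 < c - K * |t|) (hG : ∀ τ, |τ| ≤ |t| → ‖G τ‖ ≤ A / √(c - K * |τ|)) :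
    ‖∫ τ in (0 : ℝ)..t, G τ‖ ≤ 2 * A / K * √c := by
  have hsqrt : ∀ τ ∈ Icc 0 |t|, 0 < √(c - K * τ) := fun τ hτ =>
    Real.sqrt_pos.mpr (by nlinarith [hτ.2])
  have hprim : ∀ τ ∈ Icc 0 |t|, HasDerivAt (fun τ => -(2 * A / K) * √(c - K * τ))
      (A / √(c - K * τ)) τ := fun τ hτ => by
    have hpos := hsqrt τ hτ
    refine ((hasDerivAt_sqrt_sub_mul (Real.sqrt_pos.mp hpos)).const_mul
      (-(2 * A / K))).congr_deriv ?_
    field_simp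
  have hcont : ContinuousOn (fun τ => A / √(c - K * τ)) (Icc 0 |t|) :=
    continuousOn_const.div (by fun_prop) (fun τ hτ => (hsqrt τ hτ).ne')
  refine (norm_integral_zero_le_sub_of_hasDerivAt hprim hcont hG).trans ?_
  have hend : 0 ≤ 2 * A / K * √(c - K * |t|) := by positivity
  rw [mul_zero, sub_zero]
  linarith

lemma le_norm_deriv_of_le_norm_sub {𝕜 F : Type*} [NontriviallyNormedField 𝕜]
    [NormedAddCommGroup F] [NormedSpace 𝕜 F] {g : 𝕜 → F} {g' : F} {a : 𝕜}
    (hg : HasDerivAt g g' a) (hlow : ∀ᶠ x in 𝓝 a, c * ‖x - a‖ ≤ ‖g x - g a‖) : c ≤ ‖g'‖ := by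
  refine ge_of_tendsto (hasDerivAt_iff_tendsto_slope.mp hg).norm ?_
  filter_upwards [nhdsWithin_le_nhds hlow, self_mem_nhdsWithin] with x hx hxa
  have hpos : 0 < ‖x - a‖ := norm_pos_iff.mpr (sub_ne_zero.mpr hxa)
  rwa [slope_def_module, norm_smul, norm_inv, inv_mul_eq_div, le_div_iff₀ hpos]

end RealIntegrals

/-! ### Trigonometric estimates -/

section Trigonometric

variable {x y : ℂ} {s : ℝ}

lemma norm_exp_mul_I_sub_le (hx : ‖x‖ ≤ 1) :
    ‖Complex.exp (x * Complex.I) - 1 - x * Complex.I‖ ≤ ‖x‖ ^ 2 := by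
  simpa using Complex.norm_exp_sub_one_sub_id_le (x := x * Complex.I) (by simpa using hx)

lemma norm_sin_sub_self_le (hx : ‖x‖ ≤ 1) : ‖Complex.sin x - x‖ ≤ ‖x‖ ^ 2 := by
  have hpos := norm_exp_mul_I_sub_le hx
  have hneg := norm_exp_mul_I_sub_le (x := -x) (by rwa [norm_neg])
  have hsplit : Complex.sin x - x = ((Complex.exp (-x * Complex.I) - 1 - -x * Complex.I) -
      (Complex.exp (x * Complex.I) - 1 - x * Complex.I)) * (Complex.I / 2) := by
    rw [Complex.sin]
    linear_combination -x * Complex.I_mul_I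
  rw [norm_neg] at hneg
  rw [hsplit, norm_mul, norm_div, Complex.norm_I, Complex.norm_ofNat]
  linarith [norm_sub_le (Complex.exp (-x * Complex.I) - 1 - -x * Complex.I)
    (Complex.exp (x * Complex.I) - 1 - x * Complex.I)]

lemma norm_cos_sub_one_le (hx : ‖x‖ ≤ 1) : ‖Complex.cos x - 1‖ ≤ ‖x‖ ^ 2 := by
  have hpos := norm_exp_mul_I_sub_le hx
  have hneg := norm_exp_mul_I_sub_le (x := -x) (by rwa [norm_neg])
  have hsplit : Complex.cos x - 1 = ((Complex.exp (-x * Complex.I) - 1 - -x * Complex.I) +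
      (Complex.exp (x * Complex.I) - 1 - x * Complex.I)) / 2 := by
    rw [Complex.cos]
    ring
  rw [norm_neg] at hneg
  rw [hsplit, norm_div, Complex.norm_ofNat]
  linarith [norm_add_le (Complex.exp (-x * Complex.I) - 1 - -x * Complex.I)
    (Complex.exp (x * Complex.I) - 1 - x * Complex.I)]

lemma norm_sin_le_two_mul (hx : ‖x‖ ≤ 1) : ‖Complex.sin x‖ ≤ 2 * ‖x‖ := by
  nlinarith [norm_sin_sub_self_le hx, norm_sub_norm_le (Complex.sin x) x, norm_nonneg x]

lemma half_norm_le_norm_sin (hx : ‖x‖ ≤ 1 / 2) : ‖x‖ / 2 ≤ ‖Complex.sin x‖ := by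
  nlinarith [norm_sin_sub_self_le (x := x) (by linarith), norm_sub_rev (Complex.sin x) x,
    norm_sub_norm_le x (Complex.sin x), norm_nonneg x]

lemma norm_cos_le_exp_norm (x : ℂ) : ‖Complex.cos x‖ ≤ Real.exp ‖x‖ := by
  have hexp : ∀ y : ℂ, ‖Complex.exp (y * Complex.I)‖ ≤ Real.exp ‖y‖ := fun y => by
    simpa using Complex.norm_exp_le_exp_norm (y * Complex.I)
  rw [Complex.cos, norm_div, Complex.norm_ofNat]
  linarith [norm_add_le (Complex.exp (x * Complex.I)) (Complex.exp (-x * Complex.I)), hexp x,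
    norm_neg x ▸ hexp (-x)]

lemma norm_sin_le_norm_mul_exp (x : ℂ) : ‖Complex.sin x‖ ≤ ‖x‖ * Real.exp ‖x‖ := by
  have hderiv : ∀ y ∈ closedBall (0 : ℂ) ‖x‖, ‖deriv Complex.sin y‖ ≤ Real.exp ‖x‖ := by
    intro y hy
    rw [Complex.deriv_sin]
    exact (norm_cos_le_exp_norm y).trans (Real.exp_le_exp.mpr (mem_closedBall_zero_iff.mp hy))
  have hmvt := (convex_closedBall (0 : ℂ) ‖x‖).norm_image_sub_le_of_norm_deriv_le
    (fun y _ => Complex.differentiable_sin y) hderiv (mem_closedBall_self (norm_nonneg x))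
    (mem_closedBall_zero_iff.mpr le_rfl)
  rwa [Complex.sin_zero, sub_zero, sub_zero, mul_comm] at hmvt

lemma norm_cos_le_one_add_norm_sin (x : ℂ) : ‖Complex.cos x‖ ≤ 1 + ‖Complex.sin x‖ :=
  norm_le_one_add_norm_of_sq_add_sq_eq_one (Complex.cos_sq_add_sin_sq x)

lemma half_norm_sin_le_norm_sin_of_norm_sub_le (habs : ‖y - x‖ ≤ 1 / 12)
    (hrel : ‖y - x‖ ≤ ‖Complex.sin x‖ / 8) : ‖Complex.sin x‖ / 2 ≤ ‖Complex.sin y‖ := by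
  set θ := y - x with hθ
  have hsplit : Complex.sin x =
      Complex.sin y - Complex.sin x * (Complex.cos θ - 1) - Complex.cos x * Complex.sin θ := by
    rw [show y = x + θ by rw [hθ]; ring, Complex.sin_add]
    ring
  have htri : ‖Complex.sin x‖ ≤ ‖Complex.sin y‖ + ‖Complex.sin x‖ * ‖Complex.cos θ - 1‖
      + ‖Complex.cos x‖ * ‖Complex.sin θ‖ := by
    rw [← norm_mul, ← norm_mul]
    conv_lhs => rw [hsplit]
    exact (norm_sub_le _ _).trans (add_le_add (norm_sub_le _ _) le_rfl)
  have hcos : ‖Complex.sin x‖ * ‖Complex.cos θ - 1‖ ≤ ‖Complex.sin x‖ * (1 / 144) := by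
    gcongr
    nlinarith [norm_cos_sub_one_le (x := θ) (by linarith), norm_nonneg θ]
  have hsin : ‖Complex.cos x‖ * ‖Complex.sin θ‖ ≤ (1 + ‖Complex.sin x‖) * (2 * ‖θ‖) := by
    gcongr
    · exact norm_cos_le_one_add_norm_sin x
    · exact norm_sin_le_two_mul (by linarith)
  have hprod : ‖Complex.sin x‖ * ‖θ‖ ≤ ‖Complex.sin x‖ * (1 / 12) := by gcongr
  linarith [norm_nonneg (Complex.sin x)]

lemma norm_cot_le (hs : 0 < s) (hx : s ≤ ‖Complex.sin x‖) : ‖Complex.cot x‖ ≤ 1 + 1 / s := by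
  have hpos : 0 < ‖Complex.sin x‖ := hs.trans_le hx
  rw [Complex.cot, norm_div]
  calc ‖Complex.cos x‖ / ‖Complex.sin x‖ ≤ (1 + ‖Complex.sin x‖) / ‖Complex.sin x‖ := by
        gcongr
        exact norm_cos_le_one_add_norm_sin x
    _ = 1 + 1 / ‖Complex.sin x‖ := by field_simp; ring
    _ ≤ 1 + 1 / s := by gcongr

lemma norm_cot_sub_cot_le (hs : 0 < s) (hx : s ≤ ‖Complex.sin x‖) (hy : s ≤ ‖Complex.sin y‖)
    (hxy : ‖x - y‖ ≤ 1) : ‖Complex.cot x - Complex.cot y‖ ≤ 2 / s ^ 2 * ‖x - y‖ := by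
  have hx0 : Complex.sin x ≠ 0 := norm_pos_iff.mp (hs.trans_le hx)
  have hy0 : Complex.sin y ≠ 0 := norm_pos_iff.mp (hs.trans_le hy)
  have hquot : Complex.cot x - Complex.cot y =
      Complex.sin (y - x) / (Complex.sin x * Complex.sin y) := by
    rw [Complex.cot, Complex.cot, Complex.sin_sub]
    field_simp
  have hsin := norm_sin_le_two_mul (x := y - x) (by rwa [norm_sub_rev])
  rw [norm_sub_rev y x] at hsin
  rw [hquot, norm_div, norm_mul]
  calc ‖Complex.sin (y - x)‖ / (‖Complex.sin x‖ * ‖Complex.sin y‖) ≤ 2 * ‖x - y‖ / (s * s) := by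
        gcongr
    _ = 2 / s ^ 2 * ‖x - y‖ := by ring

lemma cot_add_int_mul_pi (x : ℂ) (n : ℤ) : Complex.cot (x + n * π) = Complex.cot x := by
  rw [Complex.cot, Complex.cot, Complex.sin_antiperiodic.add_int_mul_eq,
    Complex.cos_antiperiodic.add_int_mul_eq]
  rcases Int.units_eq_one_or n.negOnePow with h | h <;> rw [h] <;> simp

end Trigonometric

/-! ### The characteristic forms `a ↦ a₁ ± i a₂` -/

section CharacteristicForms

/-- The linear form `a ↦ a₁ + σ a₂` on `ℂ²`. For `σ = ±i` these forms split the Muskat kernel: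
`cosh a₂ - cos a₁` is a product of sines of half of them. -/
def charForm (σ : ℂ) : ℂ × ℂ →L[ℂ] ℂ :=
  ContinuousLinearMap.fst ℂ ℂ ℂ + σ • ContinuousLinearMap.snd ℂ ℂ ℂ

variable {σ : ℂ}

lemma charForm_apply (σ : ℂ) (a : ℂ × ℂ) : charForm σ a = a.1 + σ * a.2 := rfl

lemma norm_eq_one_of_sq_eq_neg_one (hσ : σ ^ 2 = -1) : ‖σ‖ = 1 :=
  (pow_eq_one_iff_of_nonneg (norm_nonneg σ) two_ne_zero).mp (by rw [← norm_pow, hσ]; simp)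

lemma norm_charForm_le (hσ : σ ^ 2 = -1) (a : ℂ × ℂ) : ‖charForm σ a‖ ≤ 2 * ‖a‖ := by
  calc ‖charForm σ a‖ ≤ ‖a.1‖ + ‖σ * a.2‖ := norm_add_le _ _
    _ = ‖a.1‖ + ‖a.2‖ := by rw [norm_mul, norm_eq_one_of_sq_eq_neg_one hσ, one_mul]
    _ ≤ 2 * ‖a‖ := by linarith [norm_fst_le a, norm_snd_le a]

lemma norm_charForm_half_le (hσ : σ ^ 2 = -1) (a : ℂ × ℂ) : ‖charForm σ a / 2‖ ≤ ‖a‖ := by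
  rw [norm_div, Complex.norm_ofNat]
  linarith [norm_charForm_le hσ a]

lemma cosh_eq_cos_mul (hσ : σ ^ 2 = -1) (b : ℂ) : Complex.cosh b = Complex.cos (σ * b) := by
  rw [← Complex.I_sq] at hσ
  rcases sq_eq_sq_iff_eq_or_eq_neg.mp hσ with rfl | rfl
  · rw [mul_comm, Complex.cos_mul_I]
  · rw [neg_mul, Complex.cos_neg, mul_comm, Complex.cos_mul_I]

lemma cosh_sub_cos_eq_sin_mul_sin (hσ : σ ^ 2 = -1) (a : ℂ × ℂ) :
    Complex.cosh a.2 - Complex.cos a.1 =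
      2 * (Complex.sin (charForm σ a / 2) * Complex.sin (charForm (-σ) a / 2)) := by
  rw [cosh_eq_cos_mul hσ, Complex.cos_sub_cos,
    show (σ * a.2 + a.1) / 2 = charForm σ a / 2 by rw [charForm_apply]; ring,
    show (σ * a.2 - a.1) / 2 = -(charForm (-σ) a / 2) by rw [charForm_apply]; ring,
    Complex.sin_neg]
  ring

lemma sin_div_cosh_sub_cos_eq_cot_add_cot (hσ : σ ^ 2 = -1) {a : ℂ × ℂ}
    (hpos : Complex.sin (charForm σ a / 2) ≠ 0) (hneg : Complex.sin (charForm (-σ) a / 2) ≠ 0) :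
    Complex.sin a.1 / (Complex.cosh a.2 - Complex.cos a.1) =
      1 / 2 * (Complex.cot (charForm σ a / 2) + Complex.cot (charForm (-σ) a / 2)) := by
  have hfst : a.1 = charForm σ a / 2 + charForm (-σ) a / 2 := by
    rw [charForm_apply, charForm_apply]; ring
  rw [cosh_sub_cos_eq_sin_mul_sin hσ, hfst, Complex.sin_add, Complex.cot, Complex.cot]
  field_simp
  ring

lemma cQden_eq_sin_mul_sin (hσ : σ ^ 2 = -1) (Z : ℂ → ℂ × ℂ) (γ : ℂ) (β : ℝ) :
    cQden Z γ β = 2 * (Complex.sin (charForm σ (Z γ - Z (γ - β)) / 2) *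
      Complex.sin (charForm (-σ) (Z γ - Z (γ - β)) / 2)) :=
  cosh_sub_cos_eq_sin_mul_sin hσ (Z γ - Z (γ - β))

end CharacteristicForms

/-! ### Periodic curves on horizontal strips -/

section Strips

/-- The open horizontal strip of half-width `ρ`, the interior of `stripC ρ`; it is empty for
`ρ ≤ 0`. -/
def openStrip (ρ : ℝ) : Set ℂ := {w : ℂ | |w.im| < ρ}

variable {ρ : ℝ} {γ : ℂ}

lemma isOpen_openStrip (ρ : ℝ) : IsOpen (openStrip ρ) :=
  isOpen_lt (continuous_abs.comp Complex.continuous_im) continuous_const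

lemma convex_openStrip (ρ : ℝ) : Convex ℝ (openStrip ρ) := by
  have hpre : openStrip ρ = Complex.imLm ⁻¹' Ioo (-ρ) ρ := by
    ext w; simp [openStrip, abs_lt]
  rw [hpre]
  exact (convex_Ioo _ _).linear_preimage _

lemma openStrip_subset_openStrip {ρ' : ℝ} (h : ρ ≤ ρ') : openStrip ρ ⊆ openStrip ρ' :=
  fun _ hw => lt_of_lt_of_le hw h

lemma openStrip_subset_stripC (ρ : ℝ) : openStrip ρ ⊆ stripC ρ := fun w (hw : |w.im| < ρ) => hw.le

lemma stripC_subset_openStrip {ρ' : ℝ} (h : ρ < ρ') : stripC ρ ⊆ openStrip ρ' :=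
  fun _ hw => lt_of_le_of_lt hw h

lemma ball_subset_openStrip {d : ℝ} (h : |γ.im| + d ≤ ρ) : ball γ d ⊆ openStrip ρ := by
  intro w hw
  have him : |w.im - γ.im| ≤ ‖w - γ‖ := Complex.abs_im_le_norm (w - γ)
  have hlt := mem_ball_iff_norm.mp hw
  change |w.im| < ρ
  linarith [abs_sub_abs_le_abs_sub w.im γ.im]

lemma add_ofReal_mem_openStrip (h : γ ∈ openStrip ρ) (x : ℝ) : γ + x ∈ openStrip ρ := by
  simpa [openStrip] using h

lemma sub_ofReal_mem_openStrip (h : γ ∈ openStrip ρ) (x : ℝ) : γ - x ∈ openStrip ρ := by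
  simpa [openStrip] using h

lemma ofReal_mem_openStrip (hρ : 0 < ρ) (x : ℝ) : (x : ℂ) ∈ openStrip ρ := by
  simpa [openStrip] using hρ

lemma norm_sub_ofReal_re (γ : ℂ) : ‖γ - (γ.re : ℂ)‖ = |γ.im| := by
  rw [show γ - (γ.re : ℂ) = γ.im * Complex.I from by apply Complex.ext <;> simp]
  simp

lemma norm_sub_le_of_norm_deriv_le {E : Type*} [NormedAddCommGroup E] [NormedSpace ℂ E]
    {Z : ℂ → E} {M : ℝ}
    (hol : DifferentiableOn ℂ Z (openStrip ρ)) (hM : ∀ γ ∈ openStrip ρ, ‖deriv Z γ‖ ≤ M)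
    {a b : ℂ} (ha : a ∈ openStrip ρ) (hb : b ∈ openStrip ρ) : ‖Z a - Z b‖ ≤ M * ‖a - b‖ :=
  (convex_openStrip ρ).norm_image_sub_le_of_norm_deriv_le
    (fun _ hx => hol.differentiableAt ((isOpen_openStrip ρ).mem_nhds hx)) hM hb ha

variable {Z : ℂ → ℂ × ℂ}

lemma map_add_int_mul_two_pi (hZ : cPerCurve Z) (γ : ℂ) (n : ℤ) :
    Z (γ + ((n * (2 * π) : ℝ) : ℂ)) = Z γ + (((n * (2 * π) : ℝ) : ℂ), 0) := by
  have hper : Function.Periodic (fun γ => Z γ - (γ, 0)) ((2 * π : ℝ) : ℂ) := by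
    intro γ
    simp only [hZ γ]
    ext <;> simp
  have hn := eq_add_of_sub_eq (hper.int_mul n γ)
  push_cast at hn ⊢
  rw [hn]
  ext
  · simp only [Prod.fst_add, Prod.fst_sub]
    ring
  · simp

lemma deriv_add_int_mul_two_pi (hZ : cPerCurve Z) (γ : ℂ) (n : ℤ) :
    deriv Z (γ + ((n * (2 * π) : ℝ) : ℂ)) = deriv Z γ := by
  rw [← deriv_comp_add_const, funext fun x => map_add_int_mul_two_pi hZ x n, deriv_add_const]

lemma exists_norm_le_of_periodic_of_continuousOn_stripC {E : Type*} [NormedAddCommGroup E]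
    {g : ℂ → E} (hg : ContinuousOn g (stripC ρ))
    (hper : ∀ (γ : ℂ) (n : ℤ), g (γ + ((n * (2 * π) : ℝ) : ℂ)) = g γ) :
    ∃ C, 0 ≤ C ∧ ∀ γ ∈ stripC ρ, ‖g γ‖ ≤ C := by
  have hcompact : IsCompact (Icc (-π) π ×ℂ Icc (-ρ) ρ) := isCompact_Icc.reProdIm isCompact_Icc
  obtain ⟨C, hC⟩ := hcompact.exists_bound_of_continuousOn
    (hg.mono fun w hw => (abs_le.mpr hw.2 : |w.im| ≤ ρ))
  refine ⟨max C 0, le_max_right _ _, fun γ hγ => ?_⟩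
  obtain ⟨n, hn⟩ := exists_abs_sub_int_mul_two_pi_le γ.re
  rw [← hper γ (-n)]
  refine (hC _ ⟨?_, ?_⟩).trans (le_max_left _ _)
  · simpa [sub_eq_add_neg] using abs_le.mp hn
  · simpa using abs_le.mp hγ

end Strips

/-! ### The arc-chord condition, factor by factor -/

section ArcChord

/-- The arc-chord condition on the open strip of half-width `ρ` for each of the two factors
`sin((L_σ Z(γ) - L_σ Z(s))/2)`, `σ = ±i`, of the denominator of the Muskat kernel, uniformly over
slightly more than a period. -/
def SplitArcChord (ρ c : ℝ) (Z : ℂ → ℂ × ℂ) : Prop :=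
  ∀ σ : ℂ, σ ^ 2 = -1 → ∀ γ ∈ openStrip ρ, ∀ s ∈ openStrip ρ, |γ.re - s.re| ≤ 4 →
    c * ‖γ - s‖ ≤ ‖Complex.sin (charForm σ (Z γ - Z s) / 2)‖

/-- A base curve for the iteration: holomorphic and periodic on the strip of half-width `4h`, with
derivative bounded by `M` and arc-chord constant `c` there. -/
structure IsBaseCurve (h c M : ℝ) (Z : ℂ → ℂ × ℂ) : Prop where
  h_pos : 0 < h
  four_mul_h_le : 4 * h ≤ 1
  c_pos : 0 < c
  M_nonneg : 0 ≤ M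
  differentiableOn : DifferentiableOn ℂ Z (openStrip (4 * h))
  periodic : cPerCurve Z
  norm_deriv_le : ∀ γ ∈ openStrip (4 * h), ‖deriv Z γ‖ ≤ M
  arcChord : SplitArcChord (4 * h) c Z

lemma abs_div_two_le_distTZ {β : ℝ} (hβ : |β| ≤ 4) : |β| / 2 ≤ distTZ β := by
  unfold distTZ
  generalize round (β / (2 * π)) = n
  rcases eq_or_ne n 0 with rfl | hn
  · simp
  · have hone : (1 : ℝ) ≤ |(n : ℝ)| := by exact_mod_cast Int.one_le_abs hn
    have hmul : |2 * π * (n : ℝ)| = 2 * π * |(n : ℝ)| := by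
      rw [abs_mul, abs_of_pos Real.two_pi_pos]
    have htri := abs_sub_abs_le_abs_sub (2 * π * (n : ℝ)) β
    rw [abs_sub_comm, hmul] at htri
    nlinarith [Real.pi_gt_three]

variable {Z : ℂ → ℂ × ℂ} {ρ M r : ℝ}

lemma norm_sin_charForm_half_le {σ : ℂ} (hσ : σ ^ 2 = -1) {a : ℂ × ℂ} {d : ℝ} (hM : 0 ≤ M)
    (hd : d ≤ 4) (ha : ‖a‖ ≤ M * d) :
    ‖Complex.sin (charForm σ a / 2)‖ ≤ M * Real.exp (4 * M) * d := by
  have hhalf := (norm_charForm_half_le hσ a).trans ha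
  calc ‖Complex.sin (charForm σ a / 2)‖
      ≤ ‖charForm σ a / 2‖ * Real.exp ‖charForm σ a / 2‖ := norm_sin_le_norm_mul_exp _
    _ ≤ M * d * Real.exp (4 * M) := by
        have hexp : ‖charForm σ a / 2‖ ≤ 4 * M := by nlinarith
        have hMd := (norm_nonneg _).trans hhalf
        gcongr
    _ = M * Real.exp (4 * M) * d := by ring

lemma exists_splitArcChord_real (hρ : 0 < ρ) (hr : 0 ≤ r) (hM0 : 0 ≤ M)
    (hol : DifferentiableOn ℂ Z (openStrip ρ)) (hM : ∀ γ ∈ openStrip ρ, ‖deriv Z γ‖ ≤ M)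
    (hac : cArcChordOn Z (stripC r)) :
    ∃ c > 0, ∀ σ : ℂ, σ ^ 2 = -1 → ∀ x y : ℝ, |x - y| ≤ 4 →
      c * |x - y| ≤ ‖Complex.sin (charForm σ (Z x - Z y) / 2)‖ := by
  obtain ⟨C, hC, hac⟩ := hac
  set D := 16 * C * (M * Real.exp (4 * M)) + 1 with hD
  have hDpos : 0 < D := by positivity
  refine ⟨1 / D, by positivity, fun σ hσ x y hxy => ?_⟩
  have hden := hac x (by simpa [stripC] using hr) (x - y)
  rw [cQden_eq_sin_mul_sin hσ Z x (x - y), Complex.ofReal_sub, sub_sub_cancel, norm_mul, norm_mul,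
    norm_mul, Complex.norm_ofNat] at hden
  set A := ‖Complex.sin (charForm σ (Z x - Z y) / 2)‖
  have hother : ‖Complex.sin (charForm (-σ) (Z x - Z y) / 2)‖ ≤
      M * Real.exp (4 * M) * |x - y| := by
    refine norm_sin_charForm_half_le (by rwa [neg_sq]) hM0 hxy ?_
    simpa [← Complex.ofReal_sub] using norm_sub_le_of_norm_deriv_le hol hM
      (ofReal_mem_openStrip hρ x) (ofReal_mem_openStrip hρ y)
  have hdist : (|x - y| / 2) ^ 2 ≤ distTZ (x - y) ^ 2 := by
    gcongr; exact abs_div_two_le_distTZ hxy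
  have hprod : C * (2 * (2 * (A * ‖Complex.sin (charForm (-σ) (Z x - Z y) / 2)‖))) ≤
      C * (2 * (2 * (A * (M * Real.exp (4 * M) * |x - y|)))) := by gcongr
  have hmain : |x - y| ^ 2 ≤ (D - 1) * A * |x - y| := by
    rw [hD]
    linarith
  rw [one_div_mul_eq_div, div_le_iff₀ hDpos]
  have hA : 0 ≤ A := norm_nonneg _
  rcases (abs_nonneg (x - y)).eq_or_lt with hzero | hpos
  · rw [← hzero]; positivity
  · nlinarith [hmain]

end ArcChord

section BaseCurves

lemma eventually_mul_le_nhdsGT_zero (K : ℝ) {b : ℝ} (hb : 0 < b) :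
    ∀ᶠ h in 𝓝[>] (0 : ℝ), K * h ≤ b := by
  have hlim : Tendsto (fun h => K * h) (𝓝[>] 0) (𝓝 (K * 0)) :=
    (tendsto_const_nhds.mul tendsto_id).mono_left nhdsWithin_le_nhds
  exact hlim.eventually_le_const (by simpa using hb)

variable {Z : ℂ → ℂ × ℂ} {ρ c M : ℝ} {σ γ s : ℂ}

lemma exists_norm_deriv_le_of_cPerCurve (hρ : 0 < ρ) (hol : DifferentiableOn ℂ Z (openStrip ρ))
    (hper : cPerCurve Z) : ∃ M, 0 ≤ M ∧ (∀ γ ∈ openStrip (ρ / 4), ‖deriv Z γ‖ ≤ M) ∧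
      ∀ γ ∈ openStrip (ρ / 4), ‖deriv (deriv Z) γ‖ ≤ M := by
  have hol' : DifferentiableOn ℂ (deriv Z) (openStrip ρ) := hol.deriv (isOpen_openStrip ρ)
  obtain ⟨M, hM0, hM⟩ := exists_norm_le_of_periodic_of_continuousOn_stripC (ρ := ρ / 2)
    (hol'.continuousOn.mono (stripC_subset_openStrip (by linarith)))
    (deriv_add_int_mul_two_pi hper)
  refine ⟨max M (2 * M / (ρ / 4)), le_max_of_le_left hM0,
    fun γ hγ => (hM γ ?_).trans (le_max_left _ _), fun γ hγ => le_trans ?_ (le_max_right _ _)⟩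
  · exact openStrip_subset_stripC _ (openStrip_subset_openStrip (by linarith) hγ)
  · have hball : ball γ (ρ / 4) ⊆ openStrip (ρ / 2) :=
      ball_subset_openStrip (by linarith [show |γ.im| < ρ / 4 from hγ])
    exact norm_deriv_le_of_forall_mem_ball_norm_le (by linarith)
      (hol'.mono (hball.trans (openStrip_subset_openStrip (by linarith))))
      fun z hz => hM z (openStrip_subset_stripC _ (hball hz))

lemma two_mul_le_norm_charForm_deriv {x : ℝ} (hZ : DifferentiableAt ℂ Z x)
    (hac : ∀ y : ℝ, |x - y| ≤ 4 → c * |x - y| ≤ ‖Complex.sin (charForm σ (Z x - Z y) / 2)‖) :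
    2 * c ≤ ‖charForm σ (deriv Z x)‖ := by
  have hform : HasDerivAt (fun w => charForm σ (Z x - Z w) / 2)
      (charForm σ (-deriv Z x) / 2) (x : ℂ) :=
    ((charForm σ).hasFDerivAt.comp_hasDerivAt (x : ℂ) (hZ.hasDerivAt.const_sub (Z x))).div_const 2
  have hlow := le_norm_deriv_of_le_norm_sub (c := c) hform.csin.comp_ofReal (by
    filter_upwards [closedBall_mem_nhds x (by norm_num : (0 : ℝ) < 4)] with y hy
    rw [mem_closedBall, dist_comm, Real.dist_eq] at hy
    simpa [abs_sub_comm] using hac y hy)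
  simp only [sub_self, map_zero, zero_div, Complex.cos_zero, one_mul, map_neg, norm_div, norm_neg,
    Complex.norm_ofNat] at hlow
  linarith

lemma norm_sub_le_abs_re_add (hγ : |γ.im| ≤ ρ) (hs : |s.im| ≤ ρ) :
    ‖γ - s‖ ≤ |γ.re - s.re| + 2 * ρ := by
  have hnorm := Complex.norm_le_abs_re_add_abs_im (γ - s)
  rw [Complex.sub_re, Complex.sub_im] at hnorm
  linarith [abs_sub γ.im s.im]

lemma norm_sub_sub_smul_le {E : Type*} [NormedAddCommGroup E] [NormedSpace ℂ E] [CompleteSpace E]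
    {Z : ℂ → E} {K : ℝ} {z : ℂ} (hol : DifferentiableOn ℂ Z (openStrip ρ))
    (hK : ∀ w ∈ openStrip ρ, ‖deriv (deriv Z) w‖ ≤ K) (hz : z ∈ openStrip ρ)
    (hγ : γ ∈ openStrip ρ) (hs : s ∈ openStrip ρ) :
    ‖(Z γ - Z s) - (γ - s) • deriv Z z‖ ≤ K * (‖γ - z‖ + ‖s - z‖) * ‖γ - s‖ := by
  set B := openStrip ρ ∩ closedBall z (‖γ - z‖ + ‖s - z‖)
  have hB : Convex ℝ B := (convex_openStrip _).inter (convex_closedBall _ _)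
  have hγB : γ ∈ B := ⟨hγ, mem_closedBall_iff_norm.mpr (by linarith [norm_nonneg (s - z)])⟩
  have hsB : s ∈ B := ⟨hs, mem_closedBall_iff_norm.mpr (by linarith [norm_nonneg (γ - z)])⟩
  have hderiv : ∀ w ∈ B, HasDerivWithinAt (fun w => Z w - w • deriv Z z)
      (deriv Z w - deriv Z z) B w := fun w hw => by
    have hZ := (hol.differentiableAt ((isOpen_openStrip _).mem_nhds hw.1)).hasDerivAt
    simpa using (hZ.fun_sub ((hasDerivAt_id w).smul_const (deriv Z z))).hasDerivWithinAt
  have hbound : ∀ w ∈ B, ‖deriv Z w - deriv Z z‖ ≤ K * (‖γ - z‖ + ‖s - z‖) := fun w hw =>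
    (norm_sub_le_of_norm_deriv_le (hol.deriv (isOpen_openStrip ρ)) hK hw.1 hz).trans
      (mul_le_mul_of_nonneg_left (mem_closedBall_iff_norm.mp hw.2)
        ((norm_nonneg _).trans (hK z hz)))
  have hmain := hB.norm_image_sub_le_of_norm_hasDerivWithin_le hderiv hbound hsB hγB
  rwa [sub_sub_sub_comm, ← sub_smul] at hmain

lemma quarter_mul_le_norm_sin_of_near {K δ : ℝ} (hσ : σ ^ 2 = -1)
    (hol : DifferentiableOn ℂ Z (openStrip ρ)) (hM : ∀ w ∈ openStrip ρ, ‖deriv Z w‖ ≤ M)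
    (hK : ∀ w ∈ openStrip ρ, ‖deriv (deriv Z) w‖ ≤ K)
    (hγ : γ ∈ openStrip ρ) (hs : s ∈ openStrip ρ) (hδ : |γ.im| ≤ δ)
    (hc : 2 * c ≤ ‖charForm σ (deriv Z γ.re)‖) (hMη : M * ‖γ - s‖ ≤ 1 / 2)
    (hKη : K * (2 * δ + ‖γ - s‖) ≤ c / 2) :
    c / 4 * ‖γ - s‖ ≤ ‖Complex.sin (charForm σ (Z γ - Z s) / 2)‖ := by
  have hx : (γ.re : ℂ) ∈ openStrip ρ :=
    ofReal_mem_openStrip ((abs_nonneg _).trans_lt (show |γ.im| < ρ from hγ)) _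
  have hγx : ‖γ - γ.re‖ ≤ δ := (norm_sub_ofReal_re γ).trans_le hδ
  have hsx : ‖s - γ.re‖ ≤ ‖γ - s‖ + δ := by
    rw [← norm_sub_rev s γ]
    exact (norm_sub_le_norm_sub_add_norm_sub s γ γ.re).trans (by gcongr)
  have htaylor := norm_sub_sub_smul_le hol hK hx hγ hs
  have hcoef : K * (‖γ - γ.re‖ + ‖s - γ.re‖) ≤ c / 2 :=
    le_trans (mul_le_mul_of_nonneg_left (by linarith) ((norm_nonneg _).trans (hK γ hγ))) hKη
  have herr := norm_charForm_le hσ ((Z γ - Z s) - (γ - s) • deriv Z γ.re)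
  rw [map_sub, map_smul, smul_eq_mul] at herr
  have hlow : ‖γ - s‖ * (2 * c) ≤ ‖(γ - s) * charForm σ (deriv Z γ.re)‖ := by
    rw [norm_mul]; gcongr
  have hform : c * ‖γ - s‖ ≤ ‖charForm σ (Z γ - Z s)‖ := by
    rw [norm_sub_rev] at herr
    nlinarith [norm_sub_norm_le ((γ - s) * charForm σ (deriv Z γ.re)) (charForm σ (Z γ - Z s)),
      norm_nonneg (γ - s)]
  have hsin := half_norm_le_norm_sin (x := charForm σ (Z γ - Z s) / 2)
    ((norm_charForm_half_le hσ _).trans ((norm_sub_le_of_norm_deriv_le hol hM hγ hs).trans hMη))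
  rw [norm_div, Complex.norm_ofNat] at hsin
  linarith

lemma quarter_mul_le_norm_sin_of_far {δ η : ℝ} (hσ : σ ^ 2 = -1) (hc0 : 0 ≤ c)
    (hol : DifferentiableOn ℂ Z (openStrip ρ)) (hM : ∀ w ∈ openStrip ρ, ‖deriv Z w‖ ≤ M)
    (hγ : γ ∈ openStrip ρ) (hs : s ∈ openStrip ρ) (hδγ : |γ.im| ≤ δ) (hδs : |s.im| ≤ δ)
    (hac : c * |γ.re - s.re| ≤ ‖Complex.sin (charForm σ (Z γ.re - Z s.re) / 2)‖)
    (hη : η ≤ ‖γ - s‖) (hδη : 4 * δ ≤ η) (hMδ : 2 * M * δ ≤ 1 / 12)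
    (hMη : 2 * M * δ ≤ c * η / 16) :
    c / 4 * ‖γ - s‖ ≤ ‖Complex.sin (charForm σ (Z γ - Z s) / 2)‖ := by
  have hre := norm_sub_le_abs_re_add hδγ hδs
  have hmove : ∀ w ∈ openStrip ρ, |w.im| ≤ δ → ‖Z w - Z w.re‖ ≤ M * δ := fun w hw hwδ => by
    have hρ : 0 < ρ := (abs_nonneg _).trans_lt (show |w.im| < ρ from hw)
    refine (norm_sub_le_of_norm_deriv_le hol hM hw (ofReal_mem_openStrip hρ _)).trans ?_
    rw [norm_sub_ofReal_re]
    exact mul_le_mul_of_nonneg_left hwδ ((norm_nonneg _).trans (hM w hw))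
  have hdiff : ‖charForm σ (Z γ - Z s) / 2 - charForm σ (Z γ.re - Z s.re) / 2‖ ≤ 2 * M * δ := by
    rw [← sub_div, ← map_sub, sub_sub_sub_comm]
    refine (norm_charForm_half_le hσ _).trans ((norm_sub_le _ _).trans ?_)
    linarith [hmove γ hγ hδγ, hmove s hs hδs]
  have hfar : c * (‖γ - s‖ / 2) ≤ c * |γ.re - s.re| := by gcongr; linarith
  have hηc : c * η ≤ c * ‖γ - s‖ := by gcongr
  have hsin := half_norm_sin_le_norm_sin_of_norm_sub_le (hdiff.trans hMδ) (by linarith)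
  linarith

theorem exists_isBaseCurve {r H : ℝ} (hr : 0 < r) (hH : 0 < H)
    (hol : ∀ w ∈ stripC r, DifferentiableAt ℂ Z w) (hper : cPerCurve Z)
    (hac : cArcChordOn Z (stripC r)) : ∃ h c M, h ≤ H ∧ IsBaseCurve h c M Z := by
  have hol' : DifferentiableOn ℂ Z (openStrip r) := fun w hw =>
    (hol w (openStrip_subset_stripC r hw)).differentiableWithinAt
  obtain ⟨M, hM0, hM, hM'⟩ := exists_norm_deriv_le_of_cPerCurve hr hol' hper
  replace hol' := hol'.mono (openStrip_subset_openStrip (by linarith : r / 4 ≤ r))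
  obtain ⟨c, hc, hreal⟩ := exists_splitArcChord_real (by linarith) hr.le hM0 hol' hM hac
  have hslope : ∀ σ : ℂ, σ ^ 2 = -1 → ∀ x : ℝ, 2 * c ≤ ‖charForm σ (deriv Z x)‖ := fun σ hσ x =>
    two_mul_le_norm_charForm_deriv (hol x (by simpa [stripC] using hr.le)) (hreal σ hσ x)
  obtain ⟨η, ⟨hη1, hη2⟩, hη⟩ := ((eventually_mul_le_nhdsGT_zero M (b := 1 / 2) (by norm_num)).and
    (eventually_mul_le_nhdsGT_zero (M * 2) (b := c / 2) (by positivity))).and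
    self_mem_nhdsWithin |>.exists
  have hη : 0 < η := hη
  obtain ⟨h, ⟨⟨⟨⟨⟨hhH, hh1⟩, hhr⟩, hhη⟩, hMh⟩, hMη⟩, hh⟩ :=
    (((((eventually_mul_le_nhdsGT_zero 1 hH).and (eventually_mul_le_nhdsGT_zero 4 one_pos)).and
    (eventually_mul_le_nhdsGT_zero 4 (b := r / 4) (by positivity))).and
    (eventually_mul_le_nhdsGT_zero 16 hη)).and
    (eventually_mul_le_nhdsGT_zero (8 * M) (b := 1 / 12) (by norm_num))).and
    (eventually_mul_le_nhdsGT_zero (8 * M) (b := c * η / 16) (by positivity)) |>.and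
    self_mem_nhdsWithin |>.exists
  have hsub : openStrip (4 * h) ⊆ openStrip (r / 4) := openStrip_subset_openStrip hhr
  refine ⟨h, c / 4, M, by linarith, hh, hh1, by positivity, hM0, hol'.mono hsub, hper,
    fun γ hγ => hM γ (hsub hγ), fun σ hσ γ hγ s hs hre => ?_⟩
  have hγh : |γ.im| ≤ 4 * h := LT.lt.le hγ
  rcases le_total ‖γ - s‖ η with hnear | hfar
  · refine quarter_mul_le_norm_sin_of_near hσ hol' hM hM' (hsub hγ) (hsub hs) hγh
      (hslope σ hσ γ.re) (le_trans (by gcongr) hη1) (le_trans ?_ hη2)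
    rw [mul_assoc]
    gcongr
    linarith
  · exact quarter_mul_le_norm_sin_of_far hσ hc.le hol' hM (hsub hγ) (hsub hs) hγh (LT.lt.le hs)
      (hreal σ hσ γ.re s.re hre) hfar (by linarith) (by linarith) (by linarith)

lemma SplitArcChord.of_norm_deriv_sub_le {W : ℂ → ℂ × ℂ} {e : ℝ} (hac : SplitArcChord ρ c Z)
    (hρ : ρ ≤ 1) (hZ : DifferentiableOn ℂ Z (openStrip ρ))
    (hW : DifferentiableOn ℂ W (openStrip ρ))
    (hd : ∀ γ ∈ openStrip ρ, ‖deriv W γ - deriv Z γ‖ ≤ e) (he : e ≤ 1 / 72) (hec : e ≤ c / 8) :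
    SplitArcChord ρ (c / 2) W := by
  intro σ hσ γ hγ s hs hre
  have hbase := hac σ hσ γ hγ s hs hre
  have hdist : ‖γ - s‖ ≤ 6 := by
    linarith [norm_sub_le_abs_re_add (γ := γ) (s := s) (LT.lt.le hγ) (LT.lt.le hs)]
  have hlip : ‖(W γ - Z γ) - (W s - Z s)‖ ≤ e * ‖γ - s‖ := by
    refine norm_sub_le_of_norm_deriv_le (Z := fun w => W w - Z w) (hW.sub hZ) (fun w hw => ?_) hγ hs
    have hnhds := (isOpen_openStrip ρ).mem_nhds hw
    exact (congrArg norm (deriv_fun_sub (hW.differentiableAt hnhds)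
      (hZ.differentiableAt hnhds))).trans_le (hd w hw)
  have hdiff : ‖charForm σ (W γ - W s) / 2 - charForm σ (Z γ - Z s) / 2‖ ≤ e * ‖γ - s‖ := by
    rw [← sub_div, ← map_sub, sub_sub_sub_comm]
    exact (norm_charForm_half_le hσ _).trans hlip
  have hsmall : e * ‖γ - s‖ ≤ c / 8 * ‖γ - s‖ := by gcongr
  have hsin := half_norm_sin_le_norm_sin_of_norm_sub_le
    (hdiff.trans (by nlinarith [norm_nonneg (γ - s)])) (hdiff.trans (by linarith))
  linarith

lemma SplitArcChord.mul_distTZ_le (hac : SplitArcChord ρ c Z) (hper : cPerCurve Z)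
    (hσ : σ ^ 2 = -1) (hγ : γ ∈ openStrip ρ) (β : ℝ) :
    c * distTZ β ≤ ‖Complex.sin (charForm σ (Z γ - Z (γ - β)) / 2)‖ := by
  set n := round (β / (2 * π))
  set b := β - 2 * π * n with hb
  have hb4 : |b| ≤ 4 := by
    have hround := abs_sub_round (β / (2 * π))
    have hscale : b = (β / (2 * π) - n) * (2 * π) := by rw [hb]; field_simp
    rw [hscale, abs_mul, abs_of_pos Real.two_pi_pos]
    nlinarith [Real.pi_lt_four, Real.pi_pos]
  have hs : γ - (b : ℂ) ∈ openStrip ρ := by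
    simpa [sub_eq_add_neg] using add_ofReal_mem_openStrip hγ (-b)
  have hdist : distTZ β = |b| := rfl
  have hlow := hac σ hσ γ hγ (γ - b) hs (by simpa using hb4)
  have hshift : γ - (b : ℂ) = γ - β + ((n * (2 * π) : ℝ) : ℂ) := by rw [hb]; push_cast; ring
  have hform : charForm σ (Z γ - (Z (γ - β) + (((n * (2 * π) : ℝ) : ℂ), 0))) / 2 =
      charForm σ (Z γ - Z (γ - β)) / 2 - n * π := by
    rw [← sub_sub, map_sub, charForm_apply σ (_, 0)]
    push_cast
    ring
  rw [sub_sub_cancel, Complex.norm_real, Real.norm_eq_abs, hshift, map_add_int_mul_two_pi hper,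
    hform, Complex.sin_antiperiodic.sub_int_mul_eq] at hlow
  simpa [hdist] using hlow

lemma SplitArcChord.cArcChordOn {r : ℝ} (hac : SplitArcChord ρ c Z) (hc : 0 < c) (hr : r < ρ)
    (hper : cPerCurve Z) : cArcChordOn Z (stripC r) := by
  refine ⟨1 / (4 * c ^ 2), by positivity, fun γ hγ β => ?_⟩
  have hγ' := stripC_subset_openStrip hr hγ
  have hdist : 0 ≤ distTZ β := abs_nonneg _
  have hprod := mul_le_mul (hac.mul_distTZ_le hper Complex.I_sq hγ' β)
    (hac.mul_distTZ_le hper (σ := -Complex.I) (by simp) hγ' β) (by positivity) (norm_nonneg _)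
  rw [cQden_eq_sin_mul_sin Complex.I_sq, norm_mul, norm_mul, norm_mul, Complex.norm_ofNat,
    one_div_mul_eq_div, le_div_iff₀ (by positivity)]
  linarith

end BaseCurves

/-! ### Splitting the kernel and shifting the contour -/

section ContourShift

/-- One half of the Muskat integrand, with singularity at `s = γ`: the kernel of the equation is
the mean of `splitKernel i` and `splitKernel (-i)`. -/
def splitKernel (σ : ℂ) (Z : ℂ → ℂ × ℂ) (γ s : ℂ) : ℂ × ℂ :=
  Complex.cot (charForm σ (Z γ - Z s) / 2) • (deriv Z γ - deriv Z s)

/-- The integral of `splitKernel` in its second variable over one period of the horizontal line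
at height `y`. -/
def lineIntegral (σ : ℂ) (Z : ℂ → ℂ × ℂ) (γ : ℂ) (y : ℝ) : ℂ × ℂ :=
  ∫ x in (-π)..π, splitKernel σ Z γ (x + y * Complex.I)

/-- The holomorphic extension of `splitKernel σ Z γ` across its removable singularity `s = γ`. -/
def regularKernel (σ : ℂ) (Z : ℂ → ℂ × ℂ) (γ s : ℂ) : ℂ × ℂ :=
  -(Complex.cos (charForm σ (Z γ - Z s) / 2) /
    dslope (fun s => Complex.sin (charForm σ (Z γ - Z s) / 2)) γ s) • dslope (deriv Z) γ s

variable {Z : ℂ → ℂ × ℂ} {ρ c y : ℝ} {σ γ : ℂ}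

lemma charForm_half_add_int_mul_two_pi (σ : ℂ) (hZ : cPerCurve Z) (γ s : ℂ) (n : ℤ) :
    charForm σ (Z (γ + ((n * (2 * π) : ℝ) : ℂ)) - Z s) / 2 =
      charForm σ (Z γ - Z s) / 2 + n * π := by
  rw [map_add_int_mul_two_pi hZ, add_sub_right_comm, map_add, charForm_apply σ (_, 0)]
  push_cast
  ring

lemma charForm_half_add_int_mul_two_pi_right (σ : ℂ) (hZ : cPerCurve Z) (γ s : ℂ) (n : ℤ) :
    charForm σ (Z γ - Z (s + ((n * (2 * π) : ℝ) : ℂ))) / 2 =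
      charForm σ (Z γ - Z s) / 2 + (-n : ℤ) * π := by
  rw [← neg_sub, map_neg, neg_div, charForm_half_add_int_mul_two_pi σ hZ, ← neg_sub (Z γ), map_neg]
  push_cast
  ring

lemma splitKernel_add_int_mul_two_pi (σ : ℂ) (hZ : cPerCurve Z) (γ s : ℂ) (n : ℤ) :
    splitKernel σ Z (γ + ((n * (2 * π) : ℝ) : ℂ)) s = splitKernel σ Z γ s := by
  rw [splitKernel, charForm_half_add_int_mul_two_pi σ hZ, cot_add_int_mul_pi,
    deriv_add_int_mul_two_pi hZ, splitKernel]

lemma splitKernel_add_int_mul_two_pi_right (σ : ℂ) (hZ : cPerCurve Z) (γ s : ℂ) (n : ℤ) :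
    splitKernel σ Z γ (s + ((n * (2 * π) : ℝ) : ℂ)) = splitKernel σ Z γ s := by
  rw [splitKernel, charForm_half_add_int_mul_two_pi_right σ hZ, cot_add_int_mul_pi,
    deriv_add_int_mul_two_pi hZ, splitKernel]

lemma regularKernel_of_ne (σ : ℂ) (Z : ℂ → ℂ × ℂ) {γ s : ℂ} (h : s ≠ γ) :
    regularKernel σ Z γ s = splitKernel σ Z γ s := by
  have hsub : s - γ ≠ 0 := sub_ne_zero.mpr h
  rw [regularKernel, splitKernel, dslope_of_ne _ h, dslope_of_ne _ h, slope_def_field,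
    slope_def_module, sub_self, map_zero, zero_div, Complex.sin_zero, sub_zero,
    ← neg_sub (deriv Z s), smul_neg, ← neg_smul, smul_smul, Complex.cot]
  congr 1
  field_simp

lemma differentiableOn_regularKernel (hσ : σ ^ 2 = -1) (hc : 0 < c)
    (hol : DifferentiableOn ℂ Z (openStrip ρ)) (hac : SplitArcChord ρ c Z) (hγ : γ ∈ openStrip ρ) :
    DifferentiableOn ℂ (regularKernel σ Z γ) (openStrip ρ ∩ {s | |γ.re - s.re| < 4}) := by
  set U := openStrip ρ ∩ {s : ℂ | |γ.re - s.re| < 4}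
  have hU : IsOpen U :=
    (isOpen_openStrip ρ).inter (isOpen_lt (by fun_prop) continuous_const)
  have hUγ : U ∈ 𝓝 γ := hU.mem_nhds ⟨hγ, by simp⟩
  have hZ : DifferentiableOn ℂ Z U := hol.mono inter_subset_left
  have harg : DifferentiableOn ℂ (fun s => charForm σ (Z γ - Z s) / 2) U :=
    ((charForm σ).differentiable.comp_differentiableOn (hZ.const_sub (Z γ))).div_const 2
  set φ := fun s => Complex.sin (charForm σ (Z γ - Z s) / 2) with hφ
  have hlow : ∀ s ∈ U, c * ‖s - γ‖ ≤ ‖φ s - φ γ‖ := fun s hs => by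
    simpa [hφ, norm_sub_rev s γ] using hac σ hσ γ hγ s hs.1 (LT.lt.le hs.2)
  have hne : ∀ s ∈ U, dslope φ γ s ≠ 0 := by
    intro s hs
    rcases eq_or_ne s γ with rfl | hsγ
    · rw [dslope_same]
      exact norm_pos_iff.mp (hc.trans_le (le_norm_deriv_of_le_norm_sub
        (harg.csin.differentiableAt hUγ).hasDerivAt (eventually_of_mem hUγ hlow)))
    · have hdist : 0 < ‖s - γ‖ := norm_pos_iff.mpr (sub_ne_zero.mpr hsγ)
      rw [dslope_of_ne _ hsγ, slope_def_field]
      exact div_ne_zero (norm_pos_iff.mp ((mul_pos hc hdist).trans_le (hlow s hs)))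
        (sub_ne_zero.mpr hsγ)
  exact ((harg.ccos.div ((Complex.differentiableOn_dslope hUγ).mpr harg.csin) hne).neg).smul
    ((Complex.differentiableOn_dslope hUγ).mpr (hZ.deriv hU))

lemma integral_horizontal_eq_of_differentiableOn {E : Type*} [NormedAddCommGroup E]
    [NormedSpace ℂ E] {g : ℂ → E} {a b y₀ y₁ : ℝ}
    (hg : DifferentiableOn ℂ g (uIcc a b ×ℂ uIcc y₀ y₁))
    (hside : ∀ v : ℝ, g (b + v * Complex.I) = g (a + v * Complex.I)) :
    ∫ x in a..b, g (x + y₀ * Complex.I) = ∫ x in a..b, g (x + y₁ * Complex.I) := by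
  have hrect := Complex.integral_boundary_rect_eq_zero_of_differentiableOn g ⟨a, y₀⟩ ⟨b, y₁⟩ hg
  simp only [hside, add_sub_cancel_right, sub_eq_zero] at hrect
  exact hrect

lemma sub_ofReal_mem_openStrip_inter (hγ : γ ∈ openStrip ρ) {β : ℝ} (hβ : |β| ≤ π) :
    γ - β ∈ openStrip ρ ∩ {s | |γ.re - s.re| < 4} :=
  ⟨by simpa [openStrip] using hγ, by simpa using hβ.trans_lt Real.pi_lt_four⟩

lemma regularKernel_sub_ae_eq (σ : ℂ) (Z : ℂ → ℂ × ℂ) (γ : ℂ) :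
    (fun β : ℝ => regularKernel σ Z γ (γ - β)) =ᵐ[volume]
      fun β : ℝ => splitKernel σ Z γ (γ - β) := by
  filter_upwards [Measure.ae_ne volume (0 : ℝ)] with β hβ
  exact regularKernel_of_ne σ Z (by simpa using hβ)

lemma intervalIntegrable_splitKernel (hσ : σ ^ 2 = -1) (hc : 0 < c)
    (hol : DifferentiableOn ℂ Z (openStrip ρ)) (hac : SplitArcChord ρ c Z) (hγ : γ ∈ openStrip ρ) :
    IntervalIntegrable (fun β : ℝ => splitKernel σ Z γ (γ - β)) volume (-π) π := by
  have hregular : ContinuousOn (fun β : ℝ => regularKernel σ Z γ (γ - β)) (uIcc (-π) π) := by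
    refine (differentiableOn_regularKernel hσ hc hol hac hγ).continuousOn.comp (by fun_prop) ?_
    intro β hβ
    rw [uIcc_of_le (by linarith [Real.pi_pos])] at hβ
    exact sub_ofReal_mem_openStrip_inter hγ (abs_le.mpr hβ)
  exact hregular.intervalIntegrable.congr_ae (ae_restrict_of_ae (regularKernel_sub_ae_eq σ Z γ))

lemma integral_regularKernel_eq (σ : ℂ) (Z : ℂ → ℂ × ℂ) (γ : ℂ) :
    ∫ x in (γ.re - π)..(γ.re + π), regularKernel σ Z γ (x + γ.im * Complex.I) =
      ∫ β in (-π)..π, splitKernel σ Z γ (γ - β) := by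
  rw [← intervalIntegral.integral_congr_ae ((regularKernel_sub_ae_eq σ Z γ).mono fun _ h _ => h),
    ← sub_neg_eq_add γ.re, ← intervalIntegral.integral_comp_sub_left
      (fun x : ℝ => regularKernel σ Z γ (x + γ.im * Complex.I)) γ.re]
  refine intervalIntegral.integral_congr fun β _ => congrArg (regularKernel σ Z γ) ?_
  apply Complex.ext <;> simp

lemma integral_regularKernel_eq_lineIntegral (σ : ℂ) (hper : cPerCurve Z) (γ : ℂ) (y : ℝ) :
    ∫ x in (γ.re - π)..(γ.re + π), regularKernel σ Z γ (x + y * Complex.I) =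
      lineIntegral σ Z γ y := by
  have hae : ∀ᵐ x : ℝ, x ∈ uIoc (γ.re - π) (γ.re + π) →
      regularKernel σ Z γ (x + y * Complex.I) = splitKernel σ Z γ (x + y * Complex.I) := by
    filter_upwards [Measure.ae_ne volume γ.re] with x hx _
    refine regularKernel_of_ne σ Z fun h => hx ?_
    simpa using congrArg Complex.re h
  have hperiodic : Function.Periodic
      (fun x : ℝ => splitKernel σ Z γ (x + y * Complex.I)) (2 * π) := fun x => by
    simp only [← splitKernel_add_int_mul_two_pi_right σ hper γ (x + y * Complex.I) 1]
    congr 1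
    push_cast
    ring
  rw [intervalIntegral.integral_congr_ae hae, lineIntegral]
  convert hperiodic.intervalIntegral_add_eq (γ.re - π) (-π) using 2 <;> ring

theorem lineIntegral_eq_integral_splitKernel (hσ : σ ^ 2 = -1) (hc : 0 < c)
    (hol : DifferentiableOn ℂ Z (openStrip ρ)) (hper : cPerCurve Z) (hac : SplitArcChord ρ c Z)
    (hγ : γ ∈ openStrip ρ) (hy : |y| < ρ) :
    lineIntegral σ Z γ y = ∫ β in (-π)..π, splitKernel σ Z γ (γ - β) := by
  rw [← integral_regularKernel_eq, ← integral_regularKernel_eq_lineIntegral σ hper]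
  refine (integral_horizontal_eq_of_differentiableOn
    ((differentiableOn_regularKernel hσ hc hol hac hγ).mono ?_) fun v => ?_).symm
  · rintro s ⟨hre, him⟩
    rw [uIcc_of_le (by linarith [Real.pi_pos])] at hre
    have hsub : uIcc γ.im y ⊆ Ioo (-ρ) ρ :=
      ordConnected_Ioo.uIcc_subset (abs_lt.mp hγ) (abs_lt.mp hy)
    refine ⟨abs_lt.mpr (hsub him), show |γ.re - s.re| < 4 from abs_lt.mpr ⟨?_, ?_⟩⟩ <;>
      linarith [hre.1, hre.2, Real.pi_lt_four]
  · have hne : ∀ x : ℝ, x ≠ γ.re → (x : ℂ) + v * Complex.I ≠ γ := fun x hx h =>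
      hx (by simpa using congrArg Complex.re h)
    rw [regularKernel_of_ne σ Z (hne _ (by simp [Real.pi_ne_zero])),
      regularKernel_of_ne σ Z (hne _ (by simp [Real.pi_ne_zero])),
      ← splitKernel_add_int_mul_two_pi_right σ hper γ (((γ.re - π : ℝ) : ℂ) + v * Complex.I) 1]
    congr 1
    push_cast
    ring

theorem cMuskatRHS_eq_lineIntegral (hc : 0 < c) (hol : DifferentiableOn ℂ Z (openStrip ρ))
    (hper : cPerCurve Z) (hac : SplitArcChord ρ c Z) (hγ : γ ∈ openStrip ρ) (hy : |y| < ρ) :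
    cMuskatRHS Z γ =
      (1 / 2 : ℂ) • (lineIntegral Complex.I Z γ y + lineIntegral (-Complex.I) Z γ y) := by
  have hI : (-Complex.I) ^ 2 = -1 := by simp
  rw [lineIntegral_eq_integral_splitKernel Complex.I_sq hc hol hper hac hγ hy,
    lineIntegral_eq_integral_splitKernel hI hc hol hper hac hγ hy,
    ← intervalIntegral.integral_add
      (intervalIntegrable_splitKernel Complex.I_sq hc hol hac hγ)
      (intervalIntegrable_splitKernel hI hc hol hac hγ), ← intervalIntegral.integral_smul]
  refine intervalIntegral.integral_congr_ae ?_
  filter_upwards [Measure.ae_ne volume (0 : ℝ)] with β hβ hmem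
  rw [uIoc_of_le (by linarith [Real.pi_pos])] at hmem
  have hsin : ∀ σ : ℂ, σ ^ 2 = -1 → Complex.sin (charForm σ (Z γ - Z (γ - β)) / 2) ≠ 0 := by
    intro σ hσ
    have hs := sub_ofReal_mem_openStrip_inter hγ (abs_le.mpr ⟨hmem.1.le, hmem.2⟩)
    have hlow := hac σ hσ γ hγ (γ - β) hs.1 (LT.lt.le hs.2)
    rw [sub_sub_cancel] at hlow
    exact norm_pos_iff.mp ((mul_pos hc (norm_pos_iff.mpr (by simpa using hβ))).trans_le hlow)
  have hkernel := sin_div_cosh_sub_cos_eq_cot_add_cot Complex.I_sq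
    (hsin _ Complex.I_sq) (hsin _ hI)
  rw [splitKernel, splitKernel, ← add_smul, smul_smul, ← hkernel]
  rfl

end ContourShift

/-! ### The Muskat nonlinearity near a base curve -/

/-- Perturbations `Z` of a base curve `Z₀` on the strip of half-width `δ ∈ [3h, 4h]`: holomorphic,
periodic, and within `ε` of `Z₀` in the uniform norm. -/
structure IsNearCurve (h ε δ : ℝ) (Z₀ Z : ℂ → ℂ × ℂ) : Prop where
  three_mul_h_le : 3 * h ≤ δ
  le_four_mul_h : δ ≤ 4 * h
  differentiableOn : DifferentiableOn ℂ Z (openStrip δ)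
  periodic : cPerCurve Z
  norm_sub_base_le : ∀ γ ∈ openStrip δ, ‖Z γ - Z₀ γ‖ ≤ ε

/-- A radius `ε` so small that `ε`-perturbations of a base curve with parameters `h`, `c` still
satisfy the arc-chord condition, at the cost of halving its constant. -/
structure IsSmallRadius (h c ε : ℝ) : Prop where
  pos : 0 < ε
  mul_le_h : 288 * ε ≤ h
  mul_le_mul_h : 32 * ε ≤ c * h

/-- The height of the contour for the point `γ`: at distance `2h` from the real axis, on the side
opposite to `γ`. -/
def contourHeight (h : ℝ) (γ : ℂ) : ℝ := if 0 ≤ γ.im then -(2 * h) else 2 * h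

/-- The right-hand side of the Muskat equation, written as an integral over the line at height
`y`. -/
def lineRHS (Z : ℂ → ℂ × ℂ) (γ : ℂ) (y : ℝ) : ℂ × ℂ :=
  (1 / 2 : ℂ) • (lineIntegral Complex.I Z γ y + lineIntegral (-Complex.I) Z γ y)

/-- The right-hand side of the Muskat equation on a contour that keeps a distance `h` from the
singularity. -/
def contourRHS (h : ℝ) (Z : ℂ → ℂ × ℂ) (γ : ℂ) : ℂ × ℂ := lineRHS Z γ (contourHeight h γ)

lemma exists_isSmallRadius {h c : ℝ} (hh : 0 < h) (hc : 0 < c) : ∃ ε, IsSmallRadius h c ε := by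
  refine ⟨min (h / 288) (c * h / 32), by positivity, ?_, ?_⟩
  · linarith [min_le_left (h / 288) (c * h / 32)]
  · linarith [min_le_right (h / 288) (c * h / 32)]

lemma IsSmallRadius.four_mul_div_le {h c ε : ℝ} (hε : IsSmallRadius h c ε) (hh : 0 < h) :
    4 * ε / h ≤ 1 / 72 ∧ 4 * ε / h ≤ c / 8 := by
  rw [div_le_iff₀ hh, div_le_iff₀ hh]
  constructor <;> linarith [hε.mul_le_h, hε.mul_le_mul_h]

lemma ofReal_add_mul_I_mem_openStrip {ρ y : ℝ} (hy : |y| < ρ) (x : ℝ) :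
    (x + y * Complex.I : ℂ) ∈ openStrip ρ := by
  simpa [openStrip] using hy

lemma norm_integral_period_le {E : Type*} [NormedAddCommGroup E] [NormedSpace ℝ E] {g : ℝ → E}
    {C : ℝ} (hg : ∀ x, ‖g x‖ ≤ C) : ‖∫ x in (-π)..π, g x‖ ≤ 7 * C := by
  have hC : 0 ≤ C := (norm_nonneg _).trans (hg 0)
  have hlength : |π - -π| = 2 * π := by rw [abs_of_pos (by linarith [Real.pi_pos])]; ring
  calc ‖∫ x in (-π)..π, g x‖ ≤ C * |π - -π| :=
        intervalIntegral.norm_integral_le_of_norm_le_const fun x _ => hg x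
    _ ≤ 7 * C := by rw [hlength]; nlinarith [Real.pi_lt_d2]

lemma norm_half_smul_add_le {E : Type*} [NormedAddCommGroup E] [NormedSpace ℂ E] {a b : E} {C : ℝ}
    (ha : ‖a‖ ≤ C) (hb : ‖b‖ ≤ C) : ‖(1 / 2 : ℂ) • (a + b)‖ ≤ C := by
  rw [norm_smul, norm_div, norm_one, Complex.norm_ofNat]
  linarith [norm_add_le a b]

lemma norm_deriv_sub_deriv_le {E : Type*} [NormedAddCommGroup E] [NormedSpace ℂ E] {f g : ℂ → E}
    {γ : ℂ} {d η : ℝ} (hd : 0 < d) (hf : DifferentiableOn ℂ f (ball γ d))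
    (hg : DifferentiableOn ℂ g (ball γ d)) (hfg : ∀ w ∈ ball γ d, ‖f w - g w‖ ≤ η) :
    ‖deriv f γ - deriv g γ‖ ≤ 2 * η / d := by
  have hγ : ball γ d ∈ 𝓝 γ := ball_mem_nhds γ hd
  rw [← deriv_fun_sub (hf.differentiableAt hγ) (hg.differentiableAt hγ)]
  exact norm_deriv_le_of_forall_mem_ball_norm_le hd (hf.fun_sub hg) hfg

lemma continuousWithinAt_cot_charForm_smul {X : Type*} [TopologicalSpace X] {f g : X → ℂ × ℂ}
    {s : Set X} {x : X} {σ : ℂ} (hf : ContinuousWithinAt f s x) (hg : ContinuousWithinAt g s x)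
    (hne : Complex.sin (charForm σ (f x) / 2) ≠ 0) :
    ContinuousWithinAt (fun x => Complex.cot (charForm σ (f x) / 2) • g x) s x := by
  have hL : ContinuousWithinAt (fun x => charForm σ (f x) / 2) s x :=
    ((charForm σ).continuous.continuousAt.comp_continuousWithinAt hf).div_const 2
  unfold Complex.cot
  exact ((Complex.continuous_cos.continuousAt.comp_continuousWithinAt hL).div
    (Complex.continuous_sin.continuousAt.comp_continuousWithinAt hL) hne).smul hg

lemma norm_charForm_half_sub_sub_le {σ : ℂ} (hσ : σ ^ 2 = -1) (Z W : ℂ → ℂ × ℂ) (γ s : ℂ) :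
    ‖charForm σ (Z γ - Z s) / 2 - charForm σ (W γ - W s) / 2‖ ≤ ‖Z γ - W γ‖ + ‖Z s - W s‖ := by
  rw [← sub_div, ← map_sub, sub_sub_sub_comm]
  exact (norm_charForm_half_le hσ _).trans (norm_sub_le _ _)

lemma norm_sin_charForm_half_add_int_mul_two_pi (σ : ℂ) {Z : ℂ → ℂ × ℂ} (hZ : cPerCurve Z)
    (γ s : ℂ) (n : ℤ) :
    ‖Complex.sin (charForm σ (Z (γ + ((n * (2 * π) : ℝ) : ℂ)) - Z s) / 2)‖ =
      ‖Complex.sin (charForm σ (Z γ - Z s) / 2)‖ := by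
  rw [charForm_half_add_int_mul_two_pi σ hZ, Complex.sin_antiperiodic.add_int_mul_eq]
  simp

lemma SplitArcChord.mul_abs_im_sub_le {ρ c : ℝ} {Z : ℂ → ℂ × ℂ} (hac : SplitArcChord ρ c Z)
    (hc : 0 ≤ c) (hper : cPerCurve Z) {σ : ℂ} (hσ : σ ^ 2 = -1) {γ s : ℂ} (hγ : γ ∈ openStrip ρ)
    (hs : s ∈ openStrip ρ) :
    c * |γ.im - s.im| ≤ ‖Complex.sin (charForm σ (Z γ - Z s) / 2)‖ := by
  obtain ⟨n, hn⟩ := exists_abs_sub_int_mul_two_pi_le (γ.re - s.re)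
  have hre : (γ + (((-n : ℤ) * (2 * π) : ℝ) : ℂ)).re - s.re = γ.re - s.re - n * (2 * π) := by
    rw [Complex.add_re, Complex.ofReal_re]; push_cast; ring
  have him : (γ + (((-n : ℤ) * (2 * π) : ℝ) : ℂ) - s).im = γ.im - s.im := by
    rw [Complex.sub_im, Complex.add_im, Complex.ofReal_im, add_zero]
  calc c * |γ.im - s.im| ≤ c * ‖γ + (((-n : ℤ) * (2 * π) : ℝ) : ℂ) - s‖ := by
        rw [← him]
        gcongr
        exact Complex.abs_im_le_norm _
    _ ≤ ‖Complex.sin (charForm σ (Z (γ + (((-n : ℤ) * (2 * π) : ℝ) : ℂ)) - Z s) / 2)‖ :=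
        hac σ hσ _ (add_ofReal_mem_openStrip hγ _) s hs
          (by rw [hre]; linarith [Real.pi_lt_d2])
    _ = ‖Complex.sin (charForm σ (Z γ - Z s) / 2)‖ :=
        norm_sin_charForm_half_add_int_mul_two_pi σ hper γ s (-n)

lemma SplitArcChord.mono {ρ ρ' c : ℝ} {Z : ℂ → ℂ × ℂ} (hZ : SplitArcChord ρ c Z) (h : ρ' ≤ ρ) :
    SplitArcChord ρ' c Z := fun σ hσ γ hγ s hs =>
  hZ σ hσ γ (openStrip_subset_openStrip h hγ) s (openStrip_subset_openStrip h hs)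

section ContourHeight

variable {h : ℝ}

lemma abs_contourHeight (hh : 0 < h) (γ : ℂ) : |contourHeight h γ| = 2 * h := by
  unfold contourHeight
  split_ifs
  · rw [abs_neg, abs_of_pos (by linarith)]
  · rw [abs_of_pos (by linarith)]

lemma lt_abs_im_sub_contourHeight (hh : 0 < h) (γ : ℂ) : h < |γ.im - contourHeight h γ| := by
  unfold contourHeight
  split_ifs with hγ
  · rw [abs_of_nonneg (by linarith)]; linarith
  · rw [abs_of_neg (by linarith)]; linarith

lemma contourRHS_add_int_mul_two_pi (h : ℝ) {Z : ℂ → ℂ × ℂ} (hZ : cPerCurve Z) (γ : ℂ) (n : ℤ) :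
    contourRHS h Z (γ + ((n * (2 * π) : ℝ) : ℂ)) = contourRHS h Z γ := by
  have hheight : contourHeight h (γ + ((n * (2 * π) : ℝ) : ℂ)) = contourHeight h γ := by
    unfold contourHeight
    rw [Complex.add_im, Complex.ofReal_im, add_zero]
  simp only [contourRHS, lineRHS, lineIntegral, hheight, splitKernel_add_int_mul_two_pi _ hZ]

lemma contourRHS_eq_cMuskatRHS {c ρ : ℝ} {Z : ℂ → ℂ × ℂ} {γ : ℂ} (hh : 0 < h) (hρ : 2 * h < ρ)
    (hc : 0 < c) (hol : DifferentiableOn ℂ Z (openStrip ρ)) (hper : cPerCurve Z)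
    (hac : SplitArcChord ρ c Z) (hγ : γ ∈ openStrip ρ) : contourRHS h Z γ = cMuskatRHS Z γ :=
  (cMuskatRHS_eq_lineIntegral hc hol hper hac hγ (by rwa [abs_contourHeight hh])).symm

end ContourHeight

namespace IsNearCurve

variable {h c M ε δ d y η : ℝ} {Z₀ Z W : ℂ → ℂ × ℂ} {γ s σ : ℂ}

lemma mono {δ' : ℝ} (hZ : IsNearCurve h ε δ Z₀ Z) (h3 : 3 * h ≤ δ') (hδ : δ' ≤ δ) :
    IsNearCurve h ε δ' Z₀ Z where
  three_mul_h_le := h3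
  le_four_mul_h := hδ.trans hZ.le_four_mul_h
  differentiableOn := hZ.differentiableOn.mono (openStrip_subset_openStrip hδ)
  periodic := hZ.periodic
  norm_sub_base_le γ hγ := hZ.norm_sub_base_le γ (openStrip_subset_openStrip hδ hγ)

lemma ofReal_add_mul_I_mem (hZ : IsNearCurve h ε δ Z₀ Z) (hh : 0 < h) (hy : |y| = 2 * h) (x : ℝ) :
    (x + y * Complex.I : ℂ) ∈ openStrip δ :=
  ofReal_add_mul_I_mem_openStrip (by linarith [hZ.three_mul_h_le]) x

lemma norm_deriv_sub_le (hZ₀ : IsBaseCurve h c M Z₀) (hZ : IsNearCurve h ε δ Z₀ Z) (hd : 0 < d)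
    (hγ : |γ.im| + d ≤ δ) : ‖deriv Z γ - deriv Z₀ γ‖ ≤ 2 * ε / d := by
  have hball : ball γ d ⊆ openStrip δ := ball_subset_openStrip hγ
  exact norm_deriv_sub_deriv_le hd (hZ.differentiableOn.mono hball)
    (hZ₀.differentiableOn.mono (hball.trans (openStrip_subset_openStrip hZ.le_four_mul_h)))
    fun w hw => hZ.norm_sub_base_le w (hball hw)

lemma norm_deriv_le (hZ₀ : IsBaseCurve h c M Z₀) (hZ : IsNearCurve h ε δ Z₀ Z) (hd : 0 < d)
    (hγ : |γ.im| + d ≤ δ) : ‖deriv Z γ‖ ≤ M + 2 * ε / d := by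
  have hmem : γ ∈ openStrip (4 * h) :=
    openStrip_subset_openStrip hZ.le_four_mul_h (ball_subset_openStrip hγ (mem_ball_self hd))
  linarith [hZ.norm_deriv_sub_le hZ₀ hd hγ, hZ₀.norm_deriv_le γ hmem,
    norm_le_norm_add_norm_sub' (deriv Z γ) (deriv Z₀ γ)]

lemma norm_deriv_sub_le_of_mem (hZ₀ : IsBaseCurve h c M Z₀) (hZ : IsNearCurve h ε δ Z₀ Z)
    (hγ : γ ∈ openStrip (5 * h / 2)) : ‖deriv Z γ - deriv Z₀ γ‖ ≤ 4 * ε / h := by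
  have hh := hZ₀.h_pos
  have hγ' : |γ.im| ≤ 5 * h / 2 := LT.lt.le hγ
  calc ‖deriv Z γ - deriv Z₀ γ‖ ≤ 2 * ε / (h / 2) :=
        hZ.norm_deriv_sub_le hZ₀ (by positivity) (by linarith [hZ.three_mul_h_le])
    _ = 4 * ε / h := by field_simp; ring

lemma norm_deriv_le_add_one (hZ₀ : IsBaseCurve h c M Z₀) (hε : IsSmallRadius h c ε)
    (hZ : IsNearCurve h ε δ Z₀ Z) (hγ : γ ∈ openStrip (5 * h / 2)) : ‖deriv Z γ‖ ≤ M + 1 := by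
  have hmem : γ ∈ openStrip (4 * h) :=
    openStrip_subset_openStrip (by linarith [hZ₀.h_pos]) hγ
  linarith [hZ.norm_deriv_sub_le_of_mem hZ₀ hγ, hZ₀.norm_deriv_le γ hmem,
    (hε.four_mul_div_le hZ₀.h_pos).1, norm_le_norm_add_norm_sub' (deriv Z γ) (deriv Z₀ γ)]

lemma splitArcChord (hZ₀ : IsBaseCurve h c M Z₀) (hε : IsSmallRadius h c ε)
    (hZ : IsNearCurve h ε δ Z₀ Z) : SplitArcChord (5 * h / 2) (c / 2) Z := by
  have hh := hZ₀.h_pos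
  have hle : 5 * h / 2 ≤ 4 * h := by linarith
  exact (hZ₀.arcChord.mono hle).of_norm_deriv_sub_le (by linarith [hZ₀.four_mul_h_le])
    (hZ₀.differentiableOn.mono (openStrip_subset_openStrip hle))
    (hZ.differentiableOn.mono (openStrip_subset_openStrip (by linarith [hZ.three_mul_h_le])))
    (fun γ hγ => hZ.norm_deriv_sub_le_of_mem hZ₀ hγ)
    (hε.four_mul_div_le hZ₀.h_pos).1 (hε.four_mul_div_le hZ₀.h_pos).2

lemma half_mul_le_norm_sin (hZ₀ : IsBaseCurve h c M Z₀) (hε : IsSmallRadius h c ε)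
    (hZ : IsNearCurve h ε δ Z₀ Z) (hσ : σ ^ 2 = -1) (hγ : γ ∈ openStrip δ) (hs : s ∈ openStrip δ)
    (him : h ≤ |γ.im - s.im|) :
    c * h / 2 ≤ ‖Complex.sin (charForm σ (Z γ - Z s) / 2)‖ := by
  have hsub := openStrip_subset_openStrip hZ.le_four_mul_h
  have hbase : c * h ≤ ‖Complex.sin (charForm σ (Z₀ γ - Z₀ s) / 2)‖ :=
    (mul_le_mul_of_nonneg_left him hZ₀.c_pos.le).trans
      (hZ₀.arcChord.mul_abs_im_sub_le hZ₀.c_pos.le hZ₀.periodic hσ (hsub hγ) (hsub hs))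
  have hclose : ‖charForm σ (Z γ - Z s) / 2 - charForm σ (Z₀ γ - Z₀ s) / 2‖ ≤ 2 * ε := by
    linarith [norm_charForm_half_sub_sub_le hσ Z Z₀ γ s, hZ.norm_sub_base_le γ hγ,
      hZ.norm_sub_base_le s hs]
  have hhalf := half_norm_sin_le_norm_sin_of_norm_sub_le
    (hclose.trans (by linarith [hε.mul_le_h, hZ₀.four_mul_h_le]))
    (hclose.trans (by linarith [hε.mul_le_mul_h, hε.pos]))
  linarith

lemma sin_ne_zero (hZ₀ : IsBaseCurve h c M Z₀) (hε : IsSmallRadius h c ε)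
    (hZ : IsNearCurve h ε δ Z₀ Z) (hσ : σ ^ 2 = -1) (hγ : γ ∈ openStrip δ) (hs : s ∈ openStrip δ)
    (him : h ≤ |γ.im - s.im|) : Complex.sin (charForm σ (Z γ - Z s) / 2) ≠ 0 :=
  norm_pos_iff.mp ((half_pos (mul_pos hZ₀.c_pos hZ₀.h_pos)).trans_le
    (hZ.half_mul_le_norm_sin hZ₀ hε hσ hγ hs him))

lemma norm_cot_le (hZ₀ : IsBaseCurve h c M Z₀) (hε : IsSmallRadius h c ε)
    (hZ : IsNearCurve h ε δ Z₀ Z) (hσ : σ ^ 2 = -1) (hγ : γ ∈ openStrip δ) (hs : s ∈ openStrip δ)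
    (him : h ≤ |γ.im - s.im|) :
    ‖Complex.cot (charForm σ (Z γ - Z s) / 2)‖ ≤ 1 + 2 / (c * h) :=
  (Muskat.norm_cot_le (half_pos (mul_pos hZ₀.c_pos hZ₀.h_pos))
    (hZ.half_mul_le_norm_sin hZ₀ hε hσ hγ hs him)).trans_eq (by rw [one_div_div])

lemma norm_splitKernel_le (hZ₀ : IsBaseCurve h c M Z₀) (hε : IsSmallRadius h c ε)
    (hZ : IsNearCurve h ε δ Z₀ Z) (hσ : σ ^ 2 = -1) (hγ : γ ∈ openStrip δ) (hy : |y| = 2 * h)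
    (hdist : h ≤ |γ.im - y|) (x : ℝ) :
    ‖splitKernel σ Z γ (x + y * Complex.I)‖ ≤ (1 + 2 / (c * h)) * (‖deriv Z γ‖ + (M + 1)) := by
  have hh := hZ₀.h_pos
  have hc := hZ₀.c_pos
  have hderiv : ‖deriv Z (x + y * Complex.I)‖ ≤ M + 1 :=
    hZ.norm_deriv_le_add_one hZ₀ hε (ofReal_add_mul_I_mem_openStrip (by linarith) x)
  rw [splitKernel, norm_smul]
  gcongr
  · exact hZ.norm_cot_le hZ₀ hε hσ hγ (hZ.ofReal_add_mul_I_mem hh hy x) (by simpa using hdist)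
  · exact (norm_sub_le _ _).trans (by linarith)

lemma norm_contourRHS_le (hZ₀ : IsBaseCurve h c M Z₀) (hε : IsSmallRadius h c ε)
    (hZ : IsNearCurve h ε δ Z₀ Z) (hγ : γ ∈ openStrip δ) :
    ‖contourRHS h Z γ‖ ≤ 7 * ((1 + 2 / (c * h)) * (‖deriv Z γ‖ + (M + 1))) := by
  have hline : ∀ σ : ℂ, σ ^ 2 = -1 → ‖lineIntegral σ Z γ (contourHeight h γ)‖ ≤
      7 * ((1 + 2 / (c * h)) * (‖deriv Z γ‖ + (M + 1))) := fun σ hσ =>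
    norm_integral_period_le (hZ.norm_splitKernel_le hZ₀ hε hσ hγ (abs_contourHeight hZ₀.h_pos γ)
      (lt_abs_im_sub_contourHeight hZ₀.h_pos γ).le)
  exact norm_half_smul_add_le (hline _ Complex.I_sq) (hline _ (by rw [neg_sq, Complex.I_sq]))

lemma continuous_splitKernel (hZ₀ : IsBaseCurve h c M Z₀) (hε : IsSmallRadius h c ε)
    (hZ : IsNearCurve h ε δ Z₀ Z) (hσ : σ ^ 2 = -1) (hγ : γ ∈ openStrip δ) (hy : |y| = 2 * h)
    (hdist : h ≤ |γ.im - y|) : Continuous fun x : ℝ => splitKernel σ Z γ (x + y * Complex.I) := by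
  have hmem := hZ.ofReal_add_mul_I_mem hZ₀.h_pos hy
  have hline : Continuous fun x : ℝ => (x + y * Complex.I : ℂ) := by fun_prop
  have hZc : Continuous fun x : ℝ => Z (x + y * Complex.I) :=
    hZ.differentiableOn.continuousOn.comp_continuous hline hmem
  have hZc' : Continuous fun x : ℝ => deriv Z (x + y * Complex.I) :=
    (hZ.differentiableOn.deriv (isOpen_openStrip _)).continuousOn.comp_continuous hline hmem
  rw [← continuousOn_univ]
  exact fun x _ => continuousWithinAt_cot_charForm_smul
    (continuous_const.sub hZc).continuousWithinAt (continuous_const.sub hZc').continuousWithinAt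
    (hZ.sin_ne_zero hZ₀ hε hσ hγ (hmem x) (by simpa using hdist))

end IsNearCurve

/-! ### Holomorphy of the nonlinearity -/

namespace IsNearCurve

variable {h c M ε δ y η : ℝ} {Z₀ Z W : ℂ → ℂ × ℂ} {γ σ : ℂ}

section Holomorphy

lemma exists_ball_norm_deriv_le (hZ₀ : IsBaseCurve h c M Z₀) (hZ : IsNearCurve h ε δ Z₀ Z)
    {U : Set ℂ} (hU : U ∈ 𝓝 γ) (hγ : γ ∈ openStrip δ) :
    ∃ d > 0, ball γ d ⊆ U ∩ openStrip δ ∧ ∀ w ∈ ball γ d, ‖deriv Z w‖ ≤ M + 2 * ε / d := by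
  obtain ⟨ρ, hρ, hball⟩ := Metric.mem_nhds_iff.mp hU
  have hγ' : 0 < δ - |γ.im| := sub_pos.mpr hγ
  set d := min ρ ((δ - |γ.im|) / 2)
  have hd0 : 0 < d := by positivity
  have hd2 : d ≤ (δ - |γ.im|) / 2 := min_le_right _ _
  refine ⟨d, hd0, subset_inter ((ball_subset_ball (min_le_left _ _)).trans hball)
    (ball_subset_openStrip (by linarith)), fun w hw => hZ.norm_deriv_le hZ₀ hd0 ?_⟩
  have him : |w.im| < |γ.im| + d :=
    ball_subset_openStrip le_rfl hw
  linarith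

lemma differentiableAt_lineIntegral (hZ₀ : IsBaseCurve h c M Z₀) (hε : IsSmallRadius h c ε)
    (hZ : IsNearCurve h ε δ Z₀ Z) (hσ : σ ^ 2 = -1) (hγ : γ ∈ openStrip δ) (hy : |y| = 2 * h)
    (hdist : h < |γ.im - y|) : DifferentiableAt ℂ (fun w => lineIntegral σ Z w y) γ := by
  have hh := hZ₀.h_pos
  have hc := hZ₀.c_pos
  have hopen : IsOpen {w : ℂ | h < |w.im - y|} := isOpen_lt continuous_const (by fun_prop)
  obtain ⟨d, hd, hsub, hderiv⟩ := hZ.exists_ball_norm_deriv_le hZ₀ (hopen.mem_nhds hdist) hγ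
  have hmem := hZ.ofReal_add_mul_I_mem hh hy
  have hfar : ∀ w ∈ ball γ d, h ≤ |w.im - y| := fun w hw => LT.lt.le (hsub hw).1
  have hstrip : ball γ d ⊆ openStrip δ := hsub.trans inter_subset_right
  refine (hasDerivAt_intervalIntegral_of_holomorphic
    (f := fun (x : ℝ) w => splitKernel σ Z w (x + y * Complex.I))
    (C := (1 + 2 / (c * h)) * ((M + 2 * ε / d) + (M + 1))) hd (fun x _ => ?_)
    (fun x _ w hw => ?_) fun w hw => ?_).differentiableAt
  · have hZd : DifferentiableOn ℂ Z (ball γ d) := hZ.differentiableOn.mono hstrip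
    have hL : DifferentiableOn ℂ (fun w => charForm σ (Z w - Z (x + y * Complex.I)) / 2)
        (ball γ d) := ((charForm σ).differentiable.comp_differentiableOn
          (hZd.sub_const _)).div_const 2
    unfold splitKernel Complex.cot
    exact (hL.ccos.fun_div hL.csin fun w hw => hZ.sin_ne_zero hZ₀ hε hσ (hstrip hw) (hmem x)
      (by simpa using hfar w hw)).fun_smul ((hZd.deriv isOpen_ball).sub_const _)
  · refine (hZ.norm_splitKernel_le hZ₀ hε hσ (hstrip hw) hy (hfar w hw) x).trans ?_
    gcongr
    exact hderiv w hw
  · exact (hZ.continuous_splitKernel hZ₀ hε hσ (hstrip hw) hy (hfar w hw)).continuousOn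

lemma contourRHS_eq_lineRHS (hZ₀ : IsBaseCurve h c M Z₀) (hε : IsSmallRadius h c ε)
    (hZ : IsNearCurve h ε δ Z₀ Z) (hγ : γ ∈ openStrip (5 * h / 2)) (hy : |y| = 2 * h) :
    contourRHS h Z γ = lineRHS Z γ y := by
  have hh := hZ₀.h_pos
  have hc : 0 < c / 2 := half_pos hZ₀.c_pos
  have hol : DifferentiableOn ℂ Z (openStrip (5 * h / 2)) :=
    hZ.differentiableOn.mono (openStrip_subset_openStrip (by linarith [hZ.three_mul_h_le]))
  have hac := hZ.splitArcChord hZ₀ hε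
  rw [contourRHS_eq_cMuskatRHS hh (by linarith) hc hol hZ.periodic hac hγ]
  exact cMuskatRHS_eq_lineIntegral hc hol hZ.periodic hac hγ (by linarith)

lemma eventually_contourRHS_eq (hZ₀ : IsBaseCurve h c M Z₀) (hε : IsSmallRadius h c ε)
    (hZ : IsNearCurve h ε δ Z₀ Z) (γ : ℂ) :
    ∀ᶠ w in 𝓝 γ, contourRHS h Z w = lineRHS Z w (contourHeight h γ) := by
  have hh := hZ₀.h_pos
  rcases lt_trichotomy γ.im 0 with hneg | hzero | hpos
  · filter_upwards [(isOpen_lt Complex.continuous_im continuous_const).mem_nhds hneg] with w hw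
    rw [contourRHS, contourHeight, contourHeight, if_neg (not_le.mpr hw), if_neg (not_le.mpr hneg)]
  · have hmem : γ ∈ openStrip (5 * h / 2) := by
      change |γ.im| < 5 * h / 2
      rw [hzero, abs_zero]
      positivity
    filter_upwards [(isOpen_openStrip _).mem_nhds hmem] with w hw
    exact hZ.contourRHS_eq_lineRHS hZ₀ hε hw (abs_contourHeight hh γ)
  · filter_upwards [(isOpen_lt continuous_const Complex.continuous_im).mem_nhds hpos] with w hw
    rw [contourRHS, contourHeight, contourHeight, if_pos (LT.lt.le hw), if_pos hpos.le]

lemma differentiableOn_contourRHS (hZ₀ : IsBaseCurve h c M Z₀) (hε : IsSmallRadius h c ε)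
    (hZ : IsNearCurve h ε δ Z₀ Z) : DifferentiableOn ℂ (contourRHS h Z) (openStrip δ) := by
  intro γ hγ
  have hline : ∀ σ : ℂ, σ ^ 2 = -1 →
      DifferentiableAt ℂ (fun w => lineIntegral σ Z w (contourHeight h γ)) γ := fun σ hσ =>
    hZ.differentiableAt_lineIntegral hZ₀ hε hσ hγ (abs_contourHeight hZ₀.h_pos γ)
      (lt_abs_im_sub_contourHeight hZ₀.h_pos γ)
  have hmean : DifferentiableAt ℂ (fun w => lineRHS Z w (contourHeight h γ)) γ :=
    ((hline _ Complex.I_sq).fun_add (hline _ (by rw [neg_sq, Complex.I_sq]))).fun_const_smul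
      (1 / 2 : ℂ)
  exact (hmean.congr_of_eventuallyEq
    (hZ.eventually_contourRHS_eq hZ₀ hε γ)).differentiableWithinAt

end Holomorphy

/-! ### Lipschitz bound for the nonlinearity -/

section Lipschitz

lemma norm_cot_sub_cot_le (hZ₀ : IsBaseCurve h c M Z₀) (hε : IsSmallRadius h c ε)
    (hZ : IsNearCurve h ε δ Z₀ Z) (hW : IsNearCurve h ε δ Z₀ W) (hσ : σ ^ 2 = -1) {s : ℂ}
    (hγ : γ ∈ openStrip δ) (hs : s ∈ openStrip δ) (him : h ≤ |γ.im - s.im|) :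
    ‖Complex.cot (charForm σ (Z γ - Z s) / 2) - Complex.cot (charForm σ (W γ - W s) / 2)‖ ≤
      8 / (c * h) ^ 2 * (‖Z γ - W γ‖ + ‖Z s - W s‖) := by
  have hpos : 0 < c * h := mul_pos hZ₀.c_pos hZ₀.h_pos
  have hdiff := norm_charForm_half_sub_sub_le hσ Z W γ s
  have hclose : ∀ w ∈ openStrip δ, ‖Z w - W w‖ ≤ 2 * ε := fun w hw => by
    linarith [norm_sub_le_norm_sub_add_norm_sub (Z w) (Z₀ w) (W w), hZ.norm_sub_base_le w hw,
      hW.norm_sub_base_le w hw, norm_sub_rev (Z₀ w) (W w)]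
  calc _ ≤ 2 / (c * h / 2) ^ 2 * ‖charForm σ (Z γ - Z s) / 2 - charForm σ (W γ - W s) / 2‖ :=
        Muskat.norm_cot_sub_cot_le (half_pos hpos) (hZ.half_mul_le_norm_sin hZ₀ hε hσ hγ hs him)
          (hW.half_mul_le_norm_sin hZ₀ hε hσ hγ hs him)
          (by linarith [hclose γ hγ, hclose s hs, hε.mul_le_h, hε.pos, hZ₀.four_mul_h_le])
    _ = 8 / (c * h) ^ 2 * ‖charForm σ (Z γ - Z s) / 2 - charForm σ (W γ - W s) / 2‖ := by
        congr 1
        field_simp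
        norm_num
    _ ≤ _ := by gcongr

lemma norm_splitKernel_sub_le (hZ₀ : IsBaseCurve h c M Z₀) (hε : IsSmallRadius h c ε)
    (hZ : IsNearCurve h ε δ Z₀ Z) (hW : IsNearCurve h ε δ Z₀ W)
    (hη : ∀ w ∈ openStrip (5 * h / 2), ‖Z w - W w‖ ≤ η) (hσ : σ ^ 2 = -1)
    (hγ : γ ∈ openStrip δ) (hy : |y| = 2 * h) (hdist : h ≤ |γ.im - y|) (x : ℝ) :
    ‖splitKernel σ Z γ (x + y * Complex.I) - splitKernel σ W γ (x + y * Complex.I)‖ ≤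
      8 / (c * h) ^ 2 * (‖Z γ - W γ‖ + η) * (‖deriv Z γ‖ + (M + 1)) +
      (1 + 2 / (c * h)) * (‖deriv Z γ - deriv W γ‖ + 4 * η / h) := by
  have hh := hZ₀.h_pos
  have hc := hZ₀.c_pos
  set s : ℂ := x + y * Complex.I with hs
  have him : s.im = y := by simp [hs]
  have hmid : s ∈ openStrip (5 * h / 2) := ofReal_add_mul_I_mem_openStrip (by linarith) x
  have hmem : s ∈ openStrip δ := hZ.ofReal_add_mul_I_mem hh hy x
  have hdist' : h ≤ |γ.im - s.im| := by rwa [him]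
  have hball : ball s (h / 2) ⊆ openStrip (5 * h / 2) :=
    ball_subset_openStrip (by rw [him, hy]; linarith)
  have hballδ : ball s (h / 2) ⊆ openStrip δ :=
    hball.trans (openStrip_subset_openStrip (by linarith [hZ.three_mul_h_le]))
  have hderiv : ‖deriv Z s - deriv W s‖ ≤ 4 * η / h :=
    (norm_deriv_sub_deriv_le (by positivity) (hZ.differentiableOn.mono hballδ)
      (hW.differentiableOn.mono hballδ) fun w hw => hη w (hball hw)).trans_eq (by field_simp; ring)
  have hη0 : 0 ≤ η := (norm_nonneg _).trans (hη s hmid)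
  have hsplit : splitKernel σ Z γ s - splitKernel σ W γ s =
      (Complex.cot (charForm σ (Z γ - Z s) / 2) - Complex.cot (charForm σ (W γ - W s) / 2)) •
        (deriv Z γ - deriv Z s) +
      Complex.cot (charForm σ (W γ - W s) / 2) •
        ((deriv Z γ - deriv W γ) - (deriv Z s - deriv W s)) := by
    unfold splitKernel
    module
  rw [hsplit]
  refine (norm_add_le _ _).trans ?_
  rw [norm_smul, norm_smul]
  gcongr
  · exact (hZ.norm_cot_sub_cot_le hZ₀ hε hW hσ hγ hmem hdist').trans (by gcongr; exact hη s hmid)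
  · exact (norm_sub_le _ _).trans (by linarith [hZ.norm_deriv_le_add_one hZ₀ hε hmid])
  · exact hW.norm_cot_le hZ₀ hε hσ hγ hmem hdist'
  · exact (norm_sub_le _ _).trans (by linarith)

theorem norm_contourRHS_sub_le (hZ₀ : IsBaseCurve h c M Z₀) (hε : IsSmallRadius h c ε)
    (hZ : IsNearCurve h ε δ Z₀ Z) (hW : IsNearCurve h ε δ Z₀ W)
    (hη : ∀ w ∈ openStrip (5 * h / 2), ‖Z w - W w‖ ≤ η) (hγ : γ ∈ openStrip δ) :
    ‖contourRHS h Z γ - contourRHS h W γ‖ ≤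
      7 * (8 / (c * h) ^ 2 * (‖Z γ - W γ‖ + η) * (‖deriv Z γ‖ + (M + 1)) +
      (1 + 2 / (c * h)) * (‖deriv Z γ - deriv W γ‖ + 4 * η / h)) := by
  have hy := abs_contourHeight hZ₀.h_pos γ
  have hdist := (lt_abs_im_sub_contourHeight hZ₀.h_pos γ).le
  have hline : ∀ σ : ℂ, σ ^ 2 = -1 →
      ‖lineIntegral σ Z γ (contourHeight h γ) - lineIntegral σ W γ (contourHeight h γ)‖ ≤
      7 * (8 / (c * h) ^ 2 * (‖Z γ - W γ‖ + η) * (‖deriv Z γ‖ + (M + 1)) +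
      (1 + 2 / (c * h)) * (‖deriv Z γ - deriv W γ‖ + 4 * η / h)) := fun σ hσ => by
    rw [lineIntegral, lineIntegral, ← intervalIntegral.integral_sub
      ((hZ.continuous_splitKernel hZ₀ hε hσ hγ hy hdist).intervalIntegrable _ _)
      ((hW.continuous_splitKernel hZ₀ hε hσ hγ hy hdist).intervalIntegrable _ _)]
    exact norm_integral_period_le (hZ.norm_splitKernel_sub_le hZ₀ hε hW hη hσ hγ hy hdist)
  rw [contourRHS, contourRHS, lineRHS, lineRHS, ← smul_sub, add_sub_add_comm]
  exact norm_half_smul_add_le (hline _ Complex.I_sq) (hline _ (by rw [neg_sq, Complex.I_sq]))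

end Lipschitz

/-! ### Continuity of the nonlinearity along a family of curves -/

section TimeDependence

variable {Z : ℝ → ℂ → ℂ × ℂ} {I : Set ℝ}

lemma continuousOn_deriv (hZ₀ : IsBaseCurve h c M Z₀) (hZ : ∀ t ∈ I, IsNearCurve h ε δ Z₀ (Z t))
    (hcont : ∀ γ ∈ openStrip δ, ContinuousOn (fun t => Z t γ) I) (hγ : γ ∈ openStrip δ) :
    ContinuousOn (fun t => deriv (Z t) γ) I := by
  rcases I.eq_empty_or_nonempty with rfl | ⟨t₀, ht₀⟩
  · exact continuousOn_empty _
  have hγ' : 0 < δ - |γ.im| := sub_pos.mpr hγ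
  set d := (δ - |γ.im|) / 2 with hd
  have hclosed : closedBall γ d ⊆ openStrip δ :=
    (closedBall_subset_ball (by linarith)).trans
      (ball_subset_openStrip (d := 2 * d) (by linarith))
  have hball : ball γ d ⊆ openStrip δ := ball_subset_closedBall.trans hclosed
  obtain ⟨C, hC⟩ := (isCompact_closedBall γ d).exists_bound_of_continuousOn
    ((hZ₀.differentiableOn.mono (openStrip_subset_openStrip
      (hZ t₀ ht₀).le_four_mul_h)).continuousOn.mono hclosed)
  refine continuousOn_deriv_of_norm_le (C := C + ε) (half_pos hγ')
    (fun t ht => (hZ t ht).differentiableOn.mono hball) (fun t ht w hw => ?_)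
    fun w hw => hcont w (hball hw)
  linarith [(hZ t ht).norm_sub_base_le w (hball hw), hC w (ball_subset_closedBall hw),
    norm_le_norm_add_norm_sub' (Z t w) (Z₀ w)]

lemma continuousOn_lineIntegral (hZ₀ : IsBaseCurve h c M Z₀) (hε : IsSmallRadius h c ε)
    (hZ : ∀ t ∈ I, IsNearCurve h ε δ Z₀ (Z t))
    (hcont : ∀ γ ∈ openStrip δ, ContinuousOn (fun t => Z t γ) I) (hσ : σ ^ 2 = -1)
    (hγ : γ ∈ openStrip δ) (hy : |y| = 2 * h) (hdist : h ≤ |γ.im - y|) :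
    ContinuousOn (fun t => lineIntegral σ (Z t) γ y) I := by
  intro t₀ ht₀
  have hh := hZ₀.h_pos
  have hc := hZ₀.c_pos
  have hγ' : 0 < δ - |γ.im| := sub_pos.mpr hγ
  refine intervalIntegral.continuousWithinAt_of_dominated_interval
    (bound := fun _ => (1 + 2 / (c * h)) * ((M + 2 * ε / (δ - |γ.im|)) + (M + 1))) ?_ ?_
    intervalIntegrable_const ?_
  · filter_upwards [self_mem_nhdsWithin] with t ht
    exact ((hZ t ht).continuous_splitKernel hZ₀ hε hσ hγ hy hdist).aestronglyMeasurable
  · filter_upwards [self_mem_nhdsWithin] with t ht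
    refine Eventually.of_forall fun x _ =>
      ((hZ t ht).norm_splitKernel_le hZ₀ hε hσ hγ hy hdist x).trans ?_
    gcongr
    exact (hZ t ht).norm_deriv_le hZ₀ hγ' (by linarith)
  · refine Eventually.of_forall fun x _ => ?_
    have hmem := (hZ t₀ ht₀).ofReal_add_mul_I_mem hh hy x
    exact continuousWithinAt_cot_charForm_smul ((hcont γ hγ t₀ ht₀).sub (hcont _ hmem t₀ ht₀))
      ((continuousOn_deriv hZ₀ hZ hcont hγ t₀ ht₀).sub
        (continuousOn_deriv hZ₀ hZ hcont hmem t₀ ht₀))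
      ((hZ t₀ ht₀).sin_ne_zero hZ₀ hε hσ hγ hmem (by simpa using hdist))

theorem continuousOn_contourRHS (hZ₀ : IsBaseCurve h c M Z₀) (hε : IsSmallRadius h c ε)
    (hZ : ∀ t ∈ I, IsNearCurve h ε δ Z₀ (Z t))
    (hcont : ∀ γ ∈ openStrip δ, ContinuousOn (fun t => Z t γ) I) (hγ : γ ∈ openStrip δ) :
    ContinuousOn (fun t => contourRHS h (Z t) γ) I := by
  have hline : ∀ σ : ℂ, σ ^ 2 = -1 →
      ContinuousOn (fun t => lineIntegral σ (Z t) γ (contourHeight h γ)) I := fun σ hσ =>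
    continuousOn_lineIntegral hZ₀ hε hZ hcont hσ hγ (abs_contourHeight hZ₀.h_pos γ)
      (lt_abs_im_sub_contourHeight hZ₀.h_pos γ).le
  exact ((hline _ Complex.I_sq).fun_add (hline _ (by rw [neg_sq, Complex.I_sq]))).fun_const_smul
    (1 / 2 : ℂ)

end TimeDependence

end IsNearCurve

/-! ### The shrinking strips -/

section Cone

variable {h K t τ A : ℝ} {γ : ℂ}

/-- The weight, singular at the boundary of the strip of half-width `4h - K|t|`, in which the
Cauchy–Kowalewski iteration is controlled. -/
def coneWeight (h K t : ℝ) (γ : ℂ) : ℝ := (√(4 * h - K * |t| - |γ.im|))⁻¹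

/-- Agreement of two families of curves on the cone `|Im γ| < 4h - K|t|`, `K|t| < h`. -/
def EqOnCone (h K : ℝ) (Z W : ℝ → ℂ → ℂ × ℂ) : Prop :=
  ∀ t, K * |t| < h → ∀ γ ∈ openStrip (4 * h - K * |t|), Z t γ = W t γ

/-- Two families of curves are at distance at most `Δ` in the norm weighted by `coneWeight`. -/
def ConeDistLE (h K Δ : ℝ) (Z W : ℝ → ℂ → ℂ × ℂ) : Prop :=
  ∀ t, K * |t| < h → ∀ γ ∈ openStrip (4 * h - K * |t|), ‖Z t γ - W t γ‖ ≤ Δ * coneWeight h K t γ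

lemma coneWeight_nonneg : 0 ≤ coneWeight h K t γ := inv_nonneg.mpr (Real.sqrt_nonneg _)

lemma one_le_coneWeight (hK : 0 ≤ K) (hh : 4 * h ≤ 1) (hγ : γ ∈ openStrip (4 * h - K * |t|)) :
    1 ≤ coneWeight h K t γ := by
  have hpos : 0 < 4 * h - K * |t| - |γ.im| := sub_pos.mpr hγ
  refine (one_le_inv₀ (Real.sqrt_pos.mpr hpos)).mpr (Real.sqrt_le_one.mpr ?_)
  linarith [mul_nonneg hK (abs_nonneg t), abs_nonneg γ.im]

lemma coneWeight_le_coneWeight (hK : 0 ≤ K) (hτ : |τ| ≤ |t|)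
    (hγ : γ ∈ openStrip (4 * h - K * |t|)) : coneWeight h K τ γ ≤ coneWeight h K t γ :=
  inv_anti₀ (Real.sqrt_pos.mpr (sub_pos.mpr hγ))
    (Real.sqrt_le_sqrt (by linarith [mul_le_mul_of_nonneg_left hτ hK]))

lemma openStrip_cone_anti (hK : 0 ≤ K) (hτ : |τ| ≤ |t|) :
    openStrip (4 * h - K * |t|) ⊆ openStrip (4 * h - K * |τ|) :=
  openStrip_subset_openStrip (by linarith [mul_le_mul_of_nonneg_left hτ hK])

lemma exists_ball_coneWeight_le (hγ : γ ∈ openStrip (4 * h - K * |t|)) :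
    ∃ d > 0, d⁻¹ = 2 * coneWeight h K t γ ^ 2 ∧ ball γ d ⊆ openStrip (4 * h - K * |t|) ∧
      ∀ w ∈ ball γ d, coneWeight h K t w ≤ 2 * coneWeight h K t γ := by
  have hpos : 0 < 4 * h - K * |t| - |γ.im| := sub_pos.mpr hγ
  refine ⟨(4 * h - K * |t| - |γ.im|) / 2, half_pos hpos, ?_,
    ball_subset_openStrip (by linarith), fun w hw => ?_⟩
  · rw [coneWeight, inv_pow, Real.sq_sqrt hpos.le, inv_div, div_eq_mul_inv]
  · have him : |w.im| < |γ.im| + (4 * h - K * |t| - |γ.im|) / 2 := ball_subset_openStrip le_rfl hw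
    have hsqrt : √(4 * h - K * |t| - |γ.im|) / 2 ≤ √(4 * h - K * |t| - |w.im|) := by
      refine Real.le_sqrt_of_sq_le ?_
      rw [div_pow, Real.sq_sqrt hpos.le]
      linarith
    calc coneWeight h K t w ≤ (√(4 * h - K * |t| - |γ.im|) / 2)⁻¹ :=
          inv_anti₀ (half_pos (Real.sqrt_pos.mpr hpos)) hsqrt
      _ = 2 * coneWeight h K t γ := by rw [inv_div, coneWeight, div_eq_mul_inv]

lemma norm_deriv_le_mul_coneWeight_pow_three {E : Type*} [NormedAddCommGroup E] [NormedSpace ℂ E]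
    {f : ℂ → E} (hA : 0 ≤ A)
    (hf : DifferentiableOn ℂ f (openStrip (4 * h - K * |t|)))
    (hb : ∀ w ∈ openStrip (4 * h - K * |t|), ‖f w‖ ≤ A * coneWeight h K t w)
    (hγ : γ ∈ openStrip (4 * h - K * |t|)) :
    ‖deriv f γ‖ ≤ 8 * A * coneWeight h K t γ ^ 3 := by
  obtain ⟨d, hd, hinv, hball, hweight⟩ := exists_ball_coneWeight_le hγ
  calc ‖deriv f γ‖ ≤ 2 * (A * (2 * coneWeight h K t γ)) / d :=
        norm_deriv_le_of_forall_mem_ball_norm_le hd (hf.mono hball) fun w hw =>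
          (hb w (hball hw)).trans (mul_le_mul_of_nonneg_left (hweight w hw) hA)
    _ = 8 * A * coneWeight h K t γ ^ 3 := by rw [div_eq_mul_inv, hinv]; ring

lemma norm_integral_le_of_le_coneWeight_pow_three {E : Type*} [NormedAddCommGroup E]
    [NormedSpace ℝ E] {G : ℝ → E} (hK : 0 < K) (hA : 0 ≤ A)
    (hγ : γ ∈ openStrip (4 * h - K * |t|))
    (hG : ∀ τ, |τ| ≤ |t| → ‖G τ‖ ≤ A * coneWeight h K τ γ ^ 3) :
    ‖∫ τ in (0 : ℝ)..t, G τ‖ ≤ 2 * A / K * coneWeight h K t γ := by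
  have hpos : 0 < 4 * h - K * |t| - |γ.im| := sub_pos.mpr hγ
  simp only [coneWeight, inv_pow, sub_right_comm _ _ |γ.im|, ← div_eq_mul_inv] at hG ⊢
  exact norm_integral_zero_le_of_norm_le_div_sqrt_pow_three hK hA (by linarith) hG

lemma norm_integral_le_of_le_coneWeight {E : Type*} [NormedAddCommGroup E]
    [NormedSpace ℝ E] {G : ℝ → E} (hK : 0 < K) (hA : 0 ≤ A) (hh : 4 * h ≤ 1)
    (hγ : γ ∈ openStrip (4 * h - K * |t|))
    (hG : ∀ τ, |τ| ≤ |t| → ‖G τ‖ ≤ A * coneWeight h K τ γ) :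
    ‖∫ τ in (0 : ℝ)..t, G τ‖ ≤ 2 * A / K := by
  have hpos : 0 < 4 * h - K * |t| - |γ.im| := sub_pos.mpr hγ
  simp only [coneWeight, sub_right_comm _ _ |γ.im|, ← div_eq_mul_inv] at hG
  calc _ ≤ 2 * A / K * √(4 * h - |γ.im|) :=
        norm_integral_zero_le_of_norm_le_div_sqrt hK hA (by linarith) hG
    _ ≤ 2 * A / K := mul_le_of_le_one_right (by positivity)
        (Real.sqrt_le_one.mpr (by linarith [abs_nonneg γ.im]))

lemma abs_le_abs_of_mem_uIcc_zero (hτ : τ ∈ uIcc 0 t) : |τ| ≤ |t| := by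
  simpa only [sub_zero] using abs_sub_left_of_mem_uIcc hτ

lemma uIcc_zero_subset_Icc (t : ℝ) : uIcc 0 t ⊆ Icc (-|t|) |t| := fun _ hτ =>
  abs_le.mp (abs_le_abs_of_mem_uIcc_zero hτ)

end Cone

/-! ### The Picard map -/

section PicardMap

/-- The constant of the bound on the nonlinearity in terms of `coneWeight`. -/
def rhsBound (h c M : ℝ) : ℝ := 7 * ((1 + 2 / (c * h)) * (2 * M + 2))

/-- The constant of the Lipschitz bound on the nonlinearity in terms of `coneWeight`. -/
def rhsLipschitz (h c M : ℝ) : ℝ :=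
  7 * (8 / (c * h) ^ 2 * (1 + (√(h / 2))⁻¹) * (2 * M + 2) +
    (1 + 2 / (c * h)) * (8 + 4 * (√(h / 2))⁻¹ / h))

/-- The parameters of the iteration: a base curve, a radius `ε` and a speed `K` of shrinking of the
strips, large enough for the Picard map to preserve the bounds and to contract by `1/2`. -/
structure IsPicardSetup (h c M ε K : ℝ) (Z₀ : ℂ → ℂ × ℂ) : Prop where
  base : IsBaseCurve h c M Z₀
  small : IsSmallRadius h c ε
  K_pos : 0 < K
  two_mul_rhsBound_le : 2 * rhsBound h c M ≤ ε * K
  sixteen_mul_rhsBound_le : 16 * rhsBound h c M ≤ K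
  four_mul_rhsLipschitz_le : 4 * rhsLipschitz h c M ≤ K

/-- The families of curves on which the Picard iteration runs: on the cone they are continuous in
time, `ε`-close to the base curve, and their derivative is controlled by `coneWeight`. -/
structure IsConeFamily (h M ε K : ℝ) (Z₀ : ℂ → ℂ × ℂ) (Z : ℝ → ℂ → ℂ × ℂ) : Prop where
  near : ∀ t, K * |t| < h → IsNearCurve h ε (4 * h - K * |t|) Z₀ (Z t)
  continuousOn : ∀ t, K * |t| < h → ∀ γ ∈ openStrip (4 * h - K * |t|),
    ContinuousOn (fun τ => Z τ γ) (Icc (-|t|) |t|)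
  norm_deriv_le : ∀ t, K * |t| < h → ∀ γ ∈ openStrip (4 * h - K * |t|),
    ‖deriv (Z t) γ‖ ≤ (M + 1) * coneWeight h K t γ

/-- The Picard map of the Muskat equation with initial curve `Z₀`. -/
def picardMap (h : ℝ) (Z₀ : ℂ → ℂ × ℂ) (Z : ℝ → ℂ → ℂ × ℂ) (t : ℝ) (γ : ℂ) : ℂ × ℂ :=
  Z₀ γ + ∫ τ in (0 : ℝ)..t, contourRHS h (Z τ) γ

variable {h c M ε K Δ t : ℝ} {Z₀ : ℂ → ℂ × ℂ} {Z W : ℝ → ℂ → ℂ × ℂ} {γ : ℂ}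

lemma IsBaseCurve.rhsBound_nonneg (hZ₀ : IsBaseCurve h c M Z₀) : 0 ≤ rhsBound h c M := by
  have hh := hZ₀.h_pos
  have hc := hZ₀.c_pos
  have hM := hZ₀.M_nonneg
  unfold rhsBound
  positivity

lemma IsBaseCurve.rhsLipschitz_nonneg (hZ₀ : IsBaseCurve h c M Z₀) : 0 ≤ rhsLipschitz h c M := by
  have hh := hZ₀.h_pos
  have hc := hZ₀.c_pos
  have hM := hZ₀.M_nonneg
  unfold rhsLipschitz
  positivity

lemma IsBaseCurve.exists_isPicardSetup (hZ₀ : IsBaseCurve h c M Z₀) (hε : IsSmallRadius h c ε)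
    (L : ℝ) : ∃ K, L ≤ K ∧ IsPicardSetup h c M ε K Z₀ := by
  have hlarge : ∀ᶠ K in atTop, L ≤ K ∧ 0 < K ∧ 2 * rhsBound h c M / ε ≤ K ∧
      16 * rhsBound h c M ≤ K ∧ 4 * rhsLipschitz h c M ≤ K := by
    filter_upwards [eventually_ge_atTop L, eventually_gt_atTop 0,
      eventually_ge_atTop (2 * rhsBound h c M / ε), eventually_ge_atTop (16 * rhsBound h c M),
      eventually_ge_atTop (4 * rhsLipschitz h c M)] with K hL hpos hself hderiv hlip
    exact ⟨hL, hpos, hself, hderiv, hlip⟩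
  obtain ⟨K, hL, hpos, hself, hderiv, hlip⟩ := hlarge.exists
  exact ⟨K, hL, hZ₀, hε, hpos, (div_le_iff₀' hε.pos).mp hself, hderiv, hlip⟩

namespace IsPicardSetup

lemma K_mul_abs_nonneg (S : IsPicardSetup h c M ε K Z₀) (t : ℝ) : 0 ≤ K * |t| :=
  mul_nonneg S.K_pos.le (abs_nonneg t)

lemma K_mul_abs_lt (S : IsPicardSetup h c M ε K Z₀) {τ : ℝ} (ht : K * |t| < h) (hτ : |τ| ≤ |t|) :
    K * |τ| < h :=
  (mul_le_mul_of_nonneg_left hτ S.K_pos.le).trans_lt ht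

lemma one_le_coneWeight (S : IsPicardSetup h c M ε K Z₀) (hγ : γ ∈ openStrip (4 * h - K * |t|)) :
    1 ≤ coneWeight h K t γ :=
  Muskat.one_le_coneWeight S.K_pos.le S.base.four_mul_h_le hγ

lemma openStrip_subset_base (S : IsPicardSetup h c M ε K Z₀) (t : ℝ) :
    openStrip (4 * h - K * |t|) ⊆ openStrip (4 * h) :=
  openStrip_subset_openStrip (by linarith [S.K_mul_abs_nonneg t])

lemma norm_contourRHS_le (S : IsPicardSetup h c M ε K Z₀) (hZ : IsConeFamily h M ε K Z₀ Z)
    (ht : K * |t| < h) (hγ : γ ∈ openStrip (4 * h - K * |t|)) :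
    ‖contourRHS h (Z t) γ‖ ≤ rhsBound h c M * coneWeight h K t γ := by
  have hh := S.base.h_pos
  have hc := S.base.c_pos
  have hM : 0 ≤ M := S.base.M_nonneg
  have hderiv := hZ.norm_deriv_le t ht γ hγ
  have hw := S.one_le_coneWeight hγ
  refine ((hZ.near t ht).norm_contourRHS_le S.base S.small hγ).trans ?_
  rw [rhsBound, mul_assoc, mul_assoc]
  gcongr
  nlinarith

lemma norm_deriv_contourRHS_le (S : IsPicardSetup h c M ε K Z₀) (hZ : IsConeFamily h M ε K Z₀ Z)
    (ht : K * |t| < h) (hγ : γ ∈ openStrip (4 * h - K * |t|)) :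
    ‖deriv (contourRHS h (Z t)) γ‖ ≤ 8 * rhsBound h c M * coneWeight h K t γ ^ 3 :=
  norm_deriv_le_mul_coneWeight_pow_three S.base.rhsBound_nonneg
    ((hZ.near t ht).differentiableOn_contourRHS S.base S.small)
    (fun _ hw => S.norm_contourRHS_le hZ ht hw) hγ

lemma continuousOn_contourRHS (S : IsPicardSetup h c M ε K Z₀) (hZ : IsConeFamily h M ε K Z₀ Z)
    (ht : K * |t| < h) (hγ : γ ∈ openStrip (4 * h - K * |t|)) :
    ContinuousOn (fun τ => contourRHS h (Z τ) γ) (Icc (-|t|) |t|) := by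
  refine IsNearCurve.continuousOn_contourRHS S.base S.small (fun τ hτ => ?_)
    (fun w hw => hZ.continuousOn t ht w hw) hγ
  have hτ' : |τ| ≤ |t| := abs_le.mpr hτ
  exact (hZ.near τ (S.K_mul_abs_lt ht hτ')).mono (by linarith)
    (by linarith [mul_le_mul_of_nonneg_left hτ' S.K_pos.le])

lemma intervalIntegrable_contourRHS (S : IsPicardSetup h c M ε K Z₀)
    (hZ : IsConeFamily h M ε K Z₀ Z) (ht : K * |t| < h) (hγ : γ ∈ openStrip (4 * h - K * |t|)) :
    IntervalIntegrable (fun τ => contourRHS h (Z τ) γ) volume 0 t :=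
  ((S.continuousOn_contourRHS hZ ht hγ).mono (uIcc_zero_subset_Icc t)).intervalIntegrable

lemma hasDerivAt_picardMap (S : IsPicardSetup h c M ε K Z₀) (hZ : IsConeFamily h M ε K Z₀ Z)
    (ht : K * |t| < h) (hγ : γ ∈ openStrip (4 * h - K * |t|)) :
    HasDerivAt (picardMap h Z₀ Z t)
      (deriv Z₀ γ + ∫ τ in (0 : ℝ)..t, deriv (contourRHS h (Z τ)) γ) γ := by
  obtain ⟨d, hd, -, hball, hweight⟩ := exists_ball_coneWeight_le hγ
  have hmono : ∀ τ ∈ uIcc 0 t, K * |τ| < h ∧ ball γ d ⊆ openStrip (4 * h - K * |τ|) :=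
    fun τ hτ => ⟨S.K_mul_abs_lt ht (abs_le_abs_of_mem_uIcc_zero hτ),
      hball.trans (openStrip_cone_anti S.K_pos.le (abs_le_abs_of_mem_uIcc_zero hτ))⟩
  refine (S.base.differentiableOn.differentiableAt ((isOpen_openStrip _).mem_nhds
    (S.openStrip_subset_base t hγ))).hasDerivAt.fun_add
    (hasDerivAt_intervalIntegral_of_holomorphic (f := fun τ w => contourRHS h (Z τ) w)
      (C := rhsBound h c M * (2 * coneWeight h K t γ)) hd (fun τ hτ => ?_) (fun τ hτ w hw => ?_)
      fun w hw => (S.continuousOn_contourRHS hZ ht (hball hw)).mono (uIcc_zero_subset_Icc t))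
  · exact ((hZ.near τ (hmono τ hτ).1).differentiableOn_contourRHS S.base S.small).mono
      (hmono τ hτ).2
  · refine (S.norm_contourRHS_le hZ (hmono τ hτ).1 ((hmono τ hτ).2 hw)).trans
      (mul_le_mul_of_nonneg_left ?_ S.base.rhsBound_nonneg)
    exact (coneWeight_le_coneWeight S.K_pos.le (abs_le_abs_of_mem_uIcc_zero hτ) (hball hw)).trans
      (hweight w hw)

lemma isNearCurve_picardMap (S : IsPicardSetup h c M ε K Z₀) (hZ : IsConeFamily h M ε K Z₀ Z)
    (ht : K * |t| < h) : IsNearCurve h ε (4 * h - K * |t|) Z₀ (picardMap h Z₀ Z t) where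
  three_mul_h_le := by linarith
  le_four_mul_h := by linarith [S.K_mul_abs_nonneg t]
  differentiableOn γ hγ :=
    (S.hasDerivAt_picardMap hZ ht hγ).differentiableAt.differentiableWithinAt
  periodic γ := by
    have hint : (∫ τ in (0 : ℝ)..t, contourRHS h (Z τ) (γ + ((2 * π : ℝ) : ℂ))) =
        ∫ τ in (0 : ℝ)..t, contourRHS h (Z τ) γ := by
      refine intervalIntegral.integral_congr fun τ hτ => ?_
      have hper := (hZ.near τ (S.K_mul_abs_lt ht (abs_le_abs_of_mem_uIcc_zero hτ))).periodic
      simpa using contourRHS_add_int_mul_two_pi h hper γ 1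
    rw [picardMap, picardMap, hint, S.base.periodic γ, add_right_comm]
  norm_sub_base_le γ hγ := by
    rw [picardMap, add_sub_cancel_left]
    refine (norm_integral_le_of_le_coneWeight S.K_pos S.base.rhsBound_nonneg S.base.four_mul_h_le hγ
      fun τ hτ => S.norm_contourRHS_le hZ (S.K_mul_abs_lt ht hτ)
        (openStrip_cone_anti S.K_pos.le hτ hγ)).trans ?_
    rw [div_le_iff₀ S.K_pos]
    exact S.two_mul_rhsBound_le

lemma norm_deriv_picardMap_le (S : IsPicardSetup h c M ε K Z₀) (hZ : IsConeFamily h M ε K Z₀ Z)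
    (ht : K * |t| < h) (hγ : γ ∈ openStrip (4 * h - K * |t|)) :
    ‖deriv (picardMap h Z₀ Z t) γ‖ ≤ (M + 1) * coneWeight h K t γ := by
  have hint : ‖∫ τ in (0 : ℝ)..t, deriv (contourRHS h (Z τ)) γ‖ ≤
      2 * (8 * rhsBound h c M) / K * coneWeight h K t γ :=
    norm_integral_le_of_le_coneWeight_pow_three S.K_pos
      (mul_nonneg (by norm_num) S.base.rhsBound_nonneg) hγ
      fun τ hτ => S.norm_deriv_contourRHS_le hZ (S.K_mul_abs_lt ht hτ)
        (openStrip_cone_anti S.K_pos.le hτ hγ)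
  have hfrac : 2 * (8 * rhsBound h c M) / K ≤ 1 := by
    rw [div_le_one S.K_pos]
    linarith [S.sixteen_mul_rhsBound_le]
  have hbase : ‖deriv Z₀ γ‖ ≤ M * coneWeight h K t γ :=
    (S.base.norm_deriv_le γ (S.openStrip_subset_base t hγ)).trans
      (le_mul_of_one_le_right S.base.M_nonneg (S.one_le_coneWeight hγ))
  calc ‖deriv (picardMap h Z₀ Z t) γ‖
      ≤ M * coneWeight h K t γ + 2 * (8 * rhsBound h c M) / K * coneWeight h K t γ := by
        rw [(S.hasDerivAt_picardMap hZ ht hγ).deriv]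
        exact norm_add_le_of_le hbase hint
    _ ≤ M * coneWeight h K t γ + 1 * coneWeight h K t γ := by
        gcongr
        exact coneWeight_nonneg
    _ = (M + 1) * coneWeight h K t γ := by ring

lemma isConeFamily_picardMap (S : IsPicardSetup h c M ε K Z₀) (hZ : IsConeFamily h M ε K Z₀ Z) :
    IsConeFamily h M ε K Z₀ (picardMap h Z₀ Z) where
  near _ ht := S.isNearCurve_picardMap hZ ht
  continuousOn t ht γ hγ := by
    have hIcc : Icc (-|t|) |t| = uIcc (-|t|) |t| :=
      (uIcc_of_le (by linarith [abs_nonneg t])).symm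
    have hcont := S.continuousOn_contourRHS hZ ht hγ
    rw [hIcc] at hcont ⊢
    refine continuousOn_const.add
      (intervalIntegral.continuousOn_primitive_interval' hcont.intervalIntegrable ?_)
    rw [← hIcc]
    simp
  norm_deriv_le _ ht _ hγ := S.norm_deriv_picardMap_le hZ ht hγ

end IsPicardSetup

end PicardMap

/-! ### Contraction and the fixed point -/

section Contraction

variable {h c M ε K Δ t : ℝ} {Z₀ : ℂ → ℂ × ℂ} {Z W : ℝ → ℂ → ℂ × ℂ} {γ : ℂ}

lemma IsConeFamily.norm_deriv_sub_le (hZ : IsConeFamily h M ε K Z₀ Z)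
    (hW : IsConeFamily h M ε K Z₀ W) (hΔ : 0 ≤ Δ) (hZW : ConeDistLE h K Δ Z W)
    (ht : K * |t| < h) (hγ : γ ∈ openStrip (4 * h - K * |t|)) :
    ‖deriv (Z t) γ - deriv (W t) γ‖ ≤ 8 * Δ * coneWeight h K t γ ^ 3 := by
  have hnhds := (isOpen_openStrip _).mem_nhds hγ
  rw [← deriv_fun_sub ((hZ.near t ht).differentiableOn.differentiableAt hnhds)
    ((hW.near t ht).differentiableOn.differentiableAt hnhds)]
  exact norm_deriv_le_mul_coneWeight_pow_three hΔ
    ((hZ.near t ht).differentiableOn.fun_sub (hW.near t ht).differentiableOn) (hZW t ht) hγ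

namespace IsPicardSetup

lemma norm_sub_le_of_coneDistLE (S : IsPicardSetup h c M ε K Z₀) (hΔ : 0 ≤ Δ)
    (hZW : ConeDistLE h K Δ Z W) (ht : K * |t| < h) (hγ : γ ∈ openStrip (5 * h / 2)) :
    ‖Z t γ - W t γ‖ ≤ Δ * (√(h / 2))⁻¹ := by
  have hh := S.base.h_pos
  have him : |γ.im| < 5 * h / 2 := hγ
  refine (hZW t ht γ (openStrip_subset_openStrip (by linarith) hγ)).trans
    (mul_le_mul_of_nonneg_left ?_ hΔ)
  exact inv_anti₀ (Real.sqrt_pos.mpr (half_pos hh)) (Real.sqrt_le_sqrt (by linarith))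

lemma norm_contourRHS_sub_le (S : IsPicardSetup h c M ε K Z₀) (hZ : IsConeFamily h M ε K Z₀ Z)
    (hW : IsConeFamily h M ε K Z₀ W) (hΔ : 0 ≤ Δ) (hZW : ConeDistLE h K Δ Z W)
    (ht : K * |t| < h) (hγ : γ ∈ openStrip (4 * h - K * |t|)) :
    ‖contourRHS h (Z t) γ - contourRHS h (W t) γ‖ ≤
      rhsLipschitz h c M * Δ * coneWeight h K t γ ^ 3 := by
  have hh := S.base.h_pos
  have hc := S.base.c_pos
  have hM := S.base.M_nonneg
  have hlip := (hZ.near t ht).norm_contourRHS_sub_le S.base S.small (hW.near t ht)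
    (fun _ => S.norm_sub_le_of_coneDistLE hΔ hZW ht) hγ
  have hderiv := hZ.norm_deriv_sub_le hW hΔ hZW ht hγ
  have hdist := hZW t ht γ hγ
  have hZ' := hZ.norm_deriv_le t ht γ hγ
  have hw := S.one_le_coneWeight hγ
  set w := coneWeight h K t γ
  set p := (√(h / 2))⁻¹ with hp
  have hp0 : 0 ≤ p := by positivity
  have hprod : (‖Z t γ - W t γ‖ + Δ * p) * (‖deriv (Z t) γ‖ + (M + 1)) ≤
      Δ * (1 + p) * (2 * M + 2) * w ^ 3 := by
    calc _ ≤ (Δ * w + Δ * p * w) * ((M + 1) * w + (M + 1) * w) :=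
          mul_le_mul (add_le_add hdist (le_mul_of_one_le_right (by positivity) hw))
            (add_le_add hZ' (le_mul_of_one_le_right (by positivity) hw)) (by positivity)
            (by positivity)
      _ = Δ * (1 + p) * (2 * M + 2) * w ^ 2 := by ring
      _ ≤ Δ * (1 + p) * (2 * M + 2) * w ^ 3 := by gcongr; norm_num
  have hlin : 4 * (Δ * p) / h ≤ 4 * (Δ * p) / h * w ^ 3 :=
    le_mul_of_one_le_right (by positivity) (one_le_pow₀ hw)
  calc _ ≤ 7 * (8 / (c * h) ^ 2 * (Δ * (1 + p) * (2 * M + 2) * w ^ 3) +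
        (1 + 2 / (c * h)) * (8 * Δ * w ^ 3 + 4 * (Δ * p) / h * w ^ 3)) := by
        rw [mul_assoc (8 / (c * h) ^ 2)] at hlip
        exact hlip.trans (by gcongr)
    _ = rhsLipschitz h c M * Δ * w ^ 3 := by rw [rhsLipschitz, ← hp]; ring

lemma coneDistLE_picardMap (S : IsPicardSetup h c M ε K Z₀) (hZ : IsConeFamily h M ε K Z₀ Z)
    (hW : IsConeFamily h M ε K Z₀ W) (hΔ : 0 ≤ Δ) (hZW : ConeDistLE h K Δ Z W) :
    ConeDistLE h K (Δ / 2) (picardMap h Z₀ Z) (picardMap h Z₀ W) := by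
  intro t ht γ hγ
  have hint : ‖∫ τ in (0 : ℝ)..t, (contourRHS h (Z τ) γ - contourRHS h (W τ) γ)‖ ≤
      2 * (rhsLipschitz h c M * Δ) / K * coneWeight h K t γ :=
    norm_integral_le_of_le_coneWeight_pow_three S.K_pos
      (mul_nonneg S.base.rhsLipschitz_nonneg hΔ) hγ fun τ hτ =>
        S.norm_contourRHS_sub_le hZ hW hΔ hZW (S.K_mul_abs_lt ht hτ)
          (openStrip_cone_anti S.K_pos.le hτ hγ)
  rw [picardMap, picardMap, add_sub_add_left_eq_sub, ← intervalIntegral.integral_sub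
    (S.intervalIntegrable_contourRHS hZ ht hγ) (S.intervalIntegrable_contourRHS hW ht hγ)]
  refine hint.trans (mul_le_mul_of_nonneg_right ?_ coneWeight_nonneg)
  rw [div_le_iff₀ S.K_pos]
  nlinarith [S.four_mul_rhsLipschitz_le]

end IsPicardSetup

lemma tendsto_mul_half_pow_mul (A q : ℝ) :
    Tendsto (fun n : ℕ => A * (1 / 2) ^ n * q) atTop (𝓝 0) := by
  simpa using ((tendsto_pow_atTop_nhds_zero_of_lt_one (r := (1 / 2 : ℝ)) (by norm_num)
    (by norm_num)).const_mul A).mul_const q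

lemma IsPicardSetup.eqOnCone (S : IsPicardSetup h c M ε K Z₀) (hZ : IsConeFamily h M ε K Z₀ Z)
    (hW : IsConeFamily h M ε K Z₀ W) (hZfix : EqOnCone h K Z (picardMap h Z₀ Z))
    (hWfix : EqOnCone h K W (picardMap h Z₀ W)) : EqOnCone h K Z W := by
  have hε := S.small.pos
  have hdist : ∀ n : ℕ, ConeDistLE h K (2 * ε * (1 / 2) ^ n) Z W := by
    intro n
    induction n with
    | zero =>
      intro t ht γ hγ
      have hZW : ‖Z t γ - W t γ‖ ≤ ε + ε := by
        rw [← sub_sub_sub_cancel_right _ _ (Z₀ γ)]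
        exact norm_sub_le_of_le ((hZ.near t ht).norm_sub_base_le γ hγ)
          ((hW.near t ht).norm_sub_base_le γ hγ)
      rw [pow_zero, mul_one, two_mul]
      exact hZW.trans (le_mul_of_one_le_right (by positivity) (S.one_le_coneWeight hγ))
    | succ n ih =>
      intro t ht γ hγ
      rw [hZfix t ht γ hγ, hWfix t ht γ hγ, pow_succ, mul_one_div, ← mul_div_assoc]
      exact S.coneDistLE_picardMap hZ hW (by positivity) ih t ht γ hγ
  exact fun t ht γ hγ => sub_eq_zero.mp (norm_le_zero_iff.mp
    (ge_of_tendsto' (tendsto_mul_half_pow_mul _ _) fun n => hdist n t ht γ hγ))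

/-- The Picard iterates, started at the stationary family `Z₀`. -/
def picardIterate (h : ℝ) (Z₀ : ℂ → ℂ × ℂ) (n : ℕ) : ℝ → ℂ → ℂ × ℂ :=
  (picardMap h Z₀)^[n] fun _ => Z₀

lemma picardIterate_succ (h : ℝ) (Z₀ : ℂ → ℂ × ℂ) (n : ℕ) :
    picardIterate h Z₀ (n + 1) = picardMap h Z₀ (picardIterate h Z₀ n) :=
  Function.iterate_succ_apply' _ _ _

open Classical in
/-- The limit of the Picard iterates on the shrinking strips. It is extended by `Z₀`, which keeps it
a periodic curve on all of `ℂ`. -/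
def picardLimit (h K : ℝ) (Z₀ : ℂ → ℂ × ℂ) (t : ℝ) (γ : ℂ) : ℂ × ℂ :=
  if γ ∈ openStrip (4 * h - K * |t|) then limUnder atTop (fun n => picardIterate h Z₀ n t γ)
  else Z₀ γ

namespace IsPicardSetup

lemma isConeFamily_const (S : IsPicardSetup h c M ε K Z₀) :
    IsConeFamily h M ε K Z₀ fun _ => Z₀ where
  near t ht :=
    { three_mul_h_le := by linarith
      le_four_mul_h := by linarith [S.K_mul_abs_nonneg t]
      differentiableOn := S.base.differentiableOn.mono (S.openStrip_subset_base t)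
      periodic := S.base.periodic
      norm_sub_base_le := fun γ _ => by simpa only [sub_self, norm_zero] using S.small.pos.le }
  continuousOn _ _ _ _ := continuousOn_const
  norm_deriv_le t _ γ hγ := by
    have hM := S.base.M_nonneg
    refine (S.base.norm_deriv_le γ (S.openStrip_subset_base t hγ)).trans ?_
    exact (by linarith : M ≤ M + 1).trans
      (le_mul_of_one_le_right (by linarith) (S.one_le_coneWeight hγ))

lemma isConeFamily_picardIterate (S : IsPicardSetup h c M ε K Z₀) (n : ℕ) :
    IsConeFamily h M ε K Z₀ (picardIterate h Z₀ n) := by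
  induction n with
  | zero => exact S.isConeFamily_const
  | succ n ih =>
    rw [picardIterate_succ]
    exact S.isConeFamily_picardMap ih

lemma coneDistLE_picardIterate_succ (S : IsPicardSetup h c M ε K Z₀) (n : ℕ) :
    ConeDistLE h K (ε * (1 / 2) ^ n) (picardIterate h Z₀ (n + 1)) (picardIterate h Z₀ n) := by
  have hε := S.small.pos
  induction n with
  | zero =>
    intro t ht γ hγ
    have hclose := ((S.isConeFamily_picardIterate 1).near t ht).norm_sub_base_le γ hγ
    rw [pow_zero, mul_one]
    exact hclose.trans (le_mul_of_one_le_right hε.le (S.one_le_coneWeight hγ))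
  | succ n ih =>
    rw [picardIterate_succ h Z₀ (n + 1), pow_succ, mul_one_div, ← mul_div_assoc]
    nth_rw 2 [picardIterate_succ]
    exact S.coneDistLE_picardMap (S.isConeFamily_picardIterate (n + 1))
      (S.isConeFamily_picardIterate n) (by positivity) ih

lemma dist_picardIterate_le (S : IsPicardSetup h c M ε K Z₀) (ht : K * |t| < h)
    (hγ : γ ∈ openStrip (4 * h - K * |t|)) (n : ℕ) :
    dist (picardIterate h Z₀ n t γ) (picardIterate h Z₀ (n + 1) t γ) ≤
      ε * coneWeight h K t γ * (1 / 2) ^ n := by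
  rw [dist_comm, dist_eq_norm, mul_right_comm]
  exact S.coneDistLE_picardIterate_succ n t ht γ hγ

lemma tendsto_picardIterate (S : IsPicardSetup h c M ε K Z₀) (ht : K * |t| < h)
    (hγ : γ ∈ openStrip (4 * h - K * |t|)) :
    Tendsto (fun n => picardIterate h Z₀ n t γ) atTop (𝓝 (picardLimit h K Z₀ t γ)) := by
  rw [picardLimit, if_pos hγ]
  exact (cauchySeq_of_le_geometric _ _ (by norm_num)
    (S.dist_picardIterate_le ht hγ)).tendsto_limUnder

lemma coneDistLE_picardIterate_picardLimit (S : IsPicardSetup h c M ε K Z₀) (n : ℕ) :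
    ConeDistLE h K (2 * ε * (1 / 2) ^ n) (picardIterate h Z₀ n) (picardLimit h K Z₀) := by
  intro t ht γ hγ
  rw [← dist_eq_norm]
  calc _ ≤ ε * coneWeight h K t γ * (1 / 2) ^ n / (1 - 1 / 2) :=
        dist_le_of_le_geometric_of_tendsto _ _ (by norm_num) (S.dist_picardIterate_le ht hγ)
          (S.tendsto_picardIterate ht hγ) n
    _ = 2 * ε * (1 / 2) ^ n * coneWeight h K t γ := by ring

lemma tendstoLocallyUniformlyOn_picardIterate (S : IsPicardSetup h c M ε K Z₀)
    (ht : K * |t| < h) :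
    TendstoLocallyUniformlyOn (fun n => picardIterate h Z₀ n t) (picardLimit h K Z₀ t) atTop
      (openStrip (4 * h - K * |t|)) := by
  have hε := S.small.pos
  rw [Metric.tendstoLocallyUniformlyOn_iff]
  intro e he γ hγ
  obtain ⟨d, hd, -, hball, hweight⟩ := exists_ball_coneWeight_le hγ
  refine ⟨ball γ d, mem_nhdsWithin_of_mem_nhds (ball_mem_nhds _ hd), ?_⟩
  have hlim := tendsto_mul_half_pow_mul (2 * ε) (2 * coneWeight h K t γ)
  filter_upwards [hlim.eventually_lt_const he] with n hn w hw
  rw [dist_comm, dist_eq_norm]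
  exact ((S.coneDistLE_picardIterate_picardLimit n t ht w (hball hw)).trans
    (mul_le_mul_of_nonneg_left (hweight w hw) (by positivity))).trans_lt hn

lemma tendstoUniformlyOn_picardIterate_time (S : IsPicardSetup h c M ε K Z₀)
    (ht : K * |t| < h) (hγ : γ ∈ openStrip (4 * h - K * |t|)) :
    TendstoUniformlyOn (fun n τ => picardIterate h Z₀ n τ γ) (fun τ => picardLimit h K Z₀ τ γ)
      atTop (Icc (-|t|) |t|) := by
  have hε := S.small.pos
  rw [Metric.tendstoUniformlyOn_iff]
  intro e he
  filter_upwards [(tendsto_mul_half_pow_mul (2 * ε) (coneWeight h K t γ)).eventually_lt_const he]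
    with n hn τ hτ
  have hτt : |τ| ≤ |t| := abs_le.mpr hτ
  rw [dist_comm, dist_eq_norm]
  exact ((S.coneDistLE_picardIterate_picardLimit n τ (S.K_mul_abs_lt ht hτt) γ
    (openStrip_cone_anti S.K_pos.le hτt hγ)).trans (mul_le_mul_of_nonneg_left
      (coneWeight_le_coneWeight S.K_pos.le hτt hγ) (by positivity))).trans_lt hn

lemma cPerCurve_picardLimit (S : IsPicardSetup h c M ε K Z₀) (ht : K * |t| < h) :
    cPerCurve (picardLimit h K Z₀ t) := by
  intro γ
  by_cases hγ : γ ∈ openStrip (4 * h - K * |t|)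
  · refine tendsto_nhds_unique (S.tendsto_picardIterate ht (add_ofReal_mem_openStrip hγ _)) ?_
    exact ((S.tendsto_picardIterate ht hγ).add_const _).congr fun n =>
      (((S.isConeFamily_picardIterate n).near t ht).periodic γ).symm
  · have hγ' : γ + ((2 * π : ℝ) : ℂ) ∉ openStrip (4 * h - K * |t|) := by
      simpa [openStrip] using hγ
    rw [picardLimit, picardLimit, if_neg hγ, if_neg hγ']
    exact S.base.periodic γ

lemma isConeFamily_picardLimit (S : IsPicardSetup h c M ε K Z₀) :
    IsConeFamily h M ε K Z₀ (picardLimit h K Z₀) where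
  near t ht :=
    { three_mul_h_le := by linarith
      le_four_mul_h := by linarith [S.K_mul_abs_nonneg t]
      differentiableOn := (S.tendstoLocallyUniformlyOn_picardIterate ht).differentiableOn
        (.of_forall fun n => ((S.isConeFamily_picardIterate n).near t ht).differentiableOn)
        (isOpen_openStrip _)
      periodic := S.cPerCurve_picardLimit ht
      norm_sub_base_le := fun γ hγ =>
        le_of_tendsto' ((S.tendsto_picardIterate ht hγ).sub_const (Z₀ γ)).norm fun n =>
          ((S.isConeFamily_picardIterate n).near t ht).norm_sub_base_le γ hγ }
  continuousOn t ht γ hγ := (S.tendstoUniformlyOn_picardIterate_time ht hγ).continuousOn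
    (.of_forall fun n => (S.isConeFamily_picardIterate n).continuousOn t ht γ hγ)
  norm_deriv_le t ht γ hγ := by
    have hderiv := ((S.tendstoLocallyUniformlyOn_picardIterate ht).deriv
      (.of_forall fun n => ((S.isConeFamily_picardIterate n).near t ht).differentiableOn)
      (isOpen_openStrip _)).tendsto_at hγ
    exact le_of_tendsto' hderiv.norm fun n =>
      (S.isConeFamily_picardIterate n).norm_deriv_le t ht γ hγ

lemma eqOnCone_picardMap_picardLimit (S : IsPicardSetup h c M ε K Z₀) :
    EqOnCone h K (picardLimit h K Z₀) (picardMap h Z₀ (picardLimit h K Z₀)) := by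
  intro t ht γ hγ
  have hε := S.small.pos
  refine tendsto_nhds_unique ((tendsto_add_atTop_iff_nat 1).mpr (S.tendsto_picardIterate ht hγ)) ?_
  rw [tendsto_iff_norm_sub_tendsto_zero]
  refine squeeze_zero (fun _ => norm_nonneg _) (fun n => ?_)
    (tendsto_mul_half_pow_mul ε (coneWeight h K t γ))
  rw [picardIterate_succ, ← mul_div_cancel_left₀ (ε * (1 / 2) ^ n) (two_ne_zero' ℝ), ← mul_assoc]
  exact S.coneDistLE_picardMap (S.isConeFamily_picardIterate n) S.isConeFamily_picardLimit
    (by positivity) (S.coneDistLE_picardIterate_picardLimit n) t ht γ hγ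

end IsPicardSetup

end Contraction

/-! ### Existence -/

section Existence

variable {h c M ε K s t : ℝ} {Z₀ : ℂ → ℂ × ℂ} {Z : ℝ → ℂ → ℂ × ℂ} {γ : ℂ}

namespace IsPicardSetup

lemma hasDerivAt_picardMap_time (S : IsPicardSetup h c M ε K Z₀) (hZ : IsConeFamily h M ε K Z₀ Z)
    (hs : K * |s| < h) (hγ : γ ∈ openStrip (4 * h - K * |s|)) (hts : |t| < |s|) :
    HasDerivAt (fun τ => picardMap h Z₀ Z τ γ) (contourRHS h (Z t) γ) t := by
  have hcont : ContinuousOn (fun τ => contourRHS h (Z τ) γ) (Ioo (-|s|) |s|) :=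
    (S.continuousOn_contourRHS hZ hs hγ).mono Ioo_subset_Icc_self
  have ht : t ∈ Ioo (-|s|) |s| := abs_lt.mp hts
  exact (intervalIntegral.integral_hasDerivAt_right
    (S.intervalIntegrable_contourRHS hZ (S.K_mul_abs_lt hs hts.le)
      (openStrip_cone_anti S.K_pos.le hts.le hγ))
    (hcont.stronglyMeasurableAtFilter isOpen_Ioo t ht)
    (hcont.continuousAt (isOpen_Ioo.mem_nhds ht))).const_add (Z₀ γ)

lemma K_mul_abs_le_half (S : IsPicardSetup h c M ε K Z₀)
    (ht : t ∈ Icc (-(h / (2 * K))) (h / (2 * K))) : K * |t| ≤ h / 2 := by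
  have hK := S.K_pos
  calc K * |t| ≤ K * (h / (2 * K)) := mul_le_mul_of_nonneg_left (abs_le.mpr ht) hK.le
    _ = h / 2 := by field_simp

lemma stripC_subset_openStrip (S : IsPicardSetup h c M ε K Z₀) (ht : K * |t| < h) :
    stripC (h / 2) ⊆ openStrip (4 * h - K * |t|) :=
  Muskat.stripC_subset_openStrip (by linarith [S.base.h_pos])

lemma contourRHS_eq_cMuskatRHS (S : IsPicardSetup h c M ε K Z₀) (hZ : IsConeFamily h M ε K Z₀ Z)
    (ht : K * |t| < h) (hγ : γ ∈ stripC (h / 2)) : contourRHS h (Z t) γ = cMuskatRHS (Z t) γ := by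
  have hh := S.base.h_pos
  have hnear := hZ.near t ht
  exact Muskat.contourRHS_eq_cMuskatRHS (ρ := 5 * h / 2) hh (by linarith) (half_pos S.base.c_pos)
    (hnear.differentiableOn.mono (openStrip_subset_openStrip (by linarith))) hnear.periodic
    (hnear.splitArcChord S.base S.small) (Muskat.stripC_subset_openStrip (by linarith) hγ)

lemma hasDerivWithinAt_of_eqOnCone (S : IsPicardSetup h c M ε K Z₀)
    (hZ : IsConeFamily h M ε K Z₀ Z) (hfix : EqOnCone h K Z (picardMap h Z₀ Z))
    (ht : t ∈ Icc (-(h / (2 * K))) (h / (2 * K))) (hγ : γ ∈ stripC (h / 2)) :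
    HasDerivWithinAt (fun τ => Z τ γ) (cMuskatRHS (Z t) γ)
      (Icc (-(h / (2 * K))) (h / (2 * K))) t := by
  have hh := S.base.h_pos
  have hK := S.K_pos
  have hlt : ∀ τ ∈ Icc (-(h / (2 * K))) (h / (2 * K)), K * |τ| < h := fun τ hτ =>
    (S.K_mul_abs_le_half hτ).trans_lt (half_lt_self hh)
  have hs : K * |3 * h / (4 * K)| = 3 * h / 4 := by
    rw [abs_of_pos (by positivity)]
    field_simp
  have hs_lt : K * |3 * h / (4 * K)| < h := by linarith
  have hts : |t| < |3 * h / (4 * K)| :=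
    lt_of_mul_lt_mul_left (by linarith [S.K_mul_abs_le_half ht]) hK.le
  rw [← S.contourRHS_eq_cMuskatRHS hZ (hlt t ht) hγ]
  exact (S.hasDerivAt_picardMap_time hZ hs_lt (S.stripC_subset_openStrip hs_lt hγ)
    hts).hasDerivWithinAt.congr
      (fun τ hτ => hfix τ (hlt τ hτ) γ (S.stripC_subset_openStrip (hlt τ hτ) hγ))
      (hfix t (hlt t ht) γ (S.stripC_subset_openStrip (hlt t ht) hγ))

lemma isCKSol (S : IsPicardSetup h c M ε K Z₀) (hZ : IsConeFamily h M ε K Z₀ Z)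
    (hfix : EqOnCone h K Z (picardMap h Z₀ Z)) : IsCKSol (h / 2) (h / (2 * K)) Z₀ Z := by
  have hh := S.base.h_pos
  have hlt : ∀ t ∈ Icc (-(h / (2 * K))) (h / (2 * K)), K * |t| < h := fun t ht =>
    (S.K_mul_abs_le_half ht).trans_lt (half_lt_self hh)
  refine ⟨fun t ht γ hγ => ?_, fun t ht => (hZ.near t (hlt t ht)).periodic, fun γ hγ t ht => ?_,
    fun γ hγ => ?_, fun t ht γ hγ => S.hasDerivWithinAt_of_eqOnCone hZ hfix ht hγ, fun t ht => ?_⟩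
  · exact (hZ.near t (hlt t ht)).differentiableOn.differentiableAt
      ((isOpen_openStrip _).mem_nhds (S.stripC_subset_openStrip (hlt t ht) hγ))
  · exact (S.hasDerivWithinAt_of_eqOnCone hZ hfix ht hγ).continuousWithinAt
  · have h0 : K * |(0 : ℝ)| < h := by rwa [abs_zero, mul_zero]
    rw [hfix 0 h0 γ (S.stripC_subset_openStrip h0 hγ), picardMap, intervalIntegral.integral_same,
      add_zero]
  · have hnear := hZ.near t (hlt t ht)
    exact (hnear.splitArcChord S.base S.small).cArcChordOn (half_pos S.base.c_pos) (by linarith)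
      hnear.periodic

end IsPicardSetup

theorem exists_isCKSol {r₀ : ℝ} (hr₀ : 0 < r₀)
    (hol : ∀ w ∈ stripC r₀, DifferentiableAt ℂ Z₀ w) (hper : cPerCurve Z₀)
    (hac : cArcChordOn Z₀ (stripC r₀)) :
    ∃ T > 0, ∃ r : ℝ, 0 < r ∧ r < r₀ ∧ ∃ Z : ℝ → ℂ → ℂ × ℂ, IsCKSol r T Z₀ Z := by
  obtain ⟨h, c, M, hhr, hbase⟩ := exists_isBaseCurve hr₀ hr₀ hol hper hac
  have hh := hbase.h_pos
  obtain ⟨ε, hε⟩ := exists_isSmallRadius hh hbase.c_pos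
  obtain ⟨K, -, S⟩ := hbase.exists_isPicardSetup hε 0
  have hK := S.K_pos
  exact ⟨h / (2 * K), by positivity, h / 2, half_pos hh, by linarith, picardLimit h K Z₀,
    S.isCKSol S.isConeFamily_picardLimit S.eqOnCone_picardMap_picardLimit⟩

end Existence

/-! ### Bounds uniform in time from pointwise continuity in time -/

section UniformBounds

lemma one_add_norm_le_exp_mul_of_norm_deriv_le {E : Type*} [NormedAddCommGroup E]
    [NormedSpace ℂ E] {u : ℂ → E} {U : Set ℂ} {K : ℝ} (hU : IsOpen U) (hconv : Convex ℝ U)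
    (hu : DifferentiableOn ℂ u U) (hderiv : ∀ γ ∈ U, ‖deriv u γ‖ ≤ K * (1 + ‖u γ‖)) {c w : ℂ}
    (hc : c ∈ U) (hw : w ∈ U) : 1 + ‖u w‖ ≤ Real.exp (K * ‖w - c‖) * (1 + ‖u c‖) := by
  have hmem : ∀ s ∈ Icc (0 : ℝ) 1, c + s * (w - c) ∈ U := fun s hs => by
    simpa using hconv.add_smul_sub_mem hc hw hs
  have hpath : ∀ s ∈ Icc (0 : ℝ) 1, HasDerivAt (fun s : ℝ => u (c + s * (w - c)))
      ((w - c) • deriv u (c + s * (w - c))) s := fun s hs => by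
    have hline : HasDerivAt (fun s : ℝ => c + s * (w - c)) (w - c) s := by
      simpa using ((hasDerivAt_id (s : ℂ)).comp_ofReal.mul_const (w - c)).const_add c
    exact (hu.differentiableAt (hU.mem_nhds (hmem s hs))).hasDerivAt.scomp s hline
  have hgronwall := norm_le_gronwallBound_of_norm_deriv_right_le (δ := ‖u c‖)
    (K := K * ‖w - c‖) (ε := K * ‖w - c‖)
    (fun s hs => (hpath s hs).continuousAt.continuousWithinAt)
    (fun s hs => (hpath s (Ico_subset_Icc_self hs)).hasDerivWithinAt) (by simp)
    (fun s hs => by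
      rw [norm_smul]
      linarith [mul_le_mul_of_nonneg_left (hderiv _ (hmem s (Ico_subset_Icc_self hs)))
        (norm_nonneg (w - c))]) 1 (by simp)
  rw [Complex.ofReal_one, one_mul, add_sub_cancel, sub_zero] at hgronwall
  rcases eq_or_ne (K * ‖w - c‖) 0 with hK | hK
  · rw [hK, gronwallBound_K0] at hgronwall
    rw [hK, Real.exp_zero]
    linarith
  · simp only [gronwallBound_of_K_ne_0 hK, div_self hK, mul_one, one_mul] at hgronwall
    linarith

lemma exists_isOpen_forall_norm_le {X Y E : Type*} [TopologicalSpace X] [TopologicalSpace Y]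
    [BaireSpace Y] [Nonempty Y] [SeminormedAddCommGroup E] {s : Set X} (hs : IsCompact s)
    {f : Y → X → E} (hfst : ∀ x ∈ s, Continuous fun y => f y x)
    (hsnd : ∀ y, ContinuousOn (f y) s) :
    ∃ U : Set Y, IsOpen U ∧ U.Nonempty ∧ ∃ C : ℝ, ∀ y ∈ U, ∀ x ∈ s, ‖f y x‖ ≤ C := by
  have hclosed : ∀ n : ℕ, IsClosed {y | ∀ x ∈ s, ‖f y x‖ ≤ n} := fun n => by
    simp only [ofPred_forall]
    exact isClosed_biInter fun x hx => isClosed_le (hfst x hx).norm continuous_const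
  have hcover : ⋃ n : ℕ, {y | ∀ x ∈ s, ‖f y x‖ ≤ n} = univ := by
    refine eq_univ_of_forall fun y => mem_iUnion.mpr ?_
    obtain ⟨C, hC⟩ := hs.exists_bound_of_continuousOn (hsnd y)
    obtain ⟨n, hn⟩ := exists_nat_ge C
    exact ⟨n, fun x hx => (hC x hx).trans hn⟩
  obtain ⟨n, hn⟩ := nonempty_interior_of_iUnion_of_closed hclosed hcover
  exact ⟨_, isOpen_interior, hn, n, fun y hy => interior_subset hy⟩

/-- A holomorphic function on the strip of half-width `r`, periodic up to a translation, whose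
values at two points of the same horizontal line differ by a multiple of `2π` only if the points
do. The arc-chord condition gives this for each characteristic form of a curve. -/
structure IsHorizontallyInjective (r : ℝ) (P : ℂ → ℂ) : Prop where
  differentiableOn : DifferentiableOn ℂ P (openStrip r)
  map_add_int_mul_two_pi : ∀ (γ : ℂ) (n : ℤ),
    P (γ + ((n * (2 * π) : ℝ) : ℂ)) = P γ + ((n * (2 * π) : ℝ) : ℂ)
  sub_ne_int_mul_two_pi : ∀ γ ∈ openStrip r, ∀ β : ℝ, distTZ β ≠ 0 → ∀ n : ℤ,
    P γ - P (γ - β) ≠ n * (2 * π)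

/-- The increment of `P` over a horizontal segment of length `β`, in units of `2π`: for a
horizontally injective `P` it omits the integers, so that Landau's inequality applies. -/
def normalizedIncrement (P : ℂ → ℂ) (β : ℝ) (γ : ℂ) : ℂ := (P γ - P (γ - β)) / (2 * π)

lemma normalizedIncrement_add (P : ℂ → ℂ) (x y : ℝ) (γ : ℂ) :
    normalizedIncrement P (x + y) γ =
      normalizedIncrement P x γ + normalizedIncrement P y (γ - x) := by
  simp only [normalizedIncrement, Complex.ofReal_add, sub_add_eq_sub_sub]
  ring

lemma two_mul_pi_ne_zero : (2 * π : ℂ) ≠ 0 := by exact_mod_cast Real.two_pi_pos.ne'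

variable {P : ℂ → ℂ} {r : ℝ} {γ : ℂ}

lemma norm_normalizedIncrement_le_of_mem_Icc {δ D : ℝ} (hδ : 0 ≤ δ)
    (hD : ∀ x ∈ Icc 0 δ, ∀ γ ∈ openStrip r, ‖normalizedIncrement P x γ‖ ≤ D) (k : ℕ) :
    ∀ x ∈ Icc 0 (k * δ), ∀ γ ∈ openStrip r, ‖normalizedIncrement P x γ‖ ≤ k * D := by
  induction k with
  | zero =>
    intro x hx γ _
    obtain rfl : x = 0 := by simpa using hx
    simp [normalizedIncrement]
  | succ k ih =>
    intro x hx γ hγ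
    have hD0 : 0 ≤ D := (norm_nonneg _).trans (hD 0 ⟨le_rfl, hδ⟩ γ hγ)
    have hxle : x ≤ k * δ + δ := by simpa [add_mul] using hx.2
    rcases le_total x (k * δ) with hle | hge
    · push_cast
      linarith [ih x ⟨hx.1, hle⟩ γ hγ]
    · have hlast := hD (x - k * δ) ⟨by linarith, by linarith⟩ _
        (sub_ofReal_mem_openStrip hγ (k * δ))
      have hfirst := ih (k * δ) ⟨by positivity, le_rfl⟩ γ hγ
      rw [← add_sub_cancel (k * δ) x, normalizedIncrement_add]
      push_cast at hlast ⊢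
      linarith [norm_add_le (normalizedIncrement P (k * δ) γ)
        (normalizedIncrement P (x - k * δ) (γ - k * δ))]

namespace IsHorizontallyInjective

lemma differentiableOn_normalizedIncrement (hP : IsHorizontallyInjective r P) (β : ℝ) :
    DifferentiableOn ℂ (normalizedIncrement P β) (openStrip r) :=
  (hP.differentiableOn.sub (hP.differentiableOn.comp (by fun_prop)
    fun _ hw => sub_ofReal_mem_openStrip hw β)).div_const _

lemma normalizedIncrement_add_int_mul_two_pi (hP : IsHorizontallyInjective r P) (β : ℝ) (γ : ℂ)
    (n : ℤ) : normalizedIncrement P β (γ + ((n * (2 * π) : ℝ) : ℂ)) =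
      normalizedIncrement P β γ := by
  rw [normalizedIncrement, add_sub_right_comm, hP.map_add_int_mul_two_pi,
    hP.map_add_int_mul_two_pi, add_sub_add_right_eq_sub, normalizedIncrement]

lemma normalizedIncrement_eq_of_distTZ_eq_zero (hP : IsHorizontallyInjective r P) {β : ℝ}
    (hβ : distTZ β = 0) (γ w : ℂ) : normalizedIncrement P β γ = normalizedIncrement P β w := by
  have hround : β = (round (β / (2 * π)) : ℤ) * (2 * π) := by
    linarith [abs_eq_zero.mp hβ]
  have hconst : ∀ w, P w - P (w - β) = β := fun w => by
    have hmap := hP.map_add_int_mul_two_pi (w - β) (round (β / (2 * π)))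
    rw [← hround, sub_add_cancel] at hmap
    rw [hmap, add_sub_cancel_left]
  rw [normalizedIncrement, hconst, normalizedIncrement, hconst]

lemma norm_deriv_normalizedIncrement_le (hP : IsHorizontallyInjective r P) (hr : 0 < r) {β : ℝ}
    (hβ : distTZ β ≠ 0) (hγ : γ ∈ openStrip (3 * r / 4)) :
    ‖deriv (normalizedIncrement P β) γ‖ ≤ 4608 / r * (1 + ‖normalizedIncrement P β γ‖) := by
  have hball : ball γ (r / 4) ⊆ openStrip r := ball_subset_openStrip (by
    linarith [show |γ.im| < 3 * r / 4 from hγ])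
  have hlandau := norm_deriv_le_of_forall_ne_intCast (by positivity)
    ((hP.differentiableOn_normalizedIncrement β).mono hball) fun w hw n heq =>
      hP.sub_ne_int_mul_two_pi w (hball hw) β hβ n ((div_eq_iff two_mul_pi_ne_zero).mp heq)
  rwa [show 1152 / (r / 4) = 4608 / r by field_simp; norm_num] at hlandau

lemma one_add_norm_normalizedIncrement_le (hP : IsHorizontallyInjective r P) (hr : 0 < r) (β : ℝ)
    (hγ : γ ∈ openStrip (3 * r / 4)) :
    1 + ‖normalizedIncrement P β γ‖ ≤
      Real.exp (4608 / r * (π + r)) * (1 + ‖normalizedIncrement P β 0‖) := by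
  by_cases hβ : distTZ β = 0
  · rw [hP.normalizedIncrement_eq_of_distTZ_eq_zero hβ γ 0]
    exact le_mul_of_one_le_left (by positivity) (Real.one_le_exp (by positivity))
  · obtain ⟨n, hn⟩ := exists_abs_sub_int_mul_two_pi_le γ.re
    set w := γ + (((-n : ℤ) * (2 * π) : ℝ) : ℂ) with hw
    have hw_mem : w ∈ openStrip (3 * r / 4) := add_ofReal_mem_openStrip hγ _
    have hw_norm : ‖w - 0‖ ≤ π + r := by
      have hre : w.re = γ.re - n * (2 * π) := by simp [hw, sub_eq_add_neg]
      have him : |w.im| < 3 * r / 4 := hw_mem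
      rw [sub_zero]
      refine (Complex.norm_le_abs_re_add_abs_im w).trans ?_
      rw [hre]
      linarith
    rw [← hP.normalizedIncrement_add_int_mul_two_pi β γ (-n), ← hw]
    refine (one_add_norm_le_exp_mul_of_norm_deriv_le (isOpen_openStrip _) (convex_openStrip _)
      ((hP.differentiableOn_normalizedIncrement β).mono
        (openStrip_subset_openStrip (by linarith)))
      (fun z hz => hP.norm_deriv_normalizedIncrement_le hr hβ hz)
      (by simpa using ofReal_mem_openStrip (by positivity) 0) hw_mem).trans ?_
    gcongr

lemma norm_deriv_le_of_norm_deriv_normalizedIncrement_le (hP : IsHorizontallyInjective r P)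
    {B : ℝ} (hγ : γ ∈ openStrip r)
    (hB : ∀ x ∈ Icc 0 (2 * π), ‖deriv (normalizedIncrement P x) γ‖ ≤ B) :
    ‖deriv P γ‖ ≤ 1 + 2 * π * B := by
  have hderiv : ∀ w ∈ openStrip r, HasDerivAt P (deriv P w) w := fun w hw =>
    (hP.differentiableOn.differentiableAt ((isOpen_openStrip r).mem_nhds hw)).hasDerivAt
  have hincr : ∀ x : ℝ, deriv (normalizedIncrement P x) γ =
      (deriv P γ - deriv P (γ - x)) / (2 * π) := fun x =>
    (((hderiv γ hγ).sub ((hderiv _ (sub_ofReal_mem_openStrip hγ x)).comp_sub_const γ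
      (x : ℂ))).div_const _).deriv
  have hcont : Continuous fun x : ℝ => deriv P (γ - x) :=
    (hP.differentiableOn.deriv (isOpen_openStrip r)).continuousOn.comp_continuous (by fun_prop)
      fun x => sub_ofReal_mem_openStrip hγ x
  have hmean : ∫ x in (0 : ℝ)..2 * π, deriv P (γ - x) = 2 * π := by
    have hprim : ∀ x : ℝ, HasDerivAt (fun x : ℝ => -P (γ - x)) (deriv P (γ - x)) x := fun x => by
      simpa using ((hderiv _ (sub_ofReal_mem_openStrip hγ x)).comp_const_sub γ
        (x : ℂ)).neg.comp_ofReal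
    rw [intervalIntegral.integral_eq_sub_of_hasDerivAt (fun x _ => hprim x)
      (hcont.intervalIntegrable _ _)]
    have hmap := hP.map_add_int_mul_two_pi (γ - ((2 * π : ℝ) : ℂ)) 1
    rw [Int.cast_one, one_mul, sub_add_cancel] at hmap
    rw [Complex.ofReal_zero, sub_zero, hmap]
    simp
  have htotal : ∫ x in (0 : ℝ)..2 * π, deriv (normalizedIncrement P x) γ = deriv P γ - 1 := by
    simp only [hincr]
    rw [intervalIntegral.integral_div, intervalIntegral.integral_sub (by simp)
      (hcont.intervalIntegrable _ _), hmean, div_eq_iff two_mul_pi_ne_zero]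
    simp
    ring
  have hbound := intervalIntegral.norm_integral_le_of_norm_le_const (a := 0) (b := 2 * π)
    fun x hx => hB x (Ioc_subset_Icc_self (by rwa [uIoc_of_le Real.two_pi_pos.le] at hx))
  rw [htotal, sub_zero, abs_of_pos Real.two_pi_pos] at hbound
  have htri := norm_sub_norm_le (deriv P γ) 1
  rw [norm_one] at htri
  linarith

lemma norm_deriv_le_of_norm_normalizedIncrement_le (hP : IsHorizontallyInjective r P)
    (hr : 0 < r) {δ D : ℝ} {N : ℕ} (hδ : 0 ≤ δ) (hN : 2 * π ≤ N * δ)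
    (hD : ∀ x ∈ Icc 0 δ, ∀ γ ∈ openStrip (3 * r / 4), ‖normalizedIncrement P x γ‖ ≤ D)
    (hγ : γ ∈ openStrip (r / 2)) : ‖deriv P γ‖ ≤ 1 + 2 * π * (2 * (N * D) / (r / 4)) := by
  have hsub : openStrip (3 * r / 4) ⊆ openStrip r := openStrip_subset_openStrip (by linarith)
  refine hP.norm_deriv_le_of_norm_deriv_normalizedIncrement_le
    (openStrip_subset_openStrip (by linarith) hγ) fun x hx => ?_
  have hball : ball γ (r / 4) ⊆ openStrip (3 * r / 4) := ball_subset_openStrip (by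
    linarith [show |γ.im| < r / 2 from hγ])
  exact norm_deriv_le_of_forall_mem_ball_norm_le (by positivity)
    ((hP.differentiableOn_normalizedIncrement x).mono (hball.trans hsub)) fun w hw =>
      norm_normalizedIncrement_le_of_mem_Icc hδ hD N x ⟨hx.1, hx.2.trans hN⟩ w (hball hw)

/-- Baire's theorem bounds the increments over an open set of lengths, hence over all short
lengths, uniformly in `t`; the mean over a period of `deriv P` being `1`, this bounds `deriv P`. -/
theorem exists_forall_norm_deriv_le {s : Set ℝ} (hs : IsCompact s) {P : ℝ → ℂ → ℂ}
    (hr : 0 < r) (hP : ∀ t ∈ s, IsHorizontallyInjective r (P t))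
    (hcont : ∀ x : ℝ, ContinuousOn (fun t => P t x) s) :
    ∃ L, ∀ t ∈ s, ∀ γ ∈ openStrip (r / 2), ‖deriv (P t) γ‖ ≤ L := by
  obtain ⟨U, hU, ⟨β₀, hβ₀⟩, C, hC⟩ := exists_isOpen_forall_norm_le hs
    (f := fun (β : ℝ) t => normalizedIncrement (P t) β 0)
    (fun t ht => by
      have hon := (hP t ht).differentiableOn.continuousOn.comp_continuous
        (by fun_prop : Continuous fun β : ℝ => 0 - (β : ℂ)) fun β =>
          sub_ofReal_mem_openStrip (by simpa using ofReal_mem_openStrip hr 0) β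
      exact (continuous_const.sub hon).div_const _)
    (fun β => by
      simpa [normalizedIncrement] using ((hcont 0).sub (hcont (-β))).div_const (2 * π : ℂ))
  obtain ⟨δ, hδ, hball⟩ := Metric.isOpen_iff.mp hU β₀ hβ₀
  obtain ⟨N, hN⟩ := exists_nat_ge (2 * π / (δ / 2))
  set A := Real.exp (4608 / r * (π + r)) * (1 + C)
  refine ⟨_, fun t ht γ hγ => (hP t ht).norm_deriv_le_of_norm_normalizedIncrement_le hr
    (half_pos hδ).le ((div_le_iff₀ (half_pos hδ)).mp hN) (D := 2 * A) (fun x hx w hw => ?_) hγ⟩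
  have hnear : ∀ y ∈ Icc 0 (δ / 2), ‖normalizedIncrement (P t) (β₀ + y) (w + β₀)‖ ≤ A :=
    fun y hy => by
      have hy_mem : β₀ + y ∈ U := hball (by
        rw [mem_ball_iff_norm, add_sub_cancel_left, Real.norm_of_nonneg hy.1]
        linarith [hy.2])
      exact ((le_add_of_nonneg_left zero_le_one).trans
        ((hP t ht).one_add_norm_normalizedIncrement_le hr (β₀ + y)
          (add_ofReal_mem_openStrip hw β₀))).trans
        (mul_le_mul_of_nonneg_left (add_le_add_right (hC _ hy_mem t ht) 1) (Real.exp_pos _).le)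
  have hadd := normalizedIncrement_add (P t) β₀ x (w + β₀)
  rw [add_sub_cancel_right] at hadd
  have hzero := hnear 0 ⟨le_rfl, (half_pos hδ).le⟩
  rw [add_zero] at hzero
  rw [← sub_eq_of_eq_add' hadd]
  linarith [norm_sub_le (normalizedIncrement (P t) (β₀ + x) (w + β₀))
    (normalizedIncrement (P t) β₀ (w + β₀)), hnear x hx]

end IsHorizontallyInjective

end UniformBounds

/-! ### Uniform continuity in time of solutions -/

section Equicontinuity

variable {r T : ℝ} {Z Z₀ : ℂ → ℂ × ℂ} {Y : ℝ → ℂ → ℂ × ℂ}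

lemma isHorizontallyInjective_charForm (hol : ∀ w ∈ stripC r, DifferentiableAt ℂ Z w)
    (hper : cPerCurve Z) (hac : cArcChordOn Z (stripC r)) {σ : ℂ} (hσ : σ ^ 2 = -1) :
    IsHorizontallyInjective r (fun γ => charForm σ (Z γ)) where
  differentiableOn γ hγ := ((charForm σ).differentiableAt.comp γ
    (hol γ (openStrip_subset_stripC r hγ))).differentiableWithinAt
  map_add_int_mul_two_pi γ n := by
    rw [map_add_int_mul_two_pi hper, map_add]
    simp [charForm_apply]
  sub_ne_int_mul_two_pi γ hγ β hβ n hn := by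
    obtain ⟨C, -, hC⟩ := hac
    have hsin : Complex.sin (charForm σ (Z γ - Z (γ - β)) / 2) = 0 := by
      rw [map_sub, hn, mul_div_assoc, mul_div_cancel_left₀ _ two_ne_zero, Complex.sin_int_mul_pi]
    have hle := hC γ (openStrip_subset_stripC r hγ) β
    rw [cQden_eq_sin_mul_sin hσ, hsin, zero_mul, mul_zero, mul_zero, norm_zero, mul_zero] at hle
    exact hβ (sq_nonpos_iff _ |>.mp hle)

lemma norm_le_of_norm_charForm_le {a : ℂ × ℂ} {L : ℝ} (hpos : ‖charForm Complex.I a‖ ≤ L)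
    (hneg : ‖charForm (-Complex.I) a‖ ≤ L) : ‖a‖ ≤ L := by
  have hfst : 2 * ‖a.1‖ = ‖charForm Complex.I a + charForm (-Complex.I) a‖ := by
    rw [charForm_apply, charForm_apply, neg_mul, add_add_add_comm, add_neg_cancel, add_zero,
      ← two_mul, norm_mul, Complex.norm_ofNat]
  have hsnd : 2 * ‖a.2‖ = ‖charForm Complex.I a - charForm (-Complex.I) a‖ := by
    rw [charForm_apply, charForm_apply, neg_mul, add_sub_add_left_eq_sub, sub_neg_eq_add,
      ← two_mul, norm_mul, norm_mul, Complex.norm_ofNat, Complex.norm_I, one_mul]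
  refine norm_prod_le_iff.mpr ⟨?_, ?_⟩
  · linarith [norm_add_le (charForm Complex.I a) (charForm (-Complex.I) a)]
  · linarith [norm_sub_le (charForm Complex.I a) (charForm (-Complex.I) a)]

lemma exists_norm_deriv_le_of_isCKSol (hr : 0 < r) (hY : IsCKSol r T Z₀ Y) :
    ∃ L, ∀ t ∈ Icc (-T) T, ∀ γ ∈ openStrip (r / 2), ‖deriv (Y t) γ‖ ≤ L := by
  obtain ⟨hol, hper, hcont, -, -, hac⟩ := hY
  have hchar : ∀ σ : ℂ, σ ^ 2 = -1 → ∃ L, ∀ t ∈ Icc (-T) T, ∀ γ ∈ openStrip (r / 2),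
      ‖charForm σ (deriv (Y t) γ)‖ ≤ L := by
    intro σ hσ
    obtain ⟨L, hL⟩ := IsHorizontallyInjective.exists_forall_norm_deriv_le isCompact_Icc hr
      (fun t ht => isHorizontallyInjective_charForm (hol t ht) (hper t ht) (hac t ht) hσ)
      (fun x => (charForm σ).continuous.comp_continuousOn
        (hcont x (openStrip_subset_stripC r (ofReal_mem_openStrip hr x))))
    refine ⟨L, fun t ht γ hγ => ?_⟩
    have hγr : γ ∈ stripC r :=
      openStrip_subset_stripC r (openStrip_subset_openStrip (half_le_self hr.le) hγ)
    rw [← ((charForm σ).hasFDerivAt.comp_hasDerivAt γ (hol t ht γ hγr).hasDerivAt).deriv]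
    exact hL t ht γ hγ
  obtain ⟨L₁, hL₁⟩ := hchar Complex.I (by simp)
  obtain ⟨L₂, hL₂⟩ := hchar (-Complex.I) (by simp)
  exact ⟨max L₁ L₂, fun t ht γ hγ => norm_le_of_norm_charForm_le
    ((hL₁ t ht γ hγ).trans (le_max_left _ _)) ((hL₂ t ht γ hγ).trans (le_max_right _ _))⟩

lemma continuousOn_uncurry_of_isCKSol (hr : 0 < r) (hY : IsCKSol r T Z₀ Y) :
    ContinuousOn (Function.uncurry Y) (Icc (-T) T ×ˢ openStrip (r / 2)) := by
  obtain ⟨L, hL⟩ := exists_norm_deriv_le_of_isCKSol hr hY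
  have hsub : openStrip (r / 2) ⊆ stripC r :=
    (openStrip_subset_openStrip (half_le_self hr.le)).trans (openStrip_subset_stripC r)
  refine continuousOn_prod_of_continuousOn_lipschitzOnWith' _ L.toNNReal (fun t ht => ?_)
    fun γ hγ => hY.2.2.1 γ (hsub hγ)
  refine LipschitzOnWith.of_dist_le_mul fun x hx y hy => ?_
  rw [dist_eq_norm, dist_eq_norm]
  exact norm_sub_le_of_norm_deriv_le
    (fun w hw => (hY.1 t ht w (hsub hw)).differentiableWithinAt)
    (fun γ hγ => (hL t ht γ hγ).trans L.le_coe_toNNReal) hx hy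

lemma eventually_forall_norm_sub_le_of_isCKSol (hr : 0 < r) (hY : IsCKSol r T Z₀ Y) {a η : ℝ}
    (ha : a ∈ Icc (-T) T) (hη : 0 < η) :
    ∀ᶠ t in 𝓝[Icc (-T) T] a, ∀ γ ∈ stripC (r / 4), ‖Y t γ - Y a γ‖ ≤ η := by
  have hsub : Icc (-π) π ×ℂ Icc (-(r / 4)) (r / 4) ⊆ openStrip (r / 2) := fun w hw =>
    stripC_subset_openStrip (by linarith) (abs_le.mpr hw.2 : |w.im| ≤ r / 4)
  obtain ⟨v, hv, hclose⟩ := (isCompact_Icc.reProdIm isCompact_Icc).mem_uniformity_of_prod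
    ((continuousOn_uncurry_of_isCKSol hr hY).mono (prod_mono_right hsub)) ha
    (dist_mem_uniformity hη)
  filter_upwards [hv, self_mem_nhdsWithin] with t htv ht γ hγ
  obtain ⟨n, hn⟩ := exists_abs_sub_int_mul_two_pi_le γ.re
  have hmem : γ + (((-n : ℤ) * (2 * π) : ℝ) : ℂ) ∈ Icc (-π) π ×ℂ Icc (-(r / 4)) (r / 4) :=
    ⟨by simpa [sub_eq_add_neg] using abs_le.mp hn, by simpa using abs_le.mp hγ⟩
  have hlt : dist _ _ < η := hclose t htv _ hmem
  rw [dist_eq_norm, map_add_int_mul_two_pi (hY.2.1 t ht), map_add_int_mul_two_pi (hY.2.1 a ha),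
    add_sub_add_right_eq_sub] at hlt
  exact hlt.le

end Equicontinuity

/-! ### Uniqueness -/

section Uniqueness

/-- A solution on the time interval `|t| < τ` and the strip of half-width `5h` that starts at `Z₀`
and stays within `ε` of it. -/
structure IsShortTimeSolution (h τ ε : ℝ) (Z₀ : ℂ → ℂ × ℂ) (Y : ℝ → ℂ → ℂ × ℂ) : Prop where
  differentiableOn : ∀ t, |t| < τ → DifferentiableOn ℂ (Y t) (openStrip (5 * h))
  periodic : ∀ t, |t| < τ → cPerCurve (Y t)
  zero_eq : ∀ γ ∈ openStrip (5 * h), Y 0 γ = Z₀ γ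
  hasDerivAt : ∀ t, |t| < τ → ∀ γ ∈ openStrip (5 * h),
    HasDerivAt (fun s => Y s γ) (cMuskatRHS (Y t) γ) t
  norm_sub_le : ∀ t, |t| < τ → ∀ γ ∈ openStrip (5 * h), ‖Y t γ - Z₀ γ‖ ≤ ε

variable {h c M ε K τ t : ℝ} {Z₀ : ℂ → ℂ × ℂ} {Y W : ℝ → ℂ → ℂ × ℂ} {γ : ℂ}

lemma openStrip_four_mul_subset (hh : 0 < h) : openStrip (4 * h) ⊆ openStrip (5 * h) :=
  openStrip_subset_openStrip (by linarith)

namespace IsShortTimeSolution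

lemma differentiableOn_base (hY : IsShortTimeSolution h τ ε Z₀ Y) (hτ : 0 < τ) :
    DifferentiableOn ℂ Z₀ (openStrip (5 * h)) :=
  (hY.differentiableOn 0 (by rwa [abs_zero])).congr fun γ hγ => (hY.zero_eq γ hγ).symm

lemma norm_deriv_sub_le (hY : IsShortTimeSolution h τ ε Z₀ Y) (hh : 0 < h) (ht : |t| < τ)
    (hγ : γ ∈ openStrip (4 * h)) : ‖deriv (Y t) γ - deriv Z₀ γ‖ ≤ 2 * ε / h := by
  have him : |γ.im| < 4 * h := hγ
  have hball : ball γ h ⊆ openStrip (5 * h) := ball_subset_openStrip (by linarith)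
  exact norm_deriv_sub_deriv_le hh ((hY.differentiableOn t ht).mono hball)
    ((hY.differentiableOn_base ((abs_nonneg t).trans_lt ht)).mono hball)
    fun w hw => hY.norm_sub_le t ht w (hball hw)

lemma norm_deriv_sub_le_min (hY : IsShortTimeSolution h τ ε Z₀ Y) (hε : IsSmallRadius h c ε)
    (hh : 0 < h) (ht : |t| < τ) (hγ : γ ∈ openStrip (4 * h)) :
    ‖deriv (Y t) γ - deriv Z₀ γ‖ ≤ min (1 / 72) (c / 8) := by
  have hεpos := hε.pos
  refine (hY.norm_deriv_sub_le hh ht hγ).trans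
    (le_trans ?_ (le_min_iff.mpr (hε.four_mul_div_le hh)))
  gcongr
  norm_num

lemma splitArcChord (hY : IsShortTimeSolution h τ ε Z₀ Y) (hZ₀ : IsBaseCurve h c M Z₀)
    (hε : IsSmallRadius h c ε) (ht : |t| < τ) : SplitArcChord (4 * h) (c / 2) (Y t) :=
  hZ₀.arcChord.of_norm_deriv_sub_le hZ₀.four_mul_h_le hZ₀.differentiableOn
    ((hY.differentiableOn t ht).mono (openStrip_four_mul_subset hZ₀.h_pos))
    (fun _ hγ => hY.norm_deriv_sub_le_min hε hZ₀.h_pos ht hγ) (min_le_left _ _) (min_le_right _ _)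

lemma isConeFamily (hY : IsShortTimeSolution h τ ε Z₀ Y) (S : IsPicardSetup h c M ε K Z₀)
    (hτ : h ≤ K * τ) : IsConeFamily h M ε K Z₀ Y := by
  have hh := S.base.h_pos
  have hlt : ∀ t, K * |t| < h → |t| < τ := fun t ht =>
    lt_of_mul_lt_mul_left (ht.trans_le hτ) S.K_pos.le
  have hsub : ∀ t, openStrip (4 * h - K * |t|) ⊆ openStrip (5 * h) := fun t =>
    (S.openStrip_subset_base t).trans (openStrip_four_mul_subset hh)
  refine ⟨fun t ht => ⟨by linarith, by linarith [S.K_mul_abs_nonneg t],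
    (hY.differentiableOn t (hlt t ht)).mono (hsub t), hY.periodic t (hlt t ht),
    fun γ hγ => hY.norm_sub_le t (hlt t ht) γ (hsub t hγ)⟩, fun t ht γ hγ s hs => ?_,
    fun t ht γ hγ => ?_⟩
  · exact (hY.hasDerivAt s ((abs_le.mpr hs).trans_lt (hlt t ht)) γ
      (hsub t hγ)).continuousAt.continuousWithinAt
  · have hγ' := S.openStrip_subset_base t hγ
    have hclose := hY.norm_deriv_sub_le_min S.small hh (hlt t ht) hγ'
    have hM := S.base.M_nonneg
    calc ‖deriv (Y t) γ‖ ≤ ‖deriv Z₀ γ‖ + ‖deriv (Y t) γ - deriv Z₀ γ‖ :=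
          norm_le_norm_add_norm_sub' _ _
      _ ≤ M + 1 := by
          gcongr
          · exact S.base.norm_deriv_le γ hγ'
          · exact hclose.trans ((min_le_left _ _).trans (by norm_num))
      _ ≤ (M + 1) * coneWeight h K t γ :=
          le_mul_of_one_le_right (by positivity) (S.one_le_coneWeight hγ)

lemma eqOnCone_picardMap (hY : IsShortTimeSolution h τ ε Z₀ Y) (S : IsPicardSetup h c M ε K Z₀)
    (hτ : h ≤ K * τ) : EqOnCone h K Y (picardMap h Z₀ Y) := by
  intro t ht γ hγ
  have hh := S.base.h_pos
  have hγ' := S.openStrip_subset_base t hγ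
  have htime : ∀ s ∈ uIcc 0 t, HasDerivAt (fun s => Y s γ) (contourRHS h (Y s) γ) s := by
    intro s hs
    have hsτ : |s| < τ := lt_of_mul_lt_mul_left
      ((S.K_mul_abs_lt ht (abs_le_abs_of_mem_uIcc_zero hs)).trans_le hτ) S.K_pos.le
    rw [contourRHS_eq_cMuskatRHS hh (by linarith) (half_pos S.base.c_pos)
      ((hY.differentiableOn s hsτ).mono (openStrip_four_mul_subset hh)) (hY.periodic s hsτ)
      (hY.splitArcChord S.base S.small hsτ) hγ']
    exact hY.hasDerivAt s hsτ γ (openStrip_four_mul_subset hh hγ')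
  rw [picardMap, intervalIntegral.integral_eq_sub_of_hasDerivAt htime
    (S.intervalIntegrable_contourRHS (hY.isConeFamily S hτ) ht hγ),
    hY.zero_eq γ (openStrip_four_mul_subset hh hγ'), add_sub_cancel]

lemma eqOnCone (hY : IsShortTimeSolution h τ ε Z₀ Y) (hW : IsShortTimeSolution h τ ε Z₀ W)
    (S : IsPicardSetup h c M ε K Z₀) (hτ : h ≤ K * τ) : EqOnCone h K Y W :=
  S.eqOnCone (hY.isConeFamily S hτ) (hW.isConeFamily S hτ) (hY.eqOnCone_picardMap S hτ)
    (hW.eqOnCone_picardMap S hτ)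

end IsShortTimeSolution

variable {r T a : ℝ}

lemma eventually_isShortTimeSolution_of_isCKSol (hr : 0 < r) (hY : IsCKSol r T Z₀ Y)
    (ha : a ∈ Ioo (-T) T) (hh : 20 * h < r) (hε : 0 < ε) {Z : ℂ → ℂ × ℂ}
    (hZ : ∀ γ ∈ stripC r, Y a γ = Z γ) :
    ∀ᶠ τ in 𝓝[>] (0 : ℝ), IsShortTimeSolution h τ ε Z (fun t => Y (a + t)) := by
  have hnear : ∀ᶠ t in 𝓝 a, t ∈ Ioo (-T) T ∧ ∀ γ ∈ stripC (r / 4), ‖Y t γ - Y a γ‖ ≤ ε := by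
    rw [← nhdsWithin_eq_nhds.mpr (Icc_mem_nhds ha.1 ha.2)]
    exact Eventually.and (mem_nhdsWithin_of_mem_nhds (Ioo_mem_nhds ha.1 ha.2))
      (eventually_forall_norm_sub_le_of_isCKSol hr hY (Ioo_subset_Icc_self ha) hε)
  obtain ⟨τ₀, hτ₀, hball⟩ := Metric.eventually_nhds_iff.mp hnear
  have hsub : openStrip (5 * h) ⊆ stripC (r / 4) :=
    (openStrip_subset_openStrip (by linarith)).trans (openStrip_subset_stripC _)
  have hsub' : openStrip (5 * h) ⊆ stripC r :=
    (openStrip_subset_openStrip (by linarith)).trans (openStrip_subset_stripC _)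
  filter_upwards [Ioo_mem_nhdsGT hτ₀] with τ hτ
  have hmem : ∀ t, |t| < τ → a + t ∈ Ioo (-T) T ∧
      ∀ γ ∈ stripC (r / 4), ‖Y (a + t) γ - Y a γ‖ ≤ ε := fun t ht =>
    hball (by simpa [Real.dist_eq] using ht.trans hτ.2)
  refine ⟨fun t ht γ hγ => ?_, fun t ht => ?_, fun γ hγ => ?_, fun t ht γ hγ => ?_,
    fun t ht γ hγ => ?_⟩
  · exact (hY.1 _ (Ioo_subset_Icc_self (hmem t ht).1) γ (hsub' hγ)).differentiableWithinAt
  · exact hY.2.1 _ (Ioo_subset_Icc_self (hmem t ht).1)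
  · rw [add_zero, hZ γ (hsub' hγ)]
  · obtain ⟨hlo, hhi⟩ := (hmem t ht).1
    exact ((hY.2.2.2.2.1 (a + t) ⟨hlo.le, hhi.le⟩ γ (hsub' hγ)).hasDerivAt
      (Icc_mem_nhds hlo hhi)).comp_const_add a t
  · rw [← hZ γ (hsub' hγ)]
    exact (hmem t ht).2 γ (hsub hγ)

lemma stripC_subset_closure_openStrip (hr : 0 < r) : stripC r ⊆ closure (openStrip r) := by
  have hpre : openStrip r = Complex.im ⁻¹' Ioo (-r) r := by
    ext w; simp [openStrip, abs_lt]
  rw [hpre, Complex.closure_preimage_im, closure_Ioo (by linarith)]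
  exact fun w hw => abs_le.mp hw

lemma eqOn_stripC_of_eqOn_openStrip {E : Type*} [NormedAddCommGroup E] [NormedSpace ℂ E]
    [CompleteSpace E] {ρ : ℝ} {f g : ℂ → E} (hr : 0 < r) (hρ : 0 < ρ)
    (hf : ∀ w ∈ stripC r, DifferentiableAt ℂ f w) (hg : ∀ w ∈ stripC r, DifferentiableAt ℂ g w)
    (h : EqOn f g (openStrip ρ)) : EqOn f g (stripC r) := by
  have hsub := openStrip_subset_stripC r
  have hzero : ∀ {ρ : ℝ}, 0 < ρ → (0 : ℂ) ∈ openStrip ρ := fun hρ => ofReal_mem_openStrip hρ 0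
  have hanalytic : ∀ {f : ℂ → E}, (∀ w ∈ stripC r, DifferentiableAt ℂ f w) →
      AnalyticOnNhd ℂ f (openStrip r) := fun hf =>
    DifferentiableOn.analyticOnNhd (fun w hw => (hf w (hsub hw)).differentiableWithinAt)
      (isOpen_openStrip r)
  have hopen : EqOn f g (openStrip r) := (hanalytic hf).eqOn_of_preconnected_of_eventuallyEq
    (hanalytic hg) (convex_openStrip r).isPreconnected (hzero hr)
    (h.eventuallyEq_of_mem ((isOpen_openStrip ρ).mem_nhds (hzero hρ)))
  exact hopen.of_subset_closure (fun w hw => (hf w hw).continuousAt.continuousWithinAt)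
    (fun w hw => (hg w hw).continuousAt.continuousWithinAt) hsub
    (stripC_subset_closure_openStrip hr)

lemma eventually_eqOn_of_isCKSol (hr : 0 < r) (hY : IsCKSol r T Z₀ Y) (hW : IsCKSol r T Z₀ W)
    (ha : a ∈ Ioo (-T) T) (hYW : EqOn (Y a) (W a) (stripC r)) :
    ∀ᶠ t in 𝓝 a, EqOn (Y t) (W t) (stripC r) := by
  have haI := Ioo_subset_Icc_self ha
  obtain ⟨h, c, M, hhr, hbase⟩ := exists_isBaseCurve hr (by positivity : 0 < r / 21)
    (hY.1 a haI) (hY.2.1 a haI) (hY.2.2.2.2.2 a haI)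
  have hh := hbase.h_pos
  obtain ⟨ε, hε⟩ := exists_isSmallRadius hh hbase.c_pos
  obtain ⟨τ, hYτ, hWτ, hτ⟩ :=
    ((eventually_isShortTimeSolution_of_isCKSol hr hY ha (by linarith) hε.pos fun _ _ => rfl).and
      ((eventually_isShortTimeSolution_of_isCKSol hr hW ha (by linarith) hε.pos
        hYW.symm).and self_mem_nhdsWithin)).exists
  obtain ⟨K, hKτ, S⟩ := hbase.exists_isPicardSetup hε (h / τ)
  have hcone := hYτ.eqOnCone hWτ S ((div_le_iff₀ hτ).mp hKτ)
  filter_upwards [ball_mem_nhds a (div_pos hh S.K_pos), Ioo_mem_nhds ha.1 ha.2] with t ht htT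
  have htK : K * |t - a| < h := (lt_div_iff₀' S.K_pos).mp ht
  have htI := Ioo_subset_Icc_self htT
  refine eqOn_stripC_of_eqOn_openStrip hr (by linarith : 0 < 4 * h - K * |t - a|) (hY.1 t htI)
    (hW.1 t htI) fun γ hγ => ?_
  simpa only [add_sub_cancel] using hcone (t - a) htK γ hγ

lemma eqOn_of_mem_closure_of_isCKSol (hY : IsCKSol r T Z₀ Y) (hW : IsCKSol r T Z₀ W) {A : Set ℝ}
    (hA : ∀ s ∈ A, EqOn (Y s) (W s) (stripC r)) (hAT : A ⊆ Icc (-T) T) (ht : t ∈ closure A) :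
    EqOn (Y t) (W t) (stripC r) := fun γ hγ =>
  EqOn.of_subset_closure (fun s hs => hA s hs hγ)
    ((hY.2.2.1 γ hγ).mono (closure_minimal hAT isClosed_Icc))
    ((hW.2.2.1 γ hγ).mono (closure_minimal hAT isClosed_Icc)) subset_closure subset_rfl ht

theorem eqOn_of_isCKSol (hr : 0 < r) (hT : 0 < T) (hY : IsCKSol r T Z₀ Y)
    (hW : IsCKSol r T Z₀ W) (ht : t ∈ Icc (-T) T) : EqOn (Y t) (W t) (stripC r) := by
  set A : Set ℝ := {s | s ∈ Ioo (-T) T ∧ EqOn (Y s) (W s) (stripC r)}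
  have hopen : IsOpen A := isOpen_iff_mem_nhds.mpr fun a ha =>
    Eventually.and (Ioo_mem_nhds ha.1.1 ha.1.2) (eventually_eqOn_of_isCKSol hr hY hW ha.1 ha.2)
  have hclosed : ∀ {s}, s ∈ closure A → EqOn (Y s) (W s) (stripC r) :=
    eqOn_of_mem_closure_of_isCKSol hY hW (fun _ hs => hs.2) fun _ hs => Ioo_subset_Icc_self hs.1
  have hzero : (0 : ℝ) ∈ Ioo (-T) T := ⟨neg_lt_zero.mpr hT, hT⟩
  have hinit : EqOn (Y 0) (W 0) (stripC r) := fun γ hγ =>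
    (hY.2.2.2.1 γ hγ).trans (hW.2.2.2.1 γ hγ).symm
  have hinterior : Ioo (-T) T ⊆ A := isPreconnected_Ioo.subset_of_closure_inter_subset hopen
    ⟨0, hzero, hzero, hinit⟩ fun s hs => ⟨hs.2, hclosed hs.1⟩
  rw [← closure_Ioo (by linarith : -T ≠ T)] at ht
  exact hclosed (closure_mono hinterior ht)

end Uniqueness

end Muskat

theorem muskat_cauchy_kowalewski_general (r₀ : ℝ) (hr₀ : 0 < r₀) (Z₀ : ℂ → ℂ × ℂ)
    (hol : ∀ w ∈ stripC r₀, DifferentiableAt ℂ Z₀ w) (hper : cPerCurve Z₀)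
    (hac : cArcChordOn Z₀ (stripC r₀)) :
    ∃ T > 0, ∃ r : ℝ, 0 < r ∧ r < r₀ ∧
      ∃ Z : ℝ → ℂ → ℂ × ℂ, IsCKSol r T Z₀ Z ∧
        ∀ Z' : ℝ → ℂ → ℂ × ℂ, IsCKSol r T Z₀ Z' →
          ∀ t ∈ Icc (-T) T, ∀ γ ∈ stripC r, Z' t γ = Z t γ := by
  obtain ⟨T, hT, r, hr, hrr₀, Z, hZ⟩ := Muskat.exists_isCKSol hr₀ hol hper hac
  exact ⟨T, hT, r, hr, hrr₀, Z, hZ,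
    fun _ hZ' _ ht _ hγ => Muskat.eqOn_of_isCKSol hr hT hZ' hZ ht hγ⟩

/-- Local existence and uniqueness, forwards and backwards in time, for analytic
initial data satisfying the arc-chord condition; no Rayleigh–Taylor assumption. -/
theorem muskat_cauchy_kowalewski (r₀ : ℝ) (hr₀ : 0 < r₀) (Z₀ : ℂ → ℂ × ℂ)
    (hol : ∀ w ∈ stripC r₀, DifferentiableAt ℂ Z₀ w)
    (hper : cPerCurve Z₀)
    (hreal : ∀ α : ℝ, (Z₀ (α : ℂ)).1.im = 0 ∧ (Z₀ (α : ℂ)).2.im = 0)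
    (hac : cArcChordOn Z₀ (stripC r₀)) :
    ∃ T > 0, ∃ r : ℝ, 0 < r ∧ r < r₀ ∧
      ∃ Z : ℝ → ℂ → ℂ × ℂ, IsCKSol r T Z₀ Z ∧
        ∀ Z' : ℝ → ℂ → ℂ × ℂ, IsCKSol r T Z₀ Z' →
          ∀ t ∈ Icc (-T) T, ∀ γ ∈ stripC r, Z' t γ = Z t γ := by
  exact muskat_cauchy_kowalewski_general r₀ hr₀ Z₀ hol hper hac
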